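/- Let k be a field of characteristic zero, and let B' = ⟨B ∪ H⟩ be the subgroup of the group of k-algebra automorphisms of k[x1,x2,x3] generated by B and H. Then B' satisfies the strong Tits alternative: every subgroup of B' either contains a nonabelian free subgroup or contains a solvable subgroup of finite index. -/

import Mathlib

open MvPolynomial

/-- A group contains a nonabelian free subgroup if it has a subgroup isomorphic to the
free group on two generators. -/
def ContainsNonabelianFree (G : Type*) [Group G] : Prop :=
  ∃ K : Subgroup G, Nonempty (↥K ≃* FreeGroup (Fin 2))

/-- A group is virtually solvable if it contains a solvable subgroup of finite index. -/
def IsVirtuallySolvable (G : Type*) [Group G] : Prop :=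
  ∃ K : Subgroup G, K.FiniteIndex ∧ IsSolvable ↥K

/-- A group satisfies the strong Tits alternative if every subgroup contains a nonabelian
free subgroup or is virtually solvable. -/
def StrongTitsAlternative (G : Type*) [Group G] : Prop :=
  ∀ H : Subgroup G, ContainsNonabelianFree ↥H ∨ IsVirtuallySolvable ↥H

/-- Membership in the subgroup `B`: automorphisms of the form
`(a x₁ + P(x₂,x₃), b x₂ + c x₃ + d, b' x₂ + c' x₃ + d')` with `a ≠ 0`, `bc' - b'c ≠ 0`. -/
def IsB (k : Type*) [Field k]
    (f : MvPolynomial (Fin 3) k ≃ₐ[k] MvPolynomial (Fin 3) k) : Prop :=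
  ∃ (a b c d b' c' d' : k) (P : MvPolynomial (Fin 3) k),
    a ≠ 0 ∧ b * c' - b' * c ≠ 0 ∧ P ∈ supported k ({1, 2} : Set (Fin 3)) ∧
    f (X 0) = C a * X 0 + P ∧
    f (X 1) = C b * X 1 + C c * X 2 + C d ∧
    f (X 2) = C b' * X 1 + C c' * X 2 + C d'

/-- Membership in the subgroup `H`: automorphisms of the form
`(a x₁ + P₁(x₂,x₃), b x₂ + P₂(x₃), c x₃ + d)` with `a, b, c ≠ 0`. -/
def IsH (k : Type*) [Field k]
    (f : MvPolynomial (Fin 3) k ≃ₐ[k] MvPolynomial (Fin 3) k) : Prop :=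
  ∃ (a b c d : k) (P₁ P₂ : MvPolynomial (Fin 3) k),
    a ≠ 0 ∧ b ≠ 0 ∧ c ≠ 0 ∧
    P₁ ∈ supported k ({1, 2} : Set (Fin 3)) ∧ P₂ ∈ supported k ({2} : Set (Fin 3)) ∧
    f (X 0) = C a * X 0 + P₁ ∧
    f (X 1) = C b * X 1 + P₂ ∧
    f (X 2) = C c * X 2 + C d

/-- The subgroup `B' = ⟨B ∪ H⟩`. -/
noncomputable def Bprime (k : Type*) [Field k] :
    Subgroup (MvPolynomial (Fin 3) k ≃ₐ[k] MvPolynomial (Fin 3) k) :=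
  Subgroup.closure {f | IsB k f ∨ IsH k f}

/-!
`B'` acts without inversions on a tree whose vertices are the cosets of `B` and of `H`. To see
this, give `f B` the degree `max (deg f(x₂)) (deg f(x₃))` and `f H` the degree `deg f(x₃)`: every
coset except `B` itself is adjacent to exactly one coset of smaller degree, ties being broken in
favour of `B`.

A group acting on a tree contains a free subgroup, fixes a vertex, preserves an end or a pair of
ends, or is the union of its vertex stabilizers. Two distinct vertices are stabilized by a subgroup
of a conjugate of `H`, which is triangular and hence solvable, so the group is solvable unless it
contains a free subgroup or fixes a vertex. So it remains to treat `H` and `B`, the latter an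
extension of a subgroup of `GL₂(k)` by a solvable group of triangular automorphisms.

For `GL₂` take `k` algebraically closed and pass to a subgroup `Γ` of `SL₂`. If an eigenvalue `z` of
some `g ∈ Γ` is not a root of unity, then after a specialization some absolute value has `|z| > 1`,
and ping-pong on the projective line yields a free subgroup unless `Γ` is solvable. If all
eigenvalues are roots of unity and `z²` has order at least `6`, the traces of the iterated
commutators of `g` satisfy a logistic recursion, which leaves the set of sums of two inverse roots
of unity unless `Γ` is solvable. Otherwise only finitely many traces occur, and `Γ` is finite or
solvable.
-/

section TitsAlternative

variable {G Q : Type*} [Group G] [Group Q]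

theorem containsNonabelianFree_iff :
    ContainsNonabelianFree G ↔ ∃ f : FreeGroup (Fin 2) →* G, Function.Injective f := by
  constructor
  · rintro ⟨K, ⟨e⟩⟩
    exact ⟨K.subtype.comp e.symm.toMonoidHom, K.subtype_injective.comp e.symm.injective⟩
  · rintro ⟨f, hf⟩
    exact ⟨f.range, ⟨(MonoidHom.ofInjective hf).symm⟩⟩

theorem ContainsNonabelianFree.of_injective (f : G →* Q) (hf : Function.Injective f)
    (h : ContainsNonabelianFree G) : ContainsNonabelianFree Q := by
  obtain ⟨u, hu⟩ := containsNonabelianFree_iff.1 h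
  exact containsNonabelianFree_iff.2 ⟨f.comp u, hf.comp hu⟩

theorem ContainsNonabelianFree.of_surjective (f : G →* Q) (hf : Function.Surjective f)
    (h : ContainsNonabelianFree Q) : ContainsNonabelianFree G := by
  obtain ⟨u, hu⟩ := containsNonabelianFree_iff.1 h
  choose s hs using hf
  let lift : FreeGroup (Fin 2) →* G := FreeGroup.lift fun i => s (u (FreeGroup.of i))
  have hlift : f.comp lift = u := by
    ext i
    simp [lift, hs]
  refine containsNonabelianFree_iff.2 ⟨lift, Function.Injective.of_comp (f := f) ?_⟩
  rwa [← MonoidHom.coe_comp, hlift]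

theorem IsVirtuallySolvable.of_isSolvable (_ : Group.IsSolvable G) : IsVirtuallySolvable G :=
  ⟨⊤, inferInstance, (inferInstance : Group.IsSolvable _)⟩

theorem IsVirtuallySolvable.of_finite [Finite G] : IsVirtuallySolvable G :=
  ⟨⊥, inferInstance, (inferInstance : Group.IsSolvable _)⟩

theorem IsVirtuallySolvable.of_surjective (f : G →* Q) (hf : Function.Surjective f)
    (h : IsVirtuallySolvable G) : IsVirtuallySolvable Q := by
  obtain ⟨K, hK, hs⟩ := h
  have : Group.IsSolvable K := hs
  refine ⟨K.map f, ⟨fun h0 => hK.index_ne_zero ?_⟩,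
    Group.isSolvable_of_surjective (f.subgroupMap_surjective K)⟩
  exact Nat.eq_zero_of_zero_dvd (h0 ▸ Subgroup.index_map_dvd K hf)

theorem IsVirtuallySolvable.of_isSolvable_ker (f : G →* Q) (hf : Group.IsSolvable f.ker)
    (h : IsVirtuallySolvable Q) : IsVirtuallySolvable G := by
  obtain ⟨K, hK, hs⟩ := h
  have : Group.IsSolvable K := hs
  refine ⟨K.comap f, ⟨?_⟩, ?_⟩
  · rw [Subgroup.index_comap]
    exact fun h => hK.index_ne_zero (Subgroup.index_eq_zero_of_relIndex_eq_zero h)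
  · refine Group.isSolvable_of_ker_le_range
      (Subgroup.inclusion (f.ker_le_comap K)) (f.subgroupComap K) fun x hx => ?_
    exact ⟨⟨x, congrArg Subtype.val (MonoidHom.mem_ker.1 hx)⟩, rfl⟩

theorem StrongTitsAlternative.self (h : StrongTitsAlternative G) :
    ContainsNonabelianFree G ∨ IsVirtuallySolvable G :=
  (h ⊤).imp (.of_injective _ (Subgroup.subtype_injective _))
    (.of_surjective (Subgroup.topEquiv (G := G)).toMonoidHom
      (Subgroup.topEquiv (G := G)).surjective)

theorem StrongTitsAlternative.of_isSolvable_ker (f : G →* Q) (hf : Group.IsSolvable f.ker)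
    (h : StrongTitsAlternative Q) : StrongTitsAlternative G := by
  intro H
  refine (h (H.map f)).imp (.of_surjective _ (f.subgroupMap_surjective H))
    (.of_isSolvable_ker (f.subgroupMap H) ?_)
  have mem_ker (x : (f.subgroupMap H).ker) : (x : H).1 ∈ f.ker :=
    congrArg Subtype.val (MonoidHom.mem_ker.1 x.2)
  refine Group.isSolvable_of_isSolvable_injective
    (f := (H.subtype.comp (f.subgroupMap H).ker.subtype).codRestrict f.ker mem_ker) ?_
  exact fun x y hxy => Subtype.ext (Subtype.ext (congrArg (fun z : f.ker => (z : G)) hxy))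

theorem StrongTitsAlternative.of_surjective_of_torsion_ker (f : G →* Q)
    (hf : Function.Surjective f) (hker : ∀ x ∈ f.ker, IsOfFinOrder x)
    (h : StrongTitsAlternative G) : StrongTitsAlternative Q := by
  intro H
  have hsurj : Function.Surjective (f.subgroupComap H) := by
    rintro ⟨y, hy⟩
    obtain ⟨x, rfl⟩ := hf y
    exact ⟨⟨x, hy⟩, rfl⟩
  refine (h (H.comap f)).imp (fun h => ?_) (.of_surjective _ hsurj)
  obtain ⟨u, hu⟩ := containsNonabelianFree_iff.1 h
  refine containsNonabelianFree_iff.2 ⟨(f.subgroupComap H).comp u, ?_⟩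
  rw [injective_iff_map_eq_one]
  intro w hw
  obtain ⟨n, hn, hpow⟩ := isOfFinOrder_iff_pow_eq_one.1 (hker (u w) (congrArg Subtype.val hw))
  refine (pow_eq_one_iff_left hn.ne').1 (hu (Subtype.ext ?_))
  simpa using hpow

theorem StrongTitsAlternative.of_injective (f : G →* Q) (hf : Function.Injective f)
    (h : StrongTitsAlternative Q) : StrongTitsAlternative G := by
  refine h.of_isSolvable_ker f ?_
  rw [(MonoidHom.ker_eq_bot_iff f).2 hf]
  infer_instance

end TitsAlternative

/-- The derived series of a subgroup, as a sequence of subgroups of the ambient group; it makes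
the derived lengths of different subgroups of one group comparable. -/
def iteratedCommutator {G : Type*} [Group G] (H : Subgroup G) : ℕ → Subgroup G
  | 0 => H
  | n + 1 => ⁅iteratedCommutator H n, iteratedCommutator H n⁆

section IteratedCommutator

variable {G : Type*} [Group G]

theorem iteratedCommutator_mono (n : ℕ) :
    Monotone fun H : Subgroup G => iteratedCommutator H n := by
  intro H K h
  induction n with
  | zero => exact h
  | succ n ih => exact Subgroup.commutator_mono ih ih

theorem iteratedCommutator_eq_bot_of_le {H K : Subgroup G} (h : H ≤ K) {n : ℕ}
    (hK : iteratedCommutator K n = ⊥) : iteratedCommutator H n = ⊥ :=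
  le_bot_iff.1 (hK ▸ iteratedCommutator_mono n h)

theorem map_iteratedCommutator {Q : Type*} [Group Q] (f : G →* Q) (H : Subgroup G) (n : ℕ) :
    (iteratedCommutator H n).map f = iteratedCommutator (H.map f) n := by
  induction n with
  | zero => rfl
  | succ n ih => simp only [iteratedCommutator, Subgroup.map_commutator, ih]

theorem iteratedCommutator_top (n : ℕ) :
    iteratedCommutator (⊤ : Subgroup G) n = derivedSeries G n := by
  induction n with
  | zero => rfl
  | succ n ih => rw [iteratedCommutator, ih, derivedSeries_succ]

theorem map_derivedSeries_subtype (H : Subgroup G) (n : ℕ) :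
    (derivedSeries H n).map H.subtype = iteratedCommutator H n := by
  induction n with
  | zero => simp [iteratedCommutator, ← MonoidHom.range_eq_map]
  | succ n ih => simp only [iteratedCommutator, derivedSeries_succ, Subgroup.map_commutator, ih]

theorem isSolvable_iff_iteratedCommutator {H : Subgroup G} :
    Group.IsSolvable H ↔ ∃ n, iteratedCommutator H n = ⊥ := by
  rw [Group.isSolvable_def]
  refine exists_congr fun n => ?_
  rw [← map_derivedSeries_subtype, Subgroup.map_eq_bot_iff_of_injective _ H.subtype_injective]

theorem isSolvable_of_le {H K : Subgroup G} (h : H ≤ K) (_ : Group.IsSolvable K) :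
    Group.IsSolvable H :=
  Group.isSolvable_of_isSolvable_injective (Subgroup.inclusion_injective h)

theorem isSolvable_of_commutator_le {K : Subgroup G} (h : commutator G ≤ K)
    (_ : Group.IsSolvable K) : Group.IsSolvable G :=
  Group.isSolvable_of_ker_le_range K.subtype Abelianization.of <| by
    rwa [Abelianization.ker_of, K.range_subtype]

theorem exists_finite_mem_iteratedCommutator {H : Subgroup G} {n : ℕ} {x : G}
    (hx : x ∈ iteratedCommutator H n) :
    ∃ S : Set G, S.Finite ∧ S ⊆ H ∧ x ∈ iteratedCommutator (Subgroup.closure S) n := by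
  induction n generalizing x with
  | zero =>
    exact ⟨{x}, Set.finite_singleton x, by simpa [iteratedCommutator] using hx,
      Subgroup.subset_closure rfl⟩
  | succ n ih =>
    have mono {S T : Set G} (h : S ⊆ T) (m : ℕ) : iteratedCommutator (Subgroup.closure S) m ≤
        iteratedCommutator (Subgroup.closure T) m :=
      iteratedCommutator_mono m (Subgroup.closure_mono h)
    rw [iteratedCommutator, Subgroup.commutator_def] at hx
    induction hx using Subgroup.closure_induction with
    | mem x hx =>
      obtain ⟨a, ha, b, hb, rfl⟩ := hx
      obtain ⟨S, hS, hSH, haS⟩ := ih ha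
      obtain ⟨T, hT, hTH, hbT⟩ := ih hb
      exact ⟨S ∪ T, hS.union hT, Set.union_subset hSH hTH, Subgroup.commutator_mem_commutator
        (mono Set.subset_union_left n haS) (mono Set.subset_union_right n hbT)⟩
    | one => exact ⟨∅, Set.finite_empty, Set.empty_subset _, one_mem _⟩
    | mul x y _ _ hx hy =>
      obtain ⟨S, hS, hSH, haS⟩ := hx
      obtain ⟨T, hT, hTH, hbT⟩ := hy
      exact ⟨S ∪ T, hS.union hT, Set.union_subset hSH hTH, mul_mem
        (mono Set.subset_union_left _ haS) (mono Set.subset_union_right _ hbT)⟩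
    | inv x _ hx =>
      obtain ⟨S, hS, hSH, haS⟩ := hx
      exact ⟨S, hS, hSH, inv_mem haS⟩

theorem iteratedCommutator_eq_bot_of_finite {H : Subgroup G} {n : ℕ}
    (h : ∀ S : Set G, S.Finite → S ⊆ H → iteratedCommutator (Subgroup.closure S) n = ⊥) :
    iteratedCommutator H n = ⊥ := by
  refine (Subgroup.eq_bot_iff_forall _).2 fun x hx => ?_
  obtain ⟨S, hS, hSH, hxS⟩ := exists_finite_mem_iteratedCommutator hx
  rwa [h S hS hSH] at hxS

end IteratedCommutator

section Pair

open scoped Pointwise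

variable {G Ω : Type*} [Group G] [MulAction G Ω] {p q : Ω}

theorem smul_pair (h : G) (x y : Ω) : h • ({x, y} : Set Ω) = {h • x, h • y} := by
  rw [Set.smul_set_insert, Set.smul_set_singleton]

/-- The translates of `{p, q}` meet pairwise. If `u • {p, q} = {p, y}` with `y ∉ {p, q}`, then
`{p, q}`, `{p, y}` and `{p, g • y}` are three translates, so every translate contains `p`. -/
theorem forall_smul_eq_of_smul_eq (hmeet : ∀ h : G, (h • {p, q} ∩ {p, q} : Set Ω).Nonempty)
    {g : G} (hp : g • p = p) (hq : g • q = q)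
    (hfix : ∀ h : G, ∀ x ∈ h • ({p, q} : Set Ω), g • x = x → x ∈ ({p, q} : Set Ω))
    {u : G} {y : Ω} (hu : u • ({p, q} : Set Ω) = {p, y}) (hy : y ∉ ({p, q} : Set Ω)) (h : G) :
    h • p = p := by
  have meet (a b : G) : (a • {p, q} ∩ b • {p, q} : Set Ω).Nonempty := by
    obtain ⟨x, hx, hx'⟩ := hmeet (b⁻¹ * a)
    refine ⟨b • x, ?_, Set.smul_mem_smul_set hx'⟩
    rw [mul_smul] at hx
    simpa using Set.smul_mem_smul_set (a := b) hx
  have hgu : (g * u) • ({p, q} : Set Ω) = {p, g • y} := by rw [mul_smul, hu, smul_pair, hp]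
  have hgy : g • y ≠ y := fun h => hy (hfix u y (by simp [hu]) h)
  have hgyq : g • y ≠ q := fun h => hy (by simp [← smul_left_cancel g (h.trans hq.symm)])
  simp only [Set.mem_insert_iff, Set.mem_singleton_iff, not_or] at hy
  have mem_translate (a : G) : p ∈ a • ({p, q} : Set Ω) := by
    by_contra hpa
    obtain ⟨x, hx, hx'⟩ := hmeet a
    obtain ⟨x₁, hx₁, hx₁'⟩ := meet a u
    obtain ⟨x₂, hx₂, hx₂'⟩ := meet a (g * u)
    rw [hu] at hx₁'
    rw [hgu] at hx₂'
    rw [smul_pair] at hpa hx hx₁ hx₂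
    simp only [Set.mem_insert_iff, Set.mem_singleton_iff] at *
    grind
  have orbit (a : G) : a • p ∈ ({p, q} : Set Ω) := by
    have := Set.smul_mem_smul_set (a := a) (mem_translate a⁻¹)
    rwa [smul_inv_smul] at this
  have huh := orbit (u * h)
  have hup := orbit u
  have hyu : y ∈ u • ({p, q} : Set Ω) := by simp [hu]
  rw [mul_smul] at huh
  rw [smul_pair] at hyu
  refine (orbit h).resolve_right fun hhp => ?_
  rw [hhp] at huh
  simp only [Set.mem_insert_iff, Set.mem_singleton_iff] at hup huh hyu
  grind

theorem commutator_le_stabilizer_of_forall_smul_eq (h : ∀ g : G, g • ({p, q} : Set Ω) = {p, q}) :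
    commutator G ≤ MulAction.stabilizer G p := by
  have mem_pair (g : G) {x : Ω} (hx : x ∈ ({p, q} : Set Ω)) : g • x ∈ ({p, q} : Set Ω) :=
    h g ▸ Set.smul_mem_smul_set hx
  rw [commutator_def, Subgroup.commutator_le]
  intro a _ b _
  have hab : a⁻¹ • b⁻¹ • p = b⁻¹ • a⁻¹ • p := by
    have hap := mem_pair a⁻¹ (x := p) (by simp)
    have haq := mem_pair a⁻¹ (x := q) (by simp)
    have hbp := mem_pair b⁻¹ (x := p) (by simp)
    have hbq := mem_pair b⁻¹ (x := q) (by simp)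
    simp only [Set.mem_insert_iff, Set.mem_singleton_iff] at hap haq hbp hbq
    grind [smul_left_cancel_iff]
  rw [MulAction.mem_stabilizer_iff, commutatorElement_def]
  simp only [mul_smul, hab, smul_inv_smul]

theorem exists_commutator_le_stabilizer
    (hmeet : ∀ h : G, (h • {p, q} ∩ {p, q} : Set Ω).Nonempty)
    {g : G} (hp : g • p = p) (hq : g • q = q)
    (hfix : ∀ h : G, ∀ x ∈ h • ({p, q} : Set Ω), g • x = x → x ∈ ({p, q} : Set Ω)) :
    ∃ x ∈ ({p, q} : Set Ω), commutator G ≤ MulAction.stabilizer G x := by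
  by_cases hinv : ∀ u : G, u • ({p, q} : Set Ω) = {p, q}
  · exact ⟨p, by simp, commutator_le_stabilizer_of_forall_smul_eq hinv⟩
  push Not at hinv
  obtain ⟨u, hu⟩ := hinv
  have hswap : ({q, p} : Set Ω) = {p, q} := Set.pair_comm q p
  have hcases : (∃ y ∉ ({p, q} : Set Ω), u • ({p, q} : Set Ω) = {p, y}) ∨
      ∃ y ∉ ({p, q} : Set Ω), u • ({p, q} : Set Ω) = {q, y} := by
    obtain ⟨x, hx, hx'⟩ := hmeet u
    rw [smul_pair] at hx hu ⊢
    by_cases hup : u • p ∈ ({p, q} : Set Ω) <;> by_cases huq : u • q ∈ ({p, q} : Set Ω)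
    · simp only [Set.mem_insert_iff, Set.mem_singleton_iff] at hup huq
      grind [smul_left_cancel_iff, Set.pair_comm]
    · simp only [Set.mem_insert_iff, Set.mem_singleton_iff] at hup
      rcases hup with hup | hup <;> rw [hup] <;> [left; right] <;> exact ⟨_, huq, rfl⟩
    · simp only [Set.mem_insert_iff, Set.mem_singleton_iff] at huq
      rcases huq with huq | huq <;> rw [huq] <;> [left; right] <;> exact ⟨_, hup, Set.pair_comm _ _⟩
    · simp only [Set.mem_insert_iff, Set.mem_singleton_iff] at *
      grind
  rcases hcases with ⟨y, hy, huy⟩ | ⟨y, hy, huy⟩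
  · exact ⟨p, by simp, fun h _ => forall_smul_eq_of_smul_eq hmeet hp hq hfix huy hy h⟩
  · refine ⟨q, by simp, fun h _ => ?_⟩
    rw [← hswap] at hmeet hfix huy hy
    exact forall_smul_eq_of_smul_eq hmeet hq hp hfix huy hy h

end Pair

universe u

section PingPong

open scoped Pointwise

theorem pairwise_four_iff {α : Type*} {R : α → α → Prop} {a b c d : α} :
    [a, b, c, d].Pairwise R ↔ R a b ∧ R a c ∧ R a d ∧ R b c ∧ R b d ∧ R c d := by
  simp [and_assoc]

theorem ContainsNonabelianFree.of_ping_pong {G : Type u} {α : Type*} [Group G] [MulAction G α]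
    {a b : G} {A A' B B' : Set α} (hA : A.Nonempty) (hB : B.Nonempty)
    (hdisj : [A, A', B, B'].Pairwise Disjoint) (ha : a • A'ᶜ ⊆ A) (hb : b • B'ᶜ ⊆ B) :
    ContainsNonabelianFree G := by
  have inv_smul {s : G} {S S' : Set α} (h : s • S'ᶜ ⊆ S) : s⁻¹ • Sᶜ ⊆ S' := by
    rw [← Set.smul_set_subset_smul_set_iff (a := s), smul_inv_smul, Set.compl_subset_comm]
    rwa [← Set.smul_set_compl]
  obtain ⟨hAA', hAB, hAB', hA'B, hA'B', hBB'⟩ := pairwise_four_iff.1 hdisj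
  have hinj : Function.Injective (FreeGroup.lift fun i : ULift.{u} (Fin 2) => ![a, b] i.down) := by
    refine FreeGroup.injective_lift_of_ping_pong _ (fun i => ![A, B] i.down)
      (fun i => ![A', B'] i.down) ?_ ?_ ?_ ?_ ?_ ?_
    · rintro ⟨i⟩
      fin_cases i
      exacts [hA, hB]
    · rintro ⟨i⟩ ⟨j⟩ hij
      fin_cases i <;> fin_cases j
      exacts [absurd rfl hij, hAB, hAB.symm, absurd rfl hij]
    · rintro ⟨i⟩ ⟨j⟩ hij
      fin_cases i <;> fin_cases j
      exacts [absurd rfl hij, hA'B', hA'B'.symm, absurd rfl hij]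
    · rintro ⟨i⟩ ⟨j⟩
      fin_cases i <;> fin_cases j
      exacts [hAA', hAB', hA'B.symm, hBB']
    · rintro ⟨i⟩
      fin_cases i
      exacts [ha, hb]
    · rintro ⟨i⟩
      fin_cases i
      exacts [inv_smul ha, inv_smul hb]
  exact containsNonabelianFree_iff.2
    ⟨(FreeGroup.lift _).comp (FreeGroup.freeGroupCongr Equiv.ulift.symm).toMonoidHom,
      hinj.comp (FreeGroup.freeGroupCongr Equiv.ulift.symm).injective⟩

end PingPong

/-! ### Groups acting on trees -/

/-- A discrete tree, presented by the distance function on its vertices: `0`-hyperbolicity in the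
form of the four-point condition, absence of odd cycles, and existence of the vertices along a
geodesic. -/
class TreeMetric (X : Type*) where
  d : X → X → ℕ
  d_self : ∀ x, d x x = 0
  eq_of_d_eq_zero : ∀ {x y}, d x y = 0 → x = y
  d_comm : ∀ x y, d x y = d y x
  four_point : ∀ x y z w, d x y + d z w ≤ max (d x z + d y w) (d x w + d y z)
  even_perimeter : ∀ x y z, Even (d x y + d y z + d x z)
  exists_between : ∀ x y k, k ≤ d x y → ∃ z, d x z = k ∧ d z y = d x y - k

/-- An isometric action on a tree which preserves its two-colouring, hence without inversions. -/
class IsTreeAction (G X : Type*) [Group G] [TreeMetric X] [MulAction G X] : Prop where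
  d_smul_smul : ∀ (g : G) (x y : X), TreeMetric.d (g • x) (g • y) = TreeMetric.d x y
  even_d_smul : ∀ (g : G) (x : X), Even (TreeMetric.d x (g • x))

namespace TreeMetric

section Gromov

variable {X : Type*} [TreeMetric X]

/-- The Gromov product of `x` and `y` at `o`: the length of the common part of the geodesics from
`o` to `x` and to `y`. -/
def gromov (o x y : X) : ℕ := (d o x + d o y - d x y) / 2

theorem d_triangle (x y z : X) : d x z ≤ d x y + d y z := by
  have h1 := four_point x z y y
  have h2 := d_self y
  have h3 := d_comm y z
  omega

theorem d_add_d_eq (o x y : X) : d o x + d o y = d x y + 2 * gromov o x y := by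
  have h1 := d_triangle x o y
  have h2 := d_comm o x
  obtain ⟨m, hm⟩ := even_perimeter o x y
  unfold gromov
  omega

theorem gromov_comm (o x y : X) : gromov o x y = gromov o y x := by
  simp only [gromov, add_comm, d_comm x y]

theorem gromov_le_d (o x y : X) : gromov o x y ≤ d o x := by
  have h1 := d_add_d_eq o x y
  have h2 := d_triangle o x y
  omega

theorem min_gromov_le (o x y z : X) : min (gromov o x y) (gromov o y z) ≤ gromov o x z := by
  have h1 := d_add_d_eq o x y
  have h2 := d_add_d_eq o y z
  have h3 := d_add_d_eq o x z
  have h4 := four_point x z o y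
  have h5 := d_comm x o
  have h6 := d_comm z o
  have h7 := d_comm y z
  omega

theorem le_gromov_trans {o x y z : X} {n : ℕ} (h1 : n ≤ gromov o x y) (h2 : n ≤ gromov o y z) :
    n ≤ gromov o x z :=
  (le_min h1 h2).trans (min_gromov_le o x y z)

theorem gromov_self (o x : X) : gromov o x x = d o x := by
  have h1 := d_add_d_eq o x x
  have h2 := d_self x
  omega

theorem gromov_le_add_d (o x x' y : X) : gromov o x y ≤ gromov o x' y + d x x' := by
  have h1 := d_add_d_eq o x y
  have h2 := d_add_d_eq o x' y
  have h3 := d_triangle o x' x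
  have h4 := d_triangle x' x y
  have h5 := d_comm x x'
  omega

theorem gromov_le_add_d_base (o o' x y : X) : gromov o x y ≤ gromov o' x y + d o o' := by
  have h1 := d_add_d_eq o x y
  have h2 := d_add_d_eq o' x y
  have h3 := d_triangle o o' x
  have h4 := d_triangle o o' y
  omega

theorem eq_of_le_gromov {o x y : X} (h : d o x = d o y) (h' : d o x ≤ gromov o x y) : x = y := by
  have h1 := d_add_d_eq o x y
  exact eq_of_d_eq_zero (by omega)

theorem gromov_eq_of_lt {o x y z : X} (h : d o x < gromov o y z) :
    gromov o x y = gromov o x z := by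
  have h1 := min_gromov_le o x y z
  have h2 := min_gromov_le o x z y
  rw [gromov_comm o z y] at h2
  have h3 := gromov_le_d o x z
  omega

end Gromov

end TreeMetric

namespace IsTreeAction

open TreeMetric

variable {G X : Type*} [Group G] [TreeMetric X] [MulAction G X] [IsTreeAction G X]

instance (H : Subgroup G) : IsTreeAction H X where
  d_smul_smul h := d_smul_smul (h : G)
  even_d_smul h := even_d_smul (h : G)

theorem gromov_smul (g : G) (o x y : X) : gromov (g • o) (g • x) (g • y) = gromov o x y := by
  simp only [gromov, d_smul_smul]

theorem d_smul_eq (g : G) (x y : X) : d x (g • y) = d (g⁻¹ • x) y := by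
  rw [← d_smul_smul g (g⁻¹ • x) y, smul_inv_smul]

theorem d_inv_smul (g : G) (o : X) : d o (g⁻¹ • o) = d o (g • o) := by
  rw [d_smul_eq, inv_inv, d_comm]

theorem gromov_smul_add_gromov (g : G) (o x : X) :
    gromov o (g • x) (g • o) + gromov o x (g⁻¹ • o) = d o (g • o) := by
  have h1 := d_add_d_eq o (g • x) (g • o)
  have h2 := d_add_d_eq o x (g⁻¹ • o)
  have h3 := d_smul_smul g x o
  have h4 := d_smul_eq g o x
  have h5 := d_inv_smul g o
  have h6 := d_comm o x
  have h7 := d_comm (g⁻¹ • o) x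
  omega

section PingPong

open scoped Pointwise

/-- The points whose geodesic from `o` follows the geodesic to `y` for more than half of it. -/
def halfTree (o y : X) : Set X := {x | d o y ≤ 2 * gromov o x y}

theorem disjoint_halfTree {o y z : X} (h : 2 * gromov o y z < min (d o y) (d o z)) :
    Disjoint (halfTree o y) (halfTree o z) := by
  rw [Set.disjoint_left]
  intro x hx hx'
  simp only [halfTree, Set.mem_ofPred_eq] at hx hx'
  rw [gromov_comm] at hx
  have := min_gromov_le o y x z
  omega

theorem smul_compl_halfTree_subset (g : G) (o : X) :
    g • (halfTree o (g⁻¹ • o))ᶜ ⊆ halfTree o (g • o) := by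
  rintro _ ⟨x, hx, rfl⟩
  simp only [halfTree, Set.mem_compl_iff, Set.mem_ofPred_eq, not_le] at hx ⊢
  have h1 := gromov_smul_add_gromov g o x
  have h2 := d_inv_smul g o
  omega

theorem containsNonabelianFree_of_gromov_lt (o : X) (a b : G)
    (h : [a, a⁻¹, b, b⁻¹].Pairwise fun s t =>
      2 * gromov o (s • o) (t • o) < min (d o (s • o)) (d o (t • o))) :
    ContainsNonabelianFree G := by
  have mem_halfTree (y : X) : y ∈ halfTree o y := by
    simp only [halfTree, Set.mem_ofPred_eq, gromov_self]
    omega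
  refine .of_ping_pong (a := a) (b := b) ⟨_, mem_halfTree (a • o)⟩ ⟨_, mem_halfTree (b • o)⟩ ?_
    (smul_compl_halfTree_subset a o) (smul_compl_halfTree_subset b o)
  exact List.pairwise_map (f := fun s : G => halfTree o (s • o)).2 (h.imp disjoint_halfTree)

end PingPong

section Elliptic

theorem d_smul_smul_le_of_smul_eq {g : G} {y : X} (hy : g • y = y) (x : X) :
    d x (g • g • x) ≤ d x (g • x) := by
  have h1 := four_point x (g • g • x) y (g • x)
  have h2 := d_smul_smul g y x
  have h3 := d_smul_smul g y (g • x)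
  rw [hy] at h2 h3
  have h4 := d_comm x y
  have h5 := d_comm (g • g • x) y
  have h6 := d_smul_smul g (g • x) x
  have h7 := d_comm (g • x) x
  omega

/-- The fixed point is the midpoint of `x` and `g • x`. -/
theorem exists_smul_eq {g : G} {x : X} (h : d x (g • g • x) ≤ d x (g • x)) :
    ∃ y : X, g • y = y := by
  obtain ⟨m, hm⟩ := even_d_smul g x
  obtain ⟨z, hz1, hz2⟩ := exists_between x (g • x) m (by omega)
  refine ⟨z, ?_⟩
  have h1 := d_smul_smul g x z
  have h2 := d_smul_smul g z (g • x)
  have h3 := d_smul_smul g x (g • x)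
  have h4 := d_add_d_eq (g • x) z x
  have h5 := d_add_d_eq (g • x) x (g • g • x)
  have h6 := d_add_d_eq (g • x) (g • g • x) (g • z)
  have c1 := d_comm (g • x) x
  have c2 := d_comm (g • x) z
  have c3 := d_comm z x
  have c4 := d_comm (g • g • x) (g • z)
  refine (eq_of_le_gromov (o := g • x) (by omega) ?_).symm
  refine le_gromov_trans (y := x) (by omega) ?_
  exact le_gromov_trans (y := g • g • x) (by omega) (by omega)

theorem smul_eq_of_le_gromov {g : G} {o x z : X} (ho : g • o = o)
    (hz : gromov o z x = d o z) (hk : d o z ≤ gromov o x (g • x)) : g • z = z := by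
  have h1 := gromov_smul g o z x
  have h2 := d_smul_smul g o z
  rw [ho] at h1 h2
  refine eq_of_le_gromov (o := o) h2 ?_
  rw [h2]
  refine le_gromov_trans (h1.trans hz).ge (le_gromov_trans (y := x) ?_ ?_)
  · rwa [gromov_comm]
  · rw [gromov_comm, hz]

/-- The first vertex on the way from `o` to `x`. -/
theorem exists_forall_smul_eq_of_gromov_pos {o x : X} (hox : o ≠ x) :
    ∃ z, d z x < d o x ∧ ∀ g : G, g • o = o → 0 < gromov o x (g • x) → g • z = z := by
  have hpos : d o x ≠ 0 := fun h => hox (eq_of_d_eq_zero h)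
  obtain ⟨z, hz1, hz2⟩ := exists_between o x 1 (by omega)
  have h1 := d_add_d_eq o z x
  exact ⟨z, by omega, fun g ho hg => smul_eq_of_le_gromov ho (x := x) (by omega) (by omega)⟩

theorem forall_mul_smul_ne {a b : G} {p q : X} (hpq : p ≠ q) (ha : a • p = p) (hb : b • q = q)
    (hap : gromov p q (a • q) = 0) (hbq : gromov q p (b • p) = 0) (y : X) :
    (a * b) • y ≠ y := by
  intro hy
  have hpos : d p q ≠ 0 := fun h => hpq (eq_of_d_eq_zero h)
  have hh := d_smul_smul_le_of_smul_eq hy q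
  simp only [mul_smul, hb] at hh
  rw [d_smul_eq] at hh
  have e2 := d_inv_smul a q
  have e3 := d_smul_smul a p (a⁻¹ • q)
  rw [smul_inv_smul, ha] at e3
  have e4 := d_smul_smul b q (a • q)
  have e5 := d_smul_smul b p (a • q)
  have e6 := d_smul_smul a p q
  have e7 := d_smul_smul b q p
  rw [ha] at e6
  rw [hb] at e4 e7
  have s1 := d_add_d_eq p q (a • q)
  have s2 := d_add_d_eq q p (a⁻¹ • q)
  have s3 := d_add_d_eq q (b • a • q) (b • p)
  have s4 := d_add_d_eq q (a⁻¹ • q) (b • a • q)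
  have c0 := d_comm p q
  have c1 := d_comm (b • a • q) (b • p)
  have u1 := min_gromov_le q p (a⁻¹ • q) (b • p)
  have u2 := min_gromov_le q (a⁻¹ • q) (b • a • q) (b • p)
  omega

theorem exists_le_stabilizer_and_smul_eq (hell : ∀ g : G, ∃ x : X, g • x = x) {K : Subgroup G}
    (hK : ∃ x : X, K ≤ MulAction.stabilizer G x) (g : G) :
    ∃ x : X, K ≤ MulAction.stabilizer G x ∧ g • x = x := by
  classical
  obtain ⟨x₀, hx₀⟩ := hK
  obtain ⟨y₀, hy₀⟩ := hell g
  have hex : ∃ n, ∃ p q : X, K ≤ MulAction.stabilizer G p ∧ g • q = q ∧ d p q = n :=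
    ⟨_, x₀, y₀, hx₀, hy₀, rfl⟩
  obtain ⟨p, q, hp, hq, hpq⟩ := Nat.find_spec hex
  have hmin (p' q' : X) (hp' : K ≤ MulAction.stabilizer G p') (hq' : g • q' = q') :
      d p q ≤ d p' q' := by
    rw [hpq]
    exact Nat.find_min' hex ⟨p', q', hp', hq', rfl⟩
  by_cases heq : p = q
  · exact ⟨p, hp, heq ▸ hq⟩
  exfalso
  have hgp : gromov q p (g • p) = 0 := by
    obtain ⟨z, hz, hfix⟩ := exists_forall_smul_eq_of_gromov_pos (G := G) (Ne.symm heq)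
    by_contra hne
    refine (hmin p z hp (hfix g hq (Nat.pos_of_ne_zero hne))).not_gt ?_
    rwa [d_comm p z, d_comm p q]
  have hkq : ∃ k ∈ K, gromov p q (k • q) = 0 := by
    obtain ⟨z, hz, hfix⟩ := exists_forall_smul_eq_of_gromov_pos (G := G) heq
    by_contra! hne
    exact (hmin z q (fun k hk => hfix k (hp hk) (Nat.pos_of_ne_zero (hne k hk))) hq).not_gt hz
  obtain ⟨k, hk, hk0⟩ := hkq
  obtain ⟨y, hy⟩ := hell (k * g)
  exact forall_mul_smul_ne heq (hp hk) hq hk0 hgp y hy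

theorem exists_closure_le_stabilizer [Nonempty X] (hell : ∀ g : G, ∃ x : X, g • x = x)
    {S : Set G} (hS : S.Finite) : ∃ x : X, Subgroup.closure S ≤ MulAction.stabilizer G x := by
  induction S, hS using Set.Finite.induction_on with
  | empty => exact ⟨Classical.arbitrary X, by simp⟩
  | @insert a S _ _ ih =>
    obtain ⟨x, hx, hax⟩ := exists_le_stabilizer_and_smul_eq hell ih a
    refine ⟨x, (Subgroup.closure_le _).2 ?_⟩
    rintro s (rfl | hs)
    exacts [hax, hx (Subgroup.subset_closure hs)]

theorem isSolvable_or_exists_forall_smul_eq [Nonempty X] {n : ℕ}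
    (hstab : ∀ x y : X, x ≠ y →
      iteratedCommutator (MulAction.stabilizer G x ⊓ MulAction.stabilizer G y) n = ⊥)
    (hell : ∀ g : G, ∃ x : X, g • x = x) :
    Group.IsSolvable G ∨ ∃ x : X, ∀ g : G, g • x = x := by
  by_cases hall : ∀ S : Set G, S.Finite → iteratedCommutator (Subgroup.closure S) n = ⊥
  · left
    refine (Group.isSolvable_def G).2 ⟨n, ?_⟩
    rw [← iteratedCommutator_top]
    exact iteratedCommutator_eq_bot_of_finite fun S hS _ => hall S hS
  · push Not at hall
    obtain ⟨S, hS, hne⟩ := hall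
    obtain ⟨x, hx⟩ := exists_closure_le_stabilizer (X := X) hell hS
    refine Or.inr ⟨x, fun g => ?_⟩
    obtain ⟨y, hy, hgy⟩ := exists_le_stabilizer_and_smul_eq hell ⟨x, hx⟩ g
    suffices x = y by rw [this, hgy]
    by_contra hxy
    exact hne (iteratedCommutator_eq_bot_of_le (le_inf hx hy) (hstab x y hxy))

end Elliptic

end IsTreeAction

section Ends

open TreeMetric

/-- Two sequences of vertices converge to the same end: their Gromov products tend to infinity.
All base points are quantified over, so that the notion is visibly invariant under isometries. -/
def SameEnd {X : Type*} [TreeMetric X] (u v : ℕ → X) : Prop :=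
  ∀ (o : X) (N : ℕ), ∃ M, ∀ n m, M ≤ n → M ≤ m → N ≤ gromov o (u n) (v m)

namespace SameEnd

variable {X : Type*} [TreeMetric X] {u v w : ℕ → X}

theorem symm (h : SameEnd u v) : SameEnd v u := by
  intro o N
  obtain ⟨M, hM⟩ := h o N
  exact ⟨M, fun n m hn hm => by rw [gromov_comm]; exact hM m n hm hn⟩

theorem trans (h : SameEnd u v) (h' : SameEnd v w) : SameEnd u w := by
  intro o N
  obtain ⟨M, hM⟩ := h o N
  obtain ⟨M', hM'⟩ := h' o N
  refine ⟨max M M', fun n m hn hm => ?_⟩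
  exact le_gromov_trans (hM n (max M M') (by omega) (by omega))
    (hM' (max M M') m (by omega) (by omega))

theorem of_d_le (hu : SameEnd u u) {C : ℕ} (h : ∀ n, d (u n) (v n) ≤ C) : SameEnd u v := by
  intro o N
  obtain ⟨M, hM⟩ := hu o (N + C)
  refine ⟨M, fun n m hn hm => ?_⟩
  have h1 := hM n m hn hm
  have h2 := gromov_le_add_d o (u m) (v m) (u n)
  have h3 := h m
  rw [gromov_comm o (u m), gromov_comm o (v m)] at h2
  omega

theorem smul {G : Type*} [Group G] [MulAction G X] [IsTreeAction G X] (h : SameEnd u v) (g : G) :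
    SameEnd (g • u) (g • v) := by
  intro o N
  obtain ⟨M, hM⟩ := h (g⁻¹ • o) N
  refine ⟨M, fun n m hn hm => ?_⟩
  rw [← smul_inv_smul g o]
  exact (hM n m hn hm).trans_eq (IsTreeAction.gromov_smul g _ _ _).symm

theorem exists_gromov_lt_of_not (hu : SameEnd u u) (hv : SameEnd v v) (h : ¬ SameEnd u v) (o : X) :
    ∃ N, ∀ n m, N ≤ n → N ≤ m → gromov o (u n) (v m) < N := by
  simp only [SameEnd, not_forall, not_exists, not_le] at h
  obtain ⟨o', N, hN⟩ := h
  obtain ⟨M₁, h₁⟩ := hu o' N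
  obtain ⟨M₂, h₂⟩ := hv o' N
  obtain ⟨n₀, m₀, hn₀, hm₀, h₀⟩ := hN (max M₁ M₂)
  refine ⟨max (N + d o o') (max M₁ M₂), fun n m hn hm => ?_⟩
  suffices gromov o' (u n) (v m) < N by
    have := gromov_le_add_d_base o o' (u n) (v m)
    omega
  by_contra! hcon
  have h3 := le_gromov_trans (h₁ n₀ n (by omega) (by omega)) hcon
  exact h₀.not_ge (le_gromov_trans h3 (h₂ m m₀ (by omega) (by omega)))

end SameEnd

/-- Having the same end, as an equivalence relation on convergent sequences of vertices. -/
def endSetoid (X : Type*) [TreeMetric X] : Setoid {u : ℕ → X // SameEnd u u} where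
  r u v := SameEnd u.1 v.1
  iseqv := ⟨fun u => u.2, SameEnd.symm, SameEnd.trans⟩

/-- The ends of a tree. -/
def TreeMetric.End (X : Type*) [TreeMetric X] : Type _ := Quotient (endSetoid X)

/-- The sequence of vertices `u` converges to the end `ξ`. -/
def TendsToEnd {X : Type*} [TreeMetric X] (u : ℕ → X) (ξ : End X) : Prop :=
  ∃ h : SameEnd u u, (Quotient.mk _ ⟨u, h⟩ : End X) = ξ

theorem TreeMetric.End.exists_tendsToEnd {X : Type*} [TreeMetric X] (ξ : End X) :
    ∃ u, TendsToEnd u ξ := by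
  induction ξ using Quotient.ind with
  | _ u => exact ⟨u.1, u.2, rfl⟩

namespace TendsToEnd

variable {X : Type*} [TreeMetric X] {u v : ℕ → X} {ξ η : End X}

theorem self (h : TendsToEnd u ξ) : SameEnd u u := h.1

theorem sameEnd_iff (hu : TendsToEnd u ξ) (hv : TendsToEnd v η) : SameEnd u v ↔ ξ = η := by
  obtain ⟨hu, rfl⟩ := hu
  obtain ⟨hv, rfl⟩ := hv
  exact (Quotient.eq (r := endSetoid X) (x := ⟨u, hu⟩) (y := ⟨v, hv⟩)).symm

theorem congr (hu : TendsToEnd u ξ) (h : SameEnd u v) : TendsToEnd v ξ := by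
  have hv : SameEnd v v := h.symm.trans h
  exact ⟨hv, ((sameEnd_iff hu ⟨hv, rfl⟩).1 h).symm⟩

theorem tendsto_d (hu : TendsToEnd u ξ) (o : X) (N : ℕ) : ∃ M, ∀ n, M ≤ n → N ≤ d o (u n) := by
  obtain ⟨M, hM⟩ := hu.self o N
  exact ⟨M, fun n hn => (hM n n hn hn).trans (gromov_le_d _ _ _)⟩

end TendsToEnd

section Action

variable {G X : Type*} [Group G] [TreeMetric X] [MulAction G X] [IsTreeAction G X]

instance : MulAction G (End X) where
  smul g := Quotient.map (fun u => ⟨g • u.1, u.2.smul g⟩) fun _ _ h => SameEnd.smul h g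
  one_smul ξ := by
    induction ξ using Quotient.ind with
    | _ u => exact congrArg (Quotient.mk _) (Subtype.ext (one_smul G u.1))
  mul_smul g h ξ := by
    induction ξ using Quotient.ind with
    | _ u => exact congrArg (Quotient.mk _) (Subtype.ext (mul_smul g h u.1))

theorem TendsToEnd.smul {u : ℕ → X} {ξ : End X} (h : TendsToEnd u ξ) (g : G) :
    TendsToEnd (g • u) (g • ξ) := by
  obtain ⟨hu, rfl⟩ := h
  exact ⟨hu.smul g, rfl⟩

/-- The end `ξ` attracts `g`: all orbits under the positive powers of `g` converge to `ξ`. -/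
def IsAttracting (g : G) (ξ : End X) : Prop :=
  ∀ x : X, TendsToEnd (fun n => g ^ n • x) ξ

namespace IsAttracting

variable {g h : G} {ξ η : End X}

theorem of_tendsToEnd {x : X} (h : TendsToEnd (fun n => g ^ n • x) ξ) : IsAttracting g ξ :=
  fun y => h.congr (h.self.of_d_le fun n => (IsTreeAction.d_smul_smul (g ^ n) x y).le)

theorem conj (hg : IsAttracting g ξ) (h : G) : IsAttracting (h * g * h⁻¹) (h • ξ) := by
  intro x
  convert (hg (h⁻¹ • x)).smul h using 1
  ext n
  simp only [conj_pow, mul_smul, Pi.smul_apply]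

theorem smul_eq [Nonempty X] (hg : IsAttracting g ξ) : g • ξ = ξ := by
  obtain ⟨x⟩ := ‹Nonempty X›
  refine (TendsToEnd.sameEnd_iff ((hg x).smul g) (hg (g • x))).1 ?_
  convert ((hg x).smul g).self using 1
  ext n
  simp only [Pi.smul_apply, ← mul_smul, pow_mul_comm']

/-- For `n` large the points `s ^ n • x` with `s` among `a, a⁻¹, b, b⁻¹` are far away in pairwise
different directions. -/
theorem containsNonabelianFree [Nonempty X] {a b : G} {ξ ξ' η η' : End X}
    (ha : IsAttracting a ξ) (ha' : IsAttracting a⁻¹ ξ') (hb : IsAttracting b η)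
    (hb' : IsAttracting b⁻¹ η') (hne : [ξ, ξ', η, η'].Pairwise (· ≠ ·)) :
    ContainsNonabelianFree G := by
  obtain ⟨o⟩ := ‹Nonempty X›
  have far {s t : G} {ξ η : End X} (hs : IsAttracting s ξ) (ht : IsAttracting t η) (hne : ξ ≠ η) :
      ∀ᶠ n in Filter.atTop, 2 * gromov o (s ^ n • o) (t ^ n • o) <
        min (d o (s ^ n • o)) (d o (t ^ n • o)) := by
    obtain ⟨N, hN⟩ := SameEnd.exists_gromov_lt_of_not (hs o).self (ht o).self
      (fun h => hne ((TendsToEnd.sameEnd_iff (hs o) (ht o)).1 h)) o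
    obtain ⟨M, hM⟩ := (hs o).tendsto_d o (2 * N)
    obtain ⟨M', hM'⟩ := (ht o).tendsto_d o (2 * N)
    refine Filter.eventually_atTop.2 ⟨max N (max M M'), fun n hn => ?_⟩
    have h1 := hN n n (by omega) (by omega)
    have h2 := hM n (by omega)
    have h3 := hM' n (by omega)
    omega
  obtain ⟨h₁, h₂, h₃, h₄, h₅, h₆⟩ := pairwise_four_iff.1 hne
  obtain ⟨n, hn⟩ := ((far ha ha' h₁).and ((far ha hb h₂).and ((far ha hb' h₃).and
    ((far ha' hb h₄).and ((far ha' hb' h₅).and (far hb hb' h₆)))))).exists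
  refine IsTreeAction.containsNonabelianFree_of_gromov_lt o (a ^ n) (b ^ n) ?_
  rwa [pairwise_four_iff, ← inv_pow, ← inv_pow]

end IsAttracting

end Action

end Ends

section Ray

open TreeMetric IsTreeAction

variable {G X : Type*} [Group G] [TreeMetric X] [MulAction G X] [IsTreeAction G X]

/-- Vertices on a geodesic ray, at distance `l > 0` from each other. -/
structure IsRay (l : ℕ) (p : ℕ → X) : Prop where
  pos : 0 < l
  d_add : ∀ n k, d (p n) (p (n + k)) = k * l

namespace IsRay

variable {l : ℕ} {p : ℕ → X} (hp : IsRay l p)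

include hp

theorem d_zero (n : ℕ) : d (p 0) (p n) = n * l := by
  simpa using hp.d_add 0 n

theorem gromov_eq {n m : ℕ} (h : n ≤ m) : gromov (p 0) (p n) (p m) = n * l := by
  obtain ⟨k, rfl⟩ := Nat.exists_eq_add_of_le h
  have h1 := d_add_d_eq (p 0) (p n) (p (n + k))
  rw [hp.d_add, hp.d_zero, hp.d_zero, add_mul] at h1
  omega

theorem exists_tendsToEnd : ∃ ξ, TendsToEnd p ξ := by
  refine ⟨_, fun o N => ⟨N + d (p 0) o, fun n m hn hm => ?_⟩, rfl⟩
  suffices N + d (p 0) o ≤ gromov (p 0) (p n) (p m) by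
    have := gromov_le_add_d_base (p 0) o (p n) (p m)
    omega
  have hl := hp.pos
  rcases le_total n m with h | h
  · rw [hp.gromov_eq h]
    nlinarith
  · rw [gromov_comm, hp.gromov_eq h]
    nlinarith

/-- The geodesics from `x` to points far out on the ray share all but an initial part with it. -/
theorem exists_d_eq (x : X) : ∃ c : ℤ, ∃ M, ∀ n, M ≤ n → (d x (p n) : ℤ) = n * l + c := by
  refine ⟨d (p 0) x - 2 * gromov (p 0) x (p (d (p 0) x + 1)), d (p 0) x + 1, fun n hn => ?_⟩
  have h1 : d (p 0) x < gromov (p 0) (p (d (p 0) x + 1)) (p n) := by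
    rw [hp.gromov_eq hn]
    exact Nat.le_mul_of_pos_right _ hp.pos
  have h2 := gromov_eq_of_lt h1
  have h3 := d_add_d_eq (p 0) x (p n)
  have h4 := hp.d_zero n
  zify at h2 h3 h4
  linarith

end IsRay

/-- `h` shifts the geodesic ray `p` by `c` towards its end. -/
def IsShift (p : ℕ → X) (l : ℕ) (h : G) (c : ℤ) : Prop :=
  ∃ M, ∀ n, M ≤ n → (d (p 0) (h • p n) : ℤ) = n * l + c

section Shift

variable {l : ℕ} {p : ℕ → X} (hp : IsRay l p) {ξ : End X} (hξ : TendsToEnd p ξ)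

theorem IsShift.unique {G X : Type*} [Group G] [TreeMetric X] [MulAction G X] {l : ℕ} {p : ℕ → X}
    {h : G} {c c' : ℤ} (hc : IsShift p l h c) (hc' : IsShift p l h c') : c = c' := by
  obtain ⟨M, hM⟩ := hc
  obtain ⟨M', hM'⟩ := hc'
  have h1 := hM (max M M') (le_max_left _ _)
  have h2 := hM' (max M M') (le_max_right _ _)
  linarith

include hp

theorem IsRay.exists_isShift (h : G) : ∃ c, IsShift p l h c := by
  simpa only [IsShift, d_smul_eq] using hp.exists_d_eq (h⁻¹ • p 0)

include hξ

theorem IsShift.mul {h k : G} (hk : k • ξ = ξ) {c c' : ℤ} (hc : IsShift p l h c)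
    (hc' : IsShift p l k c') : IsShift p l (h * k) (c + c') := by
  obtain ⟨M₁, h₁⟩ := hc
  obtain ⟨M₂, h₂⟩ := hc'
  obtain ⟨M₃, h₃⟩ := ((hξ.smul k).sameEnd_iff hξ).2 hk (p 0) (d (p 0) (h⁻¹ • p 0) + 1)
  refine ⟨max M₁ (max M₂ M₃), fun n hn => ?_⟩
  have a₁ := h₁ n (by omega)
  have a₂ := h₂ n (by omega)
  have a₃ : gromov (p 0) (h⁻¹ • p 0) (k • p n) = gromov (p 0) (h⁻¹ • p 0) (p n) :=
    gromov_eq_of_lt (h₃ n n (by omega) (by omega))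
  have a₄ := d_add_d_eq (p 0) (h⁻¹ • p 0) (p n)
  have a₅ := d_add_d_eq (p 0) (h⁻¹ • p 0) (k • p n)
  have a₆ := hp.d_zero n
  rw [d_smul_eq] at a₁
  rw [mul_smul, d_smul_eq]
  zify at a₃ a₄ a₅ a₆
  linarith

theorem IsShift.eventually_smul_eq {h : G} (hh : h • ξ = ξ) (h0 : IsShift p l h 0) :
    ∀ᶠ n in Filter.atTop, h • p n = p n := by
  obtain ⟨M, hM⟩ := h0
  have hd (m : ℕ) (hm : M ≤ m) : d (p 0) (h • p m) = m * l := by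
    have := hM m hm
    zify
    linarith
  refine Filter.eventually_atTop.2 ⟨M, fun n hn => ?_⟩
  obtain ⟨N, hN⟩ := ((hξ.smul h).sameEnd_iff hξ).2 hh (p 0) (n * l)
  refine eq_of_le_gromov (o := p 0) (by rw [hd n hn, hp.d_zero]) ?_
  rw [hd n hn]
  refine le_gromov_trans (y := h • p (max n N)) ?_
    (le_gromov_trans (hN (max n N) (max n N) (by omega) (by omega)) ?_)
  · obtain ⟨k, hk⟩ := Nat.exists_eq_add_of_le (le_max_left n N)
    have h2 := d_add_d_eq (p 0) (h • p n) (h • p (max n N))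
    rw [d_smul_smul, hd n hn, hd _ (by omega), hk, hp.d_add, add_mul] at h2
    rw [hk]
    omega
  · rw [gromov_comm, hp.gromov_eq (le_max_left n N)]

theorem IsRay.exists_shiftHom (hfix : ∀ h : G, h • ξ = ξ) :
    ∃ φ : G →* Multiplicative ℤ, ∀ h, IsShift p l h (φ h).toAdd := by
  choose c hc using hp.exists_isShift (G := G)
  exact ⟨MonoidHom.mk' (fun h => .ofAdd (c h)) fun h k =>
    IsShift.unique (hc (h * k)) ((hc h).mul hp hξ (hfix k) (hc k)), hc⟩

end Shift

end Ray

section SolvableStabilizers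

open TreeMetric IsTreeAction

variable {G X : Type*} [Group G] [TreeMetric X] [MulAction G X] [IsTreeAction G X] {n₀ : ℕ}

theorem iteratedCommutator_stabilizer_subgroup {G X : Type*} [Group G] [MulAction G X] {x y : X}
    {n₀ : ℕ}
    (h : iteratedCommutator (MulAction.stabilizer G x ⊓ MulAction.stabilizer G y) n₀ = ⊥)
    (Γ : Subgroup G) :
    iteratedCommutator (MulAction.stabilizer Γ x ⊓ MulAction.stabilizer Γ y) n₀ = ⊥ := by
  rw [← Subgroup.map_eq_bot_iff_of_injective _ Γ.subtype_injective, map_iteratedCommutator]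
  refine iteratedCommutator_eq_bot_of_le (Subgroup.map_le_iff_le_comap.2 fun g hg => ?_) h
  exact hg

/-- Elements fixing the end `ξ` shift a ray towards `ξ`, and those shifting it by `0` fix all
vertices far out on the ray. -/
theorem isSolvable_of_forall_smul_end_eq
    (hstab : ∀ x y : X, x ≠ y →
      iteratedCommutator (MulAction.stabilizer G x ⊓ MulAction.stabilizer G y) n₀ = ⊥)
    {l : ℕ} {p : ℕ → X} (hp : IsRay l p) {ξ : End X} (hξ : TendsToEnd p ξ)
    (hfix : ∀ g : G, g • ξ = ξ) : Group.IsSolvable G := by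
  obtain ⟨φ, hφ⟩ := hp.exists_shiftHom hξ hfix
  have fixes (h : G) (hh : h ∈ φ.ker) : ∀ᶠ n in Filter.atTop, h • p n = p n := by
    refine IsShift.eventually_smul_eq hp hξ (hfix h) ?_
    simpa [MonoidHom.mem_ker.1 hh] using hφ h
  refine isSolvable_of_commutator_le (Abelianization.commutator_subset_ker φ)
    (isSolvable_iff_iteratedCommutator.2 ⟨n₀, iteratedCommutator_eq_bot_of_finite
      fun T hT hTφ => ?_⟩)
  obtain ⟨M, hM⟩ := Filter.eventually_atTop.1
    ((Filter.eventually_all_finite hT).2 fun t ht => fixes t (hTφ ht))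
  have hne : p M ≠ p (M + 1) := fun heq => by
    have h1 := hp.d_add M 1
    rw [← heq, d_self, one_mul] at h1
    exact hp.pos.ne h1
  refine iteratedCommutator_eq_bot_of_le ((Subgroup.closure_le _).2 fun t ht => ?_) (hstab _ _ hne)
  exact ⟨hM M le_rfl t ht, hM (M + 1) (by omega) t ht⟩

theorem isSolvable_stabilizer_end
    (hstab : ∀ x y : X, x ≠ y →
      iteratedCommutator (MulAction.stabilizer G x ⊓ MulAction.stabilizer G y) n₀ = ⊥)
    {l : ℕ} {p : ℕ → X} (hp : IsRay l p) {ξ : End X} (hξ : TendsToEnd p ξ) :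
    Group.IsSolvable (MulAction.stabilizer G ξ) := by
  refine isSolvable_of_forall_smul_end_eq (X := X)
    (fun x y h => iteratedCommutator_stabilizer_subgroup (hstab x y h) _) hp hξ fun g => ?_
  obtain ⟨g, hg⟩ := g
  induction ξ using Quotient.ind with
  | _ u => exact hg

end SolvableStabilizers

section Axis

open TreeMetric IsTreeAction

variable {G X : Type*} [Group G] [TreeMetric X] [MulAction G X] [IsTreeAction G X]

/-- The vertex `o` lies on the axis of `g`, along which `g` translates by `l > 0`. -/
structure IsAxisPoint (g : G) (o : X) (l : ℕ) : Prop where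
  pos : 0 < l
  d_pow : ∀ n : ℕ, d o (g ^ n • o) = n * l

/-- The point `o` at which the geodesics from `g • x` to `x` and to `g • g • x` part. -/
theorem exists_d_smul_smul_eq_two_mul {g : G} {x : X} (h : d x (g • x) < d x (g • g • x)) :
    ∃ o : X, 0 < d o (g • o) ∧ d o (g • g • o) = 2 * d o (g • o) := by
  obtain ⟨o, ho1, ho2⟩ := exists_between x (g • x) (gromov (g • x) x (g • g • x))
    (by rw [d_comm]; exact gromov_le_d _ _ _)
  have s1 := d_add_d_eq (g • x) x (g • g • x)
  have s2 := d_add_d_eq (g • x) (g • g • x) (g • o)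
  have s3 := d_add_d_eq (g • x) o (g • o)
  have s4 := d_add_d_eq (g • x) o x
  have i1 := d_smul_smul g x (g • x)
  have i2 := d_smul_smul g x o
  have i3 := d_smul_smul g o (g • x)
  have i4 := d_smul_smul g o (g • o)
  have i5 := d_smul_smul g (g • x) (g • o)
  have u1 := min_gromov_le (g • x) x (g • g • x) (g • o)
  have u2 := min_gromov_le (g • x) o x (g • o)
  have c1 := d_comm (g • x) x
  have c2 := d_comm (g • x) o
  have c3 := d_comm (g • g • x) (g • o)
  have c4 := d_comm o x
  have c5 := d_comm (g • g • o) (g • g • x)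
  have t1 := d_triangle x o (g • g • x)
  have t2 := d_triangle o (g • g • o) (g • g • x)
  have t3 := d_triangle o (g • o) (g • g • o)
  exact ⟨o, by omega, by omega⟩

theorem IsAxisPoint.of_d_smul_smul_eq {g : G} {o : X} (hpos : 0 < d o (g • o))
    (h : d o (g • g • o) = 2 * d o (g • o)) : IsAxisPoint g o (d o (g • o)) where
  pos := hpos
  d_pow n := by
    induction n using Nat.twoStepInduction with
    | zero => simp [d_self]
    | one => simp
    | more n ih1 ih2 =>
      have f := four_point o (g ^ (n + 1) • o) (g ^ n • o) (g ^ (n + 2) • o)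
      have j1 := d_smul_smul (g ^ n) o (g • o)
      have j2 := d_smul_smul (g ^ n) o (g • g • o)
      have j3 := d_smul_smul (g ^ (n + 1)) o (g • o)
      rw [← mul_smul, ← pow_succ] at j1 j3
      rw [← mul_smul, ← mul_smul, ← pow_succ, ← pow_succ] at j2
      have c := d_comm (g ^ (n + 1) • o) (g ^ n • o)
      have t := d_triangle o (g ^ (n + 1) • o) (g ^ (n + 2) • o)
      simp only [Nat.add_assoc, Nat.reduceAdd] at j2 j3
      simp only [add_mul, one_mul] at *
      omega

theorem exists_isAxisPoint {g : G} (hg : ∀ x : X, g • x ≠ x) (x : X) :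
    ∃ (o : X) (l : ℕ), IsAxisPoint g o l := by
  have h : d x (g • x) < d x (g • g • x) := by
    by_contra! h
    obtain ⟨y, hy⟩ := exists_smul_eq h
    exact hg y hy
  obtain ⟨o, hpos, ho⟩ := exists_d_smul_smul_eq_two_mul h
  exact ⟨o, _, .of_d_smul_smul_eq hpos ho⟩

namespace IsAxisPoint

variable {g : G} {o : X} {l : ℕ} (ho : IsAxisPoint g o l)

include ho

theorem inv : IsAxisPoint g⁻¹ o l :=
  ⟨ho.pos, fun n => by rw [inv_pow, d_inv_smul, ho.d_pow]⟩

theorem isRay : IsRay l fun n => g ^ n • o :=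
  ⟨ho.pos, fun n k => by rw [pow_add, mul_smul, d_smul_smul, ho.d_pow]⟩

theorem exists_isAttracting : ∃ ξ : End X, IsAttracting g ξ := by
  obtain ⟨ξ, hξ⟩ := ho.isRay.exists_tendsToEnd
  exact ⟨ξ, .of_tendsToEnd hξ⟩

theorem gromov_pow_inv_pow (n m : ℕ) : gromov o (g ^ n • o) (g⁻¹ ^ m • o) = 0 := by
  have h1 := d_add_d_eq o (g ^ n • o) (g⁻¹ ^ m • o)
  have h2 := d_smul_smul (g ^ m) (g ^ n • o) (g⁻¹ ^ m • o)
  rw [inv_pow, smul_inv_smul, ← mul_smul, ← pow_add, d_comm, ho.d_pow, ← inv_pow, add_mul] at h2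
  rw [ho.d_pow, ho.inv.d_pow] at h1
  omega

theorem attracting_ne_repelling {ξ ξ' : End X} (hξ : IsAttracting g ξ) (hξ' : IsAttracting g⁻¹ ξ') :
    ξ ≠ ξ' := by
  intro h
  obtain ⟨M, hM⟩ := ((hξ o).sameEnd_iff (hξ' o)).2 h o 1
  have := hM M M le_rfl le_rfl
  rw [ho.gromov_pow_inv_pow] at this
  omega

theorem eq_or_eq_of_smul_eq {ξ ξ' ζ : End X} (hξ : IsAttracting g ξ) (hξ' : IsAttracting g⁻¹ ξ')
    (hζ : g • ζ = ζ) : ζ = ξ ∨ ζ = ξ' := by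
  obtain ⟨z, hz⟩ := ζ.exists_tendsToEnd
  by_contra! hcon
  obtain ⟨N, hN⟩ := hz.self.exists_gromov_lt_of_not (hξ o).self
    (fun h => hcon.1 ((hz.sameEnd_iff (hξ o)).1 h)) o
  obtain ⟨N', hN'⟩ := hz.self.exists_gromov_lt_of_not (hξ' o).self
    (fun h => hcon.2 ((hz.sameEnd_iff (hξ' o)).1 h)) o
  have hpow : g ^ (N + N') ∈ MulAction.stabilizer G ζ := pow_mem hζ _
  obtain ⟨M, hM⟩ := ((hz.smul _).sameEnd_iff hz).2 hpow o N
  set n := max M (max N N')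
  have h1 : N ≤ gromov o ((g ^ (N + N')) • z n) (z n) := hM n n (by omega) (by omega)
  have h2 : gromov o (z n) (g ^ (N + N') • o) < N := hN n (N + N') (by omega) (by omega)
  have h3 : gromov o (z n) (g⁻¹ ^ (N + N') • o) < N' := hN' n (N + N') (by omega) (by omega)
  have h4 := gromov_smul_add_gromov (g ^ (N + N')) o (z n)
  have h5 : N + N' ≤ (N + N') * l := Nat.le_mul_of_pos_right _ ho.pos
  rw [ho.d_pow, ← inv_pow] at h4
  have h6 : N ≤ gromov o (z n) (g ^ (N + N') • o) :=
    le_gromov_trans (by rwa [gromov_comm] at h1) (by omega)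
  omega

end IsAxisPoint

end Axis

section Alternative

open TreeMetric IsTreeAction
open scoped Pointwise

variable {G X : Type*} [Group G] [TreeMetric X] [MulAction G X] [IsTreeAction G X] {n₀ : ℕ}

/-- If some translate of the pair of ends of the axis is disjoint from it, then powers of `g` and of
a conjugate play ping-pong. -/
theorem IsAxisPoint.containsNonabelianFree_or_nonempty_inter {g : G} {o : X} {l : ℕ}
    (ho : IsAxisPoint g o l) {ξ ξ' : End X} (hξ : IsAttracting g ξ) (hξ' : IsAttracting g⁻¹ ξ') :
    ContainsNonabelianFree G ∨ ∀ h : G, (h • {ξ, ξ'} ∩ {ξ, ξ'} : Set (End X)).Nonempty := by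
  rw [or_iff_not_imp_right]
  intro hmeet
  push Not at hmeet
  obtain ⟨h, hh⟩ := hmeet
  have : Nonempty X := ⟨o⟩
  have hξ₂ := hξ'.conj h
  rw [← conj_inv] at hξ₂
  refine hξ.containsNonabelianFree hξ' (hξ.conj h) hξ₂ ?_
  have hne := ho.attracting_ne_repelling hξ hξ'
  simp only [smul_pair, Set.eq_empty_iff_forall_notMem, Set.mem_inter_iff, Set.mem_insert_iff,
    Set.mem_singleton_iff] at hh
  rw [pairwise_four_iff]
  have hne' := (MulAction.injective h).ne hne
  grind [hh ξ, hh ξ']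

theorem containsNonabelianFree_or_isSolvable_or_exists_forall_smul_eq [Nonempty X]
    (hstab : ∀ x y : X, x ≠ y →
      iteratedCommutator (MulAction.stabilizer G x ⊓ MulAction.stabilizer G y) n₀ = ⊥) :
    ContainsNonabelianFree G ∨ Group.IsSolvable G ∨ ∃ x : X, ∀ g : G, g • x = x := by
  by_cases hell : ∀ g : G, ∃ x : X, g • x = x
  · exact Or.inr (isSolvable_or_exists_forall_smul_eq hstab hell)
  push Not at hell
  obtain ⟨g, hg⟩ := hell
  obtain ⟨o, l, ho⟩ := exists_isAxisPoint hg (Classical.arbitrary X)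
  obtain ⟨ξ, hξ⟩ := ho.exists_isAttracting
  obtain ⟨ξ', hξ'⟩ := ho.inv.exists_isAttracting
  refine (ho.containsNonabelianFree_or_nonempty_inter hξ hξ').imp_right fun hmeet => Or.inl ?_
  obtain ⟨ζ, hζ, hcomm⟩ := exists_commutator_le_stabilizer hmeet hξ.smul_eq
    (inv_smul_eq_iff.1 hξ'.smul_eq).symm fun _ _ _ h => ho.eq_or_eq_of_smul_eq hξ hξ' h
  refine isSolvable_of_commutator_le hcomm ?_
  rcases hζ with rfl | rfl
  · exact isSolvable_stabilizer_end hstab ho.isRay (hξ o)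
  · exact isSolvable_stabilizer_end hstab ho.inv.isRay (hξ' o)

theorem StrongTitsAlternative.of_isTreeAction [Nonempty X]
    (hvert : ∀ x : X, StrongTitsAlternative (MulAction.stabilizer G x))
    (hstab : ∀ x y : X, x ≠ y →
      iteratedCommutator (MulAction.stabilizer G x ⊓ MulAction.stabilizer G y) n₀ = ⊥) :
    StrongTitsAlternative G := by
  intro Γ
  rcases containsNonabelianFree_or_isSolvable_or_exists_forall_smul_eq (G := Γ) (X := X)
    (fun x y h => iteratedCommutator_stabilizer_subgroup (hstab x y h) Γ) with h | h | ⟨x, hx⟩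
  · exact Or.inl h
  · exact Or.inr (.of_isSolvable h)
  · have hle : Γ ≤ MulAction.stabilizer G x := fun g hg => hx ⟨g, hg⟩
    exact ((hvert x).of_injective _ (Subgroup.inclusion_injective hle)).self

theorem exists_d_eq_one_and_stabilizer_le {x y : X} (hxy : x ≠ y) :
    ∃ z, d x z = 1 ∧
      MulAction.stabilizer G x ⊓ MulAction.stabilizer G y ≤ MulAction.stabilizer G z := by
  have hpos : d x y ≠ 0 := fun h => hxy (eq_of_d_eq_zero h)
  obtain ⟨z, hz1, hz2⟩ := exists_between x y 1 (by omega)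
  refine ⟨z, hz1, fun g hg => smul_eq_of_le_gromov hg.1 (x := y) ?_ ?_⟩
  · have := d_add_d_eq x z y
    omega
  · rw [MulAction.mem_stabilizer_iff.1 hg.2, gromov_self]
    omega

end Alternative

section RootedTree

/-- `P v w` says that `w` is the parent of `v` in a tree with root `o`; the decreasing function
`rank` forces every branch to end at the root. -/
structure IsRootedTree {V : Type*} (o : V) (P : V → V → Prop) (rank : V → ℕ) : Prop where
  not_rel_root : ∀ v, ¬ P o v
  exists_rel : ∀ v, v ≠ o → ∃ w, P v w
  rightUnique : Relator.RightUnique P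
  rank_lt : ∀ {v w}, P v w → rank w < rank v

namespace IsRootedTree

open Relation

variable {V : Type*}

/-- The ancestors of `v`, among them `v` itself. -/
def anc (P : V → V → Prop) (v : V) : Set V := {u | ReflTransGen P v u}

/-- The number of common ancestors of `u` and `v`. -/
noncomputable def meet (P : V → V → Prop) (u v : V) : ℕ := (anc P u ∩ anc P v).ncard

/-- The distance of `u` and `v` in the tree. -/
noncomputable def dist (P : V → V → Prop) (u v : V) : ℕ :=
  meet P u u + meet P v v - 2 * meet P u v

variable {o : V} {P : V → V → Prop} {rank : V → ℕ} {u v w : V}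

theorem meet_comm (u v : V) : meet P u v = meet P v u := by rw [meet, Set.inter_comm, meet]

theorem meet_self (v : V) : meet P v v = (anc P v).ncard := by rw [meet, Set.inter_self]

theorem self_mem_anc (v : V) : v ∈ anc P v := .refl

theorem anc_subset (h : u ∈ anc P v) : anc P u ⊆ anc P v := fun _ hx => ReflTransGen.trans h hx

theorem meet_of_mem_anc (hv : v ∈ anc P u) : meet P u v = meet P v v := by
  rw [meet_self, meet, Set.inter_eq_right.2 (anc_subset hv)]

theorem anc_eq_insert (h : IsRootedTree o P rank) (hvw : P v w) :
    anc P v = insert v (anc P w) := by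
  ext x
  rw [Set.mem_insert_iff]
  constructor
  · intro hx
    rcases hx.cases_head with rfl | ⟨w', hw', hx⟩
    · exact Or.inl rfl
    · exact Or.inr (h.rightUnique hw' hvw ▸ hx)
  · rintro (rfl | hx)
    exacts [.refl, .head hvw hx]

theorem dist_self (v : V) : dist P v v = 0 := by
  rw [dist]
  omega

theorem dist_comm (u v : V) : dist P u v = dist P v u := by
  rw [dist, dist, meet_comm u v, add_comm]

variable (h : IsRootedTree o P rank)

include h

theorem anc_root : anc P o = {o} := by
  refine Set.eq_singleton_iff_unique_mem.2 ⟨.refl, fun x hx => ?_⟩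
  rcases hx.cases_head with rfl | ⟨w, hw, -⟩
  exacts [rfl, (h.not_rel_root w hw).elim]

theorem induction {C : V → Prop} (root : C o) (step : ∀ v w, P v w → C w → C v) (v : V) : C v := by
  induction hn : rank v using Nat.strong_induction_on generalizing v with
  | _ n ih =>
    by_cases hv : v = o
    · exact hv ▸ root
    · obtain ⟨w, hw⟩ := h.exists_rel v hv
      exact step v w hw (ih _ (hn ▸ h.rank_lt hw) w rfl)

theorem root_mem_anc (v : V) : o ∈ anc P v :=
  h.induction (C := fun v => o ∈ anc P v) .refl (fun _ _ hvw hw => .head hvw hw) v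

theorem finite_anc (v : V) : (anc P v).Finite :=
  h.induction (C := fun v => (anc P v).Finite) (h.anc_root ▸ Set.finite_singleton o)
    (fun v _ hvw hw => h.anc_eq_insert hvw ▸ hw.insert v) v

theorem eq_or_rank_lt_of_mem_anc (hu : u ∈ anc P v) : u = v ∨ rank u < rank v := by
  induction hu with
  | refl => exact Or.inl rfl
  | tail _ hvw ih =>
    have := h.rank_lt hvw
    rcases ih with rfl | ih <;> right <;> omega

theorem meet_self_of_rel (hvw : P v w) : meet P v v = meet P w w + 1 := by
  rw [meet_self, meet_self, h.anc_eq_insert hvw, Set.ncard_insert_of_notMem _ (h.finite_anc w)]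
  intro hmem
  have h1 := h.rank_lt hvw
  rcases h.eq_or_rank_lt_of_mem_anc hmem with rfl | h2 <;> omega

theorem meet_le_left (u v : V) : meet P u v ≤ meet P u u := by
  rw [meet_self]
  exact Set.ncard_le_ncard Set.inter_subset_left (h.finite_anc u)

theorem dist_add (u v : V) : dist P u v + 2 * meet P u v = meet P u u + meet P v v := by
  have h1 := h.meet_le_left u v
  have h2 := h.meet_le_left v u
  rw [meet_comm] at h2
  unfold dist
  omega

/-- Both sets consist of an ancestor of `v` and all of its ancestors. -/
theorem subset_or_subset {S T : Set V} (hS : S ⊆ anc P v) (hT : T ⊆ anc P v)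
    (hS' : ∀ x ∈ S, anc P x ⊆ S) (hT' : ∀ x ∈ T, anc P x ⊆ T) : S ⊆ T ∨ T ⊆ S := by
  by_contra! hcon
  obtain ⟨⟨x, hx, hxT⟩, y, hy, hyS⟩ := hcon.imp Set.not_subset.1 Set.not_subset.1
  rcases ReflTransGen.total_of_right_unique h.rightUnique (hS hx) (hT hy) with hxy | hyx
  · exact hyS (hS' x hx hxy)
  · exact hxT (hT' y hy hyx)

theorem min_meet_le (u v w : V) : min (meet P u v) (meet P v w) ≤ meet P u w := by
  have closed (a b x : V) (hx : x ∈ anc P a ∩ anc P b) : anc P x ⊆ anc P a ∩ anc P b :=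
    Set.subset_inter (anc_subset hx.1) (anc_subset hx.2)
  have hfin := (h.finite_anc u).inter_of_left (anc P w)
  rw [min_le_iff]
  rcases h.subset_or_subset Set.inter_subset_right Set.inter_subset_left (closed u v) (closed v w)
    with h1 | h1
  · exact Or.inl (Set.ncard_le_ncard
      (Set.subset_inter Set.inter_subset_left (h1.trans Set.inter_subset_right)) hfin)
  · exact Or.inr (Set.ncard_le_ncard
      (Set.subset_inter (h1.trans Set.inter_subset_left) Set.inter_subset_right) hfin)

theorem dist_four_point (x y z w : V) :
    dist P x y + dist P z w ≤ max (dist P x z + dist P y w) (dist P x w + dist P y z) := by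
  have sp := h.dist_add
  have cm := meet_comm (P := P)
  have ul := h.min_meet_le
  have := sp x y; have := sp z w; have := sp x z; have := sp y w; have := sp x w; have := sp y z
  have := ul x z y; have := ul x w y; have := ul x y z; have := ul x w z; have := ul x y w
  have := ul x z w; have := ul y x z; have := ul y w z; have := ul y x w; have := ul y z w
  have := ul z x w; have := ul z y w
  have := cm y x; have := cm z x; have := cm w x; have := cm z y; have := cm w y; have := cm w z
  omega

theorem eq_of_dist_eq_zero (huv : dist P u v = 0) : u = v := by
  have h1 := h.dist_add u v
  have h2 := h.meet_le_left u v
  have h3 := h.meet_le_left v u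
  rw [meet_comm] at h3
  have hu : anc P u ∩ anc P v = anc P u := Set.eq_of_subset_of_ncard_le Set.inter_subset_left
    (by rw [← meet_self]; unfold meet at *; omega) (h.finite_anc u)
  have hv : anc P u ∩ anc P v = anc P v := Set.eq_of_subset_of_ncard_le Set.inter_subset_right
    (by rw [← meet_self]; unfold meet at *; omega) (h.finite_anc v)
  have huv : anc P u = anc P v := hu.symm.trans hv
  have h4 := h.eq_or_rank_lt_of_mem_anc (huv ▸ self_mem_anc u)
  have h5 := h.eq_or_rank_lt_of_mem_anc (huv ▸ self_mem_anc v)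
  rcases h4 with h4 | h4
  · exact h4
  · exact (h5.resolve_right (by omega)).symm

theorem dist_of_rel (hvw : P v w) : dist P v w = 1 := by
  have h1 := h.dist_add v w
  rw [meet_of_mem_anc (.single hvw), h.meet_self_of_rel hvw] at h1
  omega

theorem dist_of_adj (hvw : P v w ∨ P w v) : dist P v w = 1 := by
  rcases hvw with hvw | hvw
  · exact h.dist_of_rel hvw
  · rw [dist_comm, h.dist_of_rel hvw]

theorem exists_adj_dist_add_one_eq (huv : u ≠ v) :
    ∃ v', (P v' v ∨ P v v') ∧ dist P u v' + 1 = dist P u v := by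
  by_cases hv : v ∈ anc P u
  · obtain ⟨v', hv', hv'v⟩ := hv.cases_tail.resolve_left huv.symm
    have h1 := h.dist_add u v
    have h2 := h.dist_add u v'
    have h3 := h.meet_le_left u v'
    rw [meet_of_mem_anc hv] at h1
    rw [meet_of_mem_anc hv', h.meet_self_of_rel hv'v] at h2 h3
    exact ⟨v', Or.inl hv'v, by omega⟩
  · obtain ⟨v', hvv'⟩ := h.exists_rel v fun h0 => hv (h0 ▸ h.root_mem_anc u)
    have h1 := h.dist_add u v
    have h2 := h.dist_add u v'
    have h3 := h.meet_le_left u v'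
    have h4 := h.meet_le_left v' u
    have h5 : meet P u v = meet P u v' := by
      rw [meet, h.anc_eq_insert hvv', Set.inter_insert_of_notMem hv, meet]
    rw [h5, h.meet_self_of_rel hvv'] at h1
    rw [meet_comm] at h4
    exact ⟨v', Or.inr hvv', by omega⟩

theorem dist_triangle (x y z : V) : dist P x z ≤ dist P x y + dist P y z := by
  have h1 := h.dist_four_point x z y y
  have h2 := dist_self (P := P) y
  have h3 := dist_comm (P := P) y z
  omega

theorem exists_dist_eq (x y : V) (k : ℕ) (hk : k ≤ dist P x y) :
    ∃ z, dist P x z = k ∧ dist P z y = dist P x y - k := by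
  induction hn : dist P x y generalizing y with
  | zero => exact ⟨x, by rw [dist_self]; omega, by omega⟩
  | succ n ih =>
    rcases hk.eq_or_lt with hk | hk
    · exact ⟨y, hk.symm, by rw [dist_self]; omega⟩
    have hxy : x ≠ y := by
      rintro rfl
      simp [dist_self] at hn
    obtain ⟨y', hadj, h1⟩ := h.exists_adj_dist_add_one_eq hxy
    obtain ⟨z, h3, h4⟩ := ih y' (by omega) (by omega)
    have h5 := h.dist_of_adj hadj
    have h6 := h.dist_triangle z y' y
    have h7 := h.dist_triangle x z y
    exact ⟨z, h3, by omega⟩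

/-- The vertices of a rooted tree with their distance in the tree. -/
noncomputable abbrev treeMetric : TreeMetric V where
  d := dist P
  d_self := dist_self
  eq_of_d_eq_zero := h.eq_of_dist_eq_zero
  d_comm := dist_comm
  four_point := h.dist_four_point
  even_perimeter x y z := by
    have h1 := h.dist_add x y
    have h2 := h.dist_add y z
    have h3 := h.dist_add x z
    rw [Nat.even_iff]
    omega
  exists_between := h.exists_dist_eq

theorem dist_map_le {f : V → V} (hf : ∀ v w, P v w → P (f v) (f w) ∨ P (f w) (f v)) (u v : V) :
    dist P (f u) (f v) ≤ dist P u v := by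
  induction hn : dist P u v generalizing v with
  | zero => rw [h.eq_of_dist_eq_zero hn, dist_self]
  | succ n ih =>
    have huv : u ≠ v := by
      rintro rfl
      simp [dist_self] at hn
    obtain ⟨v', hadj, h1⟩ := h.exists_adj_dist_add_one_eq huv
    have h2 := ih v' (by omega)
    have h3 : dist P (f v') (f v) = 1 :=
      h.dist_of_adj (hadj.elim (hf v' v) fun hvv' => (hf v v' hvv').symm)
    have h4 := h.dist_triangle (f u) (f v') (f v)
    omega

theorem even_dist_iff {col : V → Bool} (hcol : ∀ v w, P v w → col v = !col w) (u v : V) :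
    Even (dist P u v) ↔ col u = col v := by
  have even_meet (v : V) : Even (meet P v v) ↔ col v ≠ col o := by
    refine h.induction (C := fun v => Even (meet P v v) ↔ col v ≠ col o) ?_ (fun v w hvw hw => ?_) v
    · simp [meet_self, h.anc_root]
    · rw [h.meet_self_of_rel hvw, Nat.even_add_one, hw, hcol v w hvw]
      cases col w <;> cases col o <;> simp
  have h1 : Even (dist P u v) ↔ Even (meet P u u + meet P v v) := by
    rw [← h.dist_add u v, Nat.even_add]
    simp
  rw [h1, Nat.even_add, even_meet, even_meet]
  cases col u <;> cases col v <;> cases col o <;> simp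

theorem isTreeAction {G : Type*} [Group G] [MulAction G V]
    (hsmul : ∀ (g : G) v w, P v w → P (g • v) (g • w) ∨ P (g • w) (g • v))
    {col : V → Bool} (hcol : ∀ v w, P v w → col v = !col w)
    (hcol' : ∀ (g : G) v, col (g • v) = col v) :
    letI := h.treeMetric
    IsTreeAction G V :=
  letI := h.treeMetric
  { d_smul_smul := fun g x y => by
      have hinv := h.dist_map_le (hsmul g⁻¹) (g • x) (g • y)
      rw [inv_smul_smul, inv_smul_smul] at hinv
      exact le_antisymm (h.dist_map_le (hsmul g) x y) hinv
    even_d_smul := fun g x => (h.even_dist_iff hcol x (g • x)).2 (hcol' g x).symm }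

end IsRootedTree

end RootedTree

/-- Degree functions on a group exhibiting it as the amalgamated product of two subgroups `A` and
`T`: `D` and `E` are defined on the cosets of `A` and of `T`, and every coset of `A` (except `A`
itself) is adjacent to exactly one coset of `T` of smaller degree, and conversely. -/
structure IsDescent {G : Type*} [Group G] (A T : Subgroup G) (D E : G → ℕ) : Prop where
  D_mul : ∀ g, ∀ a ∈ A, D (g * a) = D g
  E_mul : ∀ g, ∀ t ∈ T, E (g * t) = E g
  E_le_D : ∀ g, E g ≤ D g
  D_le_E : ∀ a ∈ A, D a ≤ E a
  mem_T : ∀ g, ∀ a ∈ A, E g < D g → E (g * a) < D g → a ∈ T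
  mem_A : ∀ g, ∀ t ∈ T, D g = E g → D (g * t) = E g → t ∈ A
  sup_eq_top : A ⊔ T = ⊤

theorem stabilizer_quotient_mk {G : Type*} [Group G] (H : Subgroup G) (g : G) :
    MulAction.stabilizer G (g : G ⧸ H) = H.map (MulAut.conj g).toMonoidHom := by
  conv_rhs => rw [← MulAction.stabilizer_quotient H]
  rw [← MulAction.stabilizer_smul_eq_stabilizer_map_conj, MulAction.Quotient.smul_mk, smul_eq_mul,
    mul_one]

namespace IsDescent

variable {G : Type*} [Group G] {A T : Subgroup G} {D E : G → ℕ}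

theorem lt_D_mul (h : IsDescent A T D E) {g t : G} (ht : t ∈ T) (hg : D g = E g) (htA : t ∉ A) :
    E g < D (g * t) := by
  have h1 := h.E_mul g t ht
  have h2 := h.E_le_D (g * t)
  have h3 : ¬ D (g * t) = E g := fun h' => htA (h.mem_A g t ht hg h')
  omega

theorem D_eq_E_mul (h : IsDescent A T D E) {g t a : G} (ht : t ∈ T) (ha : a ∈ A) (hg : D g = E g)
    (htA : t ∉ A) (haT : a ∉ T) : D (g * t * a) = E (g * t * a) := by
  have h1 := h.lt_D_mul ht hg htA
  have h2 := h.E_mul g t ht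
  have h3 : ¬ E (g * t * a) < D (g * t) := fun h' => haT (h.mem_T (g * t) a ha (by omega) h')
  have h4 := h.E_le_D (g * t * a)
  have h5 := h.D_mul (g * t) a ha
  omega

/-- The reduced words `a₀ t₁ a₁ ⋯ tₙ aₙ` of the amalgamated product: no `tᵢ` lies in `A`, and the
condition on the degrees takes the place of `aᵢ ∉ T` for `0 < i < n`. -/
inductive IsReduced (A T : Subgroup G) (D E : G → ℕ) : G → Prop
  | of_mem {a : G} (ha : a ∈ A) : IsReduced A T D E a
  | mul {x t a : G} (hx : IsReduced A T D E x) (hDE : D x = E x) (ht : t ∈ T) (htA : t ∉ A)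
      (ha : a ∈ A) : IsReduced A T D E (x * t * a)

theorem IsReduced.mul_mem_left {g a : G} (hg : IsReduced A T D E g) (ha : a ∈ A) :
    IsReduced A T D E (g * a) := by
  cases hg with
  | of_mem hg => exact .of_mem (mul_mem hg ha)
  | mul hx hDE ht htA hb => rw [mul_assoc _ _ a]; exact .mul hx hDE ht htA (mul_mem hb ha)

theorem IsReduced.mul_of_eq {g t : G} (hg : IsReduced A T D E g) (hDE : D g = E g) (ht : t ∈ T) :
    IsReduced A T D E (g * t) := by
  by_cases htA : t ∈ A
  · exact hg.mul_mem_left htA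
  · rw [← mul_one (g * t)]
    exact .mul hg hDE ht htA (one_mem _)

theorem IsReduced.mul_mem_right (h : IsDescent A T D E) {g t : G} (hg : IsReduced A T D E g)
    (ht : t ∈ T) : IsReduced A T D E (g * t) := by
  cases hg with
  | of_mem hg => exact (IsReduced.of_mem hg).mul_of_eq ((h.D_le_E g hg).antisymm (h.E_le_D g)) ht
  | @mul x s a hx hDE hs hsA ha =>
    by_cases haT : a ∈ T
    · rw [mul_assoc x, mul_assoc x]
      exact hx.mul_of_eq hDE (mul_mem (mul_mem hs haT) ht)
    · exact (IsReduced.mul hx hDE hs hsA ha).mul_of_eq (h.D_eq_E_mul hs ha hDE hsA haT) ht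

theorem isReduced (h : IsDescent A T D E) (g : G) : IsReduced A T D E g := by
  have hg : g ∈ Subgroup.closure (A ∪ T : Set G) := by
    rw [Subgroup.closure_union, Subgroup.closure_eq, Subgroup.closure_eq, h.sup_eq_top]
    exact Subgroup.mem_top g
  have hmul : ∀ x y, y ∈ (A ∪ T : Set G) → IsReduced A T D E x → IsReduced A T D E (x * y) := by
    rintro x y (hy | hy) hx
    · exact hx.mul_mem_left hy
    · exact hx.mul_mem_right h hy
  induction hg using Subgroup.closure_induction_right with
  | one => exact .of_mem (one_mem _)
  | mul_right x _ y hy hx => exact hmul x y hy hx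
  | mul_inv_cancel x _ y hy hx =>
    exact hmul x y⁻¹ (hy.imp (fun h => A.inv_mem h) fun h => T.inv_mem h) hx

theorem exists_E_lt (h : IsDescent A T D E) {g : G} (hg : g ∉ A) : ∃ a ∈ A, E (g * a) < D g := by
  cases h.isReduced g with
  | of_mem hg' => exact (hg hg').elim
  | @mul x t a _ hx ht htA ha =>
    refine ⟨a⁻¹, inv_mem ha, ?_⟩
    rw [mul_inv_cancel_right, h.D_mul _ a ha, h.E_mul x t ht]
    exact h.lt_D_mul ht hx htA

theorem exists_D_le (h : IsDescent A T D E) (g : G) : ∃ t ∈ T, D (g * t) ≤ E g := by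
  cases h.isReduced g with
  | of_mem hg => exact ⟨1, one_mem _, by rw [mul_one]; exact h.D_le_E g hg⟩
  | @mul x t a _ hx ht htA ha =>
    by_cases haT : a ∈ T
    · refine ⟨a⁻¹ * t⁻¹, mul_mem (inv_mem haT) (inv_mem ht), ?_⟩
      rw [h.E_mul _ a haT, h.E_mul x t ht, ← hx]
      refine le_of_eq (congrArg D ?_)
      group
    · exact ⟨1, one_mem _, by rw [mul_one]; exact (h.D_eq_E_mul ht ha hx htA haT).le⟩

theorem D_eq_of_mk_eq (h : IsDescent A T D E) {g g' : G} (hg : (g : G ⧸ A) = g') : D g = D g' := by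
  rw [← h.D_mul g _ (QuotientGroup.eq.1 hg), mul_inv_cancel_left]

theorem E_eq_of_mk_eq (h : IsDescent A T D E) {g g' : G} (hg : (g : G ⧸ T) = g') : E g = E g' := by
  rw [← h.E_mul g _ (QuotientGroup.eq.1 hg), mul_inv_cancel_left]

/-- The coset `gA` is a child of `gT` if `E g < D g`, and the parent of `gT` otherwise. -/
inductive Parent (A T : Subgroup G) (D E : G → ℕ) : (G ⧸ A) ⊕ (G ⧸ T) → (G ⧸ A) ⊕ (G ⧸ T) → Prop
  | of_lt (g : G) (hg : E g < D g) : Parent A T D E (.inl g) (.inr g)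
  | of_eq (g : G) (hg : D g = E g) : Parent A T D E (.inr g) (.inl g)

/-- The degree of a coset, doubled so that the cosets of `T` fit in between those of `A`. -/
def rank (h : IsDescent A T D E) : (G ⧸ A) ⊕ (G ⧸ T) → ℕ :=
  Sum.elim
    (Quotient.lift (fun g => 2 * D g) fun _ _ hg => by rw [h.D_eq_of_mk_eq (Quotient.sound hg)])
    (Quotient.lift (fun g => 2 * E g + 1) fun _ _ hg => by rw [h.E_eq_of_mk_eq (Quotient.sound hg)])

theorem rightUnique_parent (h : IsDescent A T D E) : Relator.RightUnique (Parent A T D E) := by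
  intro u v w huv huw
  rcases huv with ⟨g, hg⟩ | ⟨g, hg⟩
  · generalize hu : (Sum.inl (g : G ⧸ A) : (G ⧸ A) ⊕ (G ⧸ T)) = u at huw
    rcases huw with ⟨g', hg'⟩ | ⟨g', -⟩
    · have hgg' := QuotientGroup.eq.1 (Sum.inl.inj hu)
      refine congrArg Sum.inr (QuotientGroup.eq.2 (h.mem_T g _ hgg' hg ?_))
      rwa [mul_inv_cancel_left, h.D_eq_of_mk_eq (Sum.inl.inj hu)]
    · cases hu
  · generalize hu : (Sum.inr (g : G ⧸ T) : (G ⧸ A) ⊕ (G ⧸ T)) = u at huw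
    rcases huw with ⟨g', -⟩ | ⟨g', hg'⟩
    · cases hu
    · have hgg' := QuotientGroup.eq.1 (Sum.inr.inj hu)
      refine congrArg Sum.inl (QuotientGroup.eq.2 (h.mem_A g _ hgg' hg ?_))
      rwa [mul_inv_cancel_left, h.E_eq_of_mk_eq (Sum.inr.inj hu)]

theorem exists_parent (h : IsDescent A T D E) (v : (G ⧸ A) ⊕ (G ⧸ T)) (hv : v ≠ .inl (1 : G)) :
    ∃ w, Parent A T D E v w := by
  rcases v with q | q <;> obtain ⟨g, rfl⟩ := QuotientGroup.mk_surjective q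
  · have hg : g ∉ A := fun hg => hv (congrArg Sum.inl (QuotientGroup.eq.2 (by simpa using hg)))
    obtain ⟨a, ha, hlt⟩ := h.exists_E_lt hg
    rw [← QuotientGroup.mk_mul_of_mem g ha]
    exact ⟨_, .of_lt _ (by rwa [h.D_mul g a ha])⟩
  · obtain ⟨t, ht, hle⟩ := h.exists_D_le g
    rw [← QuotientGroup.mk_mul_of_mem g ht]
    exact ⟨_, .of_eq _ ((hle.trans_eq (h.E_mul g t ht).symm).antisymm (h.E_le_D _))⟩

theorem not_parent_root (h : IsDescent A T D E) (v : (G ⧸ A) ⊕ (G ⧸ T)) :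
    ¬ Parent A T D E (.inl (1 : G)) v := by
  generalize hu : (Sum.inl ((1 : G) : G ⧸ A) : (G ⧸ A) ⊕ (G ⧸ T)) = u
  rintro (⟨g, hg⟩ | ⟨g, -⟩)
  · have hgA : g ∈ A := by simpa using QuotientGroup.eq.1 (Sum.inl.inj hu)
    exact (h.D_le_E g hgA).not_gt hg
  · cases hu

theorem isRootedTree (h : IsDescent A T D E) :
    IsRootedTree (.inl ((1 : G) : G ⧸ A)) (Parent A T D E) h.rank where
  not_rel_root := h.not_parent_root
  exists_rel := h.exists_parent
  rightUnique := h.rightUnique_parent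
  rank_lt := by
    rintro _ _ (⟨g, hg⟩ | ⟨g, hg⟩)
    · change 2 * E g + 1 < 2 * D g
      omega
    · change 2 * D g < 2 * E g + 1
      omega

theorem isLeft_of_parent {v w : (G ⧸ A) ⊕ (G ⧸ T)} (hvw : Parent A T D E v w) :
    v.isLeft = !w.isLeft := by
  cases hvw <;> rfl

theorem parent_smul (h : IsDescent A T D E) (g : G) {v w : (G ⧸ A) ⊕ (G ⧸ T)}
    (hvw : Parent A T D E v w) :
    Parent A T D E (g • v) (g • w) ∨ Parent A T D E (g • w) (g • v) := by
  have hadj (x : G) : Parent A T D E (.inl x) (.inr x) ∨ Parent A T D E (.inr x) (.inl x) :=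
    (h.E_le_D x).lt_or_eq.imp (.of_lt x) fun hx => .of_eq x hx.symm
  rcases hvw with ⟨x, -⟩ | ⟨x, -⟩
  · exact hadj (g * x)
  · exact (hadj (g * x)).symm

theorem iteratedCommutator_stabilizer_inr {n : ℕ} (hT : iteratedCommutator T n = ⊥) (q : G ⧸ T) :
    iteratedCommutator (MulAction.stabilizer G (.inr q : (G ⧸ A) ⊕ (G ⧸ T))) n = ⊥ := by
  have hq : MulAction.stabilizer G (.inr q : (G ⧸ A) ⊕ (G ⧸ T)) = MulAction.stabilizer G q := by
    ext g
    rw [MulAction.mem_stabilizer_iff, MulAction.mem_stabilizer_iff, Sum.smul_inr, Sum.inr.injEq]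
  obtain ⟨g, rfl⟩ := QuotientGroup.mk_surjective q
  rw [hq, stabilizer_quotient_mk, ← map_iteratedCommutator, hT, Subgroup.map_bot]

theorem strongTitsAlternative_stabilizer_inl (hA : StrongTitsAlternative A) (q : G ⧸ A) :
    StrongTitsAlternative (MulAction.stabilizer G (.inl q : (G ⧸ A) ⊕ (G ⧸ T))) := by
  have hq : MulAction.stabilizer G (.inl q : (G ⧸ A) ⊕ (G ⧸ T)) = MulAction.stabilizer G q := by
    ext g
    rw [MulAction.mem_stabilizer_iff, MulAction.mem_stabilizer_iff, Sum.smul_inl, Sum.inl.injEq]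
  obtain ⟨g, rfl⟩ := QuotientGroup.mk_surjective q
  rw [hq, stabilizer_quotient_mk]
  let e := A.equivMapOfInjective (MulAut.conj g).toMonoidHom (MulAut.conj g).injective
  exact hA.of_injective e.symm.toMonoidHom e.symm.injective

theorem strongTitsAlternative (h : IsDescent A T D E) (hA : StrongTitsAlternative A)
    (hT : Group.IsSolvable T) : StrongTitsAlternative G := by
  let := h.isRootedTree.treeMetric
  have hcol (v w : (G ⧸ A) ⊕ (G ⧸ T)) (hvw : Parent A T D E v w) := isLeft_of_parent hvw
  have : IsTreeAction G ((G ⧸ A) ⊕ (G ⧸ T)) :=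
    h.isRootedTree.isTreeAction (fun g _ _ => h.parent_smul g) hcol fun _ v => by cases v <;> rfl
  have : Nonempty ((G ⧸ A) ⊕ (G ⧸ T)) := ⟨.inl (1 : G)⟩
  obtain ⟨n, hn⟩ := isSolvable_iff_iteratedCommutator.1 hT
  have hstabT := iteratedCommutator_stabilizer_inr (A := A) hn
  refine .of_isTreeAction (X := (G ⧸ A) ⊕ (G ⧸ T)) (n₀ := n) ?_ ?_
  · rintro (q | q)
    · exact strongTitsAlternative_stabilizer_inl hA q
    · have : Group.IsSolvable (MulAction.stabilizer G (.inr q : (G ⧸ A) ⊕ (G ⧸ T))) :=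
        isSolvable_iff_iteratedCommutator.2 ⟨n, hstabT q⟩
      exact fun _ => Or.inr (.of_isSolvable inferInstance)
  · rintro (x | x) (y | y) hxy
    · obtain ⟨z, hz, hle⟩ := exists_d_eq_one_and_stabilizer_le (G := G) hxy
      rcases z with z | z
      · have heven := (h.isRootedTree.even_dist_iff hcol (.inl x) (.inl z)).2 rfl
        exact absurd (hz ▸ heven) Nat.not_even_one
      · exact iteratedCommutator_eq_bot_of_le hle (hstabT z)
    · exact iteratedCommutator_eq_bot_of_le inf_le_right (hstabT y)
    · exact iteratedCommutator_eq_bot_of_le inf_le_left (hstabT x)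
    · exact iteratedCommutator_eq_bot_of_le inf_le_left (hstabT x)

end IsDescent
/-! ### The action of `SL₂` on the projective line -/

section SL2

open Matrix Matrix.SpecialLinearGroup OnePoint
open scoped MatrixGroups Pointwise

section Entries

variable {R : Type*} [CommRing R]

theorem SL2_mul_apply (A B : SL(2, R)) (i j : Fin 2) :
    (A * B) i j = A i 0 * B 0 j + A i 1 * B 1 j := by
  change (A.1 * B.1) i j = _
  rw [Matrix.mul_apply, Fin.sum_univ_two]

theorem SL2_ext {A B : SL(2, R)} (h00 : A 0 0 = B 0 0) (h01 : A 0 1 = B 0 1)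
    (h10 : A 1 0 = B 1 0) (h11 : A 1 1 = B 1 1) : A = B := by
  ext i j
  fin_cases i <;> fin_cases j
  exacts [h00, h01, h10, h11]

theorem SL2_det (A : SL(2, R)) : A 0 0 * A 1 1 - A 0 1 * A 1 0 = 1 := by
  rw [← Matrix.det_fin_two, A.det_coe]

theorem SL2_inv_apply (A : SL(2, R)) :
    A⁻¹ 0 0 = A 1 1 ∧ A⁻¹ 0 1 = -A 0 1 ∧ A⁻¹ 1 0 = -A 1 0 ∧ A⁻¹ 1 1 = A 0 0 := by
  simp [SL2_inv_expl]

/-- The homomorphism `z ↦ diag(z, z⁻¹)` from the units of a ring onto the diagonal torus of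
`SL₂`. -/
def diagSL : Rˣ →* SL(2, R) where
  toFun z := ⟨!![(z : R), 0; 0, ((z⁻¹ : Rˣ) : R)], by simp [Matrix.det_fin_two]⟩
  map_one' := by apply SL2_ext <;> simp
  map_mul' z w := Subtype.ext (Eq.trans (by simp [mul_comm]) (Matrix.mul_fin_two ..).symm)

theorem diagSL_apply (z : Rˣ) : diagSL z 0 0 = z ∧ diagSL z 0 1 = 0 ∧ diagSL z 1 0 = 0 ∧
    diagSL z 1 1 = ((z⁻¹ : Rˣ) : R) :=
  ⟨rfl, rfl, rfl, rfl⟩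

theorem diagSL_mul_apply_zero (z : Rˣ) (A : SL(2, R)) (j : Fin 2) :
    (diagSL z * A) 0 j = z * A 0 j := by
  simp [SL2_mul_apply, diagSL_apply]

theorem diagSL_mul_apply_one (z : Rˣ) (A : SL(2, R)) (j : Fin 2) :
    (diagSL z * A) 1 j = ((z⁻¹ : Rˣ) : R) * A 1 j := by
  simp [SL2_mul_apply, diagSL_apply]

/-- A matrix in `SL₂` none of whose entries vanish. Over a field this means that it moves both
fixed points `∞` and `0` of the diagonal torus off `{∞, 0}`. -/
def IsGeneric (A : SL(2, R)) : Prop := A 0 0 ≠ 0 ∧ A 0 1 ≠ 0 ∧ A 1 0 ≠ 0 ∧ A 1 1 ≠ 0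

end Entries

section Action

variable {K : Type*} [Field K] [DecidableEq K]

/-- `SL₂` acts on the projective line through `GL₂`. -/
instance onePointSL2MulAction : MulAction SL(2, K) (OnePoint K) := MulAction.compHom _ toGL

theorem SL2_smul_infty (A : SL(2, K)) :
    A • (∞ : OnePoint K) = if A 1 0 = 0 then ∞ else ((A 0 0 / A 1 0 : K) : OnePoint K) :=
  smul_infty_eq_ite (toGL A)

theorem SL2_smul_coe (A : SL(2, K)) (x : K) : A • (x : OnePoint K) =
    if A 1 0 * x + A 1 1 = 0 then ∞
    else (((A 0 0 * x + A 0 1) / (A 1 0 * x + A 1 1) : K) : OnePoint K) :=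
  smul_some_eq_ite (g := toGL A)

theorem SL2_smul_infty_eq_self_iff {A : SL(2, K)} : A • (∞ : OnePoint K) = ∞ ↔ A 1 0 = 0 :=
  smul_infty_eq_self_iff (g := toGL A)

theorem diagSL_smul_infty (z : Kˣ) : diagSL z • (∞ : OnePoint K) = ∞ :=
  SL2_smul_infty_eq_self_iff.2 rfl

theorem diagSL_smul_coe (z : Kˣ) (x : K) :
    diagSL z • (x : OnePoint K) = ((z ^ 2 * x : K) : OnePoint K) := by
  simp [SL2_smul_coe, diagSL_apply, div_eq_mul_inv, sq, mul_right_comm]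

theorem isGeneric_iff {A : SL(2, K)} :
    IsGeneric A ↔ ¬ (A • {∞, ↑(0 : K)} ∩ {∞, ↑(0 : K)} : Set (OnePoint K)).Nonempty := by
  simp only [IsGeneric, Set.Nonempty, smul_pair, SL2_smul_infty, SL2_smul_coe]
  have := SL2_det A
  split_ifs <;> simp_all

instance : MulAction.IsPretransitive SL(2, K) (OnePoint K) := by
  refine MulAction.IsPretransitive.of_orbit (x₀ := ∞) fun y => ?_
  induction y with
  | infty => exact ⟨1, one_smul ..⟩
  | coe x =>
    obtain ⟨A, h00, h10⟩ := (isCoprime_one_right (x := x)).exists_SL2_col 0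
    exact ⟨A, by simp [SL2_smul_infty, h00, h10]⟩

theorem isSolvable_stabilizer_infty :
    Group.IsSolvable (MulAction.stabilizer SL(2, K) (∞ : OnePoint K)) := by
  have h10 (A : MulAction.stabilizer SL(2, K) (∞ : OnePoint K)) : A.1 1 0 = 0 :=
    SL2_smul_infty_eq_self_iff.1 A.2
  let f : MulAction.stabilizer SL(2, K) (∞ : OnePoint K) →* K :=
    { toFun A := A.1 0 0
      map_one' := rfl
      map_mul' A B := by simp [SL2_mul_apply, h10 B] }
  refine isSolvable_of_commutator_le (K := f.toHomUnits.ker)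
    (Abelianization.commutator_subset_ker _) (Group.isSolvable_of_comm fun ⟨A, hA⟩ ⟨B, hB⟩ => ?_)
  have hdiag {A} (hA : A ∈ f.toHomUnits.ker) : A.1 0 0 = 1 ∧ A.1 1 1 = 1 := by
    have h00 : A.1 0 0 = 1 := congrArg Units.val hA
    exact ⟨h00, by simpa [h00, h10 A] using SL2_det A.1⟩
  refine Subtype.ext (Subtype.ext (SL2_ext ?_ ?_ ?_ ?_)) <;>
    simp [SL2_mul_apply, h10, hdiag hA, hdiag hB, add_comm]

theorem isSolvable_stabilizer (x : OnePoint K) :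
    Group.IsSolvable (MulAction.stabilizer SL(2, K) x) := by
  obtain ⟨A, rfl⟩ := MulAction.exists_smul_eq SL(2, K) ∞ x
  have := isSolvable_stabilizer_infty (K := K)
  exact Group.isSolvable_of_isSolvable_injective
    (f := (MulAction.stabilizerEquivStabilizer (g := A⁻¹) (inv_smul_smul A ∞).symm).toMonoidHom)
    (MulEquiv.injective _)

theorem eq_of_diagSL_smul_eq {z : Kˣ} (hz : (z : K) ^ 2 ≠ 1) {x : OnePoint K}
    (hx : diagSL z • x = x) : x ∈ ({∞, ↑(0 : K)} : Set (OnePoint K)) := by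
  induction x with
  | infty => simp
  | coe x =>
    rw [diagSL_smul_coe, OnePoint.coe_eq_coe, mul_left_eq_self₀] at hx
    simp [hx.resolve_left hz]

theorem isSolvable_stabilizer_subgroup (Γ : Subgroup SL(2, K)) (x : OnePoint K) :
    Group.IsSolvable (MulAction.stabilizer Γ x) := by
  have := isSolvable_stabilizer x
  exact Group.isSolvable_of_isSolvable_injective
    (f := Γ.subtype.subgroupComap (MulAction.stabilizer SL(2, K) x))
    fun A B h => Subtype.ext (Subtype.ext (congrArg (fun C => C.1) h))

theorem isSolvable_of_forall_smul_eq {Γ : Subgroup SL(2, K)} {x : OnePoint K}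
    (hx : ∀ h ∈ Γ, h • x = x) : Group.IsSolvable Γ :=
  isSolvable_of_commutator_le (K := MulAction.stabilizer Γ x) (fun h _ => hx h h.2)
    (isSolvable_stabilizer_subgroup Γ x)

theorem smul_eq_self_of_eq_scalar {A : SL(2, K)} (h10 : A 1 0 = 0) (h01 : A 0 1 = 0)
    (h : A 0 0 = A 1 1) (x : OnePoint K) : A • x = x := by
  have hdet : A 1 1 ≠ 0 := fun h11 => by simpa [h10, h11] using SL2_det A
  induction x with
  | infty => exact SL2_smul_infty_eq_self_iff.2 h10
  | coe x => simp [SL2_smul_coe, h10, h01, h, hdet]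

theorem exists_smul_eq_self [IsAlgClosed K] (A : SL(2, K)) : ∃ x : OnePoint K, A • x = x := by
  by_cases h10 : A 1 0 = 0
  · exact ⟨∞, SL2_smul_infty_eq_self_iff.2 h10⟩
  obtain ⟨c, hc⟩ := IsAlgClosed.exists_aeval_eq_zero K (toGL A).fixpointPolynomial <| by
    have hdeg := Polynomial.degree_quadratic (a := A 1 0) (b := A 1 1 - A 0 0) (c := -A 0 1) h10
    rw [Polynomial.C_neg, ← sub_eq_add_neg] at hdeg
    exact hdeg.trans_ne two_ne_zero
  exact ⟨c, GeneralLinearGroup.fixpointPolynomial_aeval_eq_zero_iff.1 hc⟩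

theorem exists_forall_smul_eq_self_iff (x : OnePoint K) :
    ∃ B : SL(2, K), ∀ A : SL(2, K), A • x = x ↔ (B⁻¹ * A * B) 1 0 = 0 := by
  obtain ⟨B, rfl⟩ := MulAction.exists_smul_eq SL(2, K) ∞ x
  refine ⟨B, fun A => ?_⟩
  rw [← SL2_smul_infty_eq_self_iff, mul_smul, mul_smul, inv_smul_eq_iff]

end Action

variable {K : Type*} [Field K]

theorem isSolvable_of_not_isGeneric {Γ : Subgroup SL(2, K)} {z : Kˣ} (hz : (z : K) ^ 2 ≠ 1)
    (hg : diagSL z ∈ Γ) (hΓ : ∀ h ∈ Γ, ¬ IsGeneric h) : Group.IsSolvable Γ := by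
  classical
  obtain ⟨x, -, hx⟩ := exists_commutator_le_stabilizer (G := Γ) (p := (∞ : OnePoint K))
    (q := ↑(0 : K)) (g := ⟨_, hg⟩) (fun h => not_not.1 (isGeneric_iff.not.1 (hΓ h h.2)))
    (diagSL_smul_infty z) ((diagSL_smul_coe z 0).trans (by rw [mul_zero]))
    fun h x _ hx => eq_of_diagSL_smul_eq hz hx
  exact isSolvable_of_commutator_le hx (isSolvable_stabilizer_subgroup Γ x)

theorem SL2_trace {R : Type*} [CommRing R] (A : SL(2, R)) : A.1.trace = A 0 0 + A 1 1 :=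
  Matrix.trace_fin_two _

theorem trace_inv_mul_mul {R : Type*} [CommRing R] (A B : SL(2, R)) :
    (B⁻¹ * A * B).1.trace = A.1.trace := by
  change ((B⁻¹ * A).1 * B.1).trace = _
  rw [Matrix.trace_mul_comm]
  change (B * (B⁻¹ * A)).1.trace = _
  rw [mul_inv_cancel_left]

/-- When `A` is unipotent, the trace of `A ^ n * B` is affine in `n` with slope `A 0 1 * B 1 0`,
which has to vanish if the trace takes only the values `2` and `-2`. -/
theorem apply_eq_zero_of_trace_sq [CharZero K] {A B : SL(2, K)} (hA10 : A 1 0 = 0)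
    (hA01 : A 0 1 ≠ 0) (hA : A.1.trace ^ 2 = 4) (hB : B.1.trace ^ 2 = 4)
    (hAB : (A * B).1.trace ^ 2 = 4) (hAAB : (A * (A * B)).1.trace ^ 2 = 4) : B 1 0 = 0 := by
  have hdet : A 0 0 * A 1 1 = 1 := by simpa [hA10] using SL2_det A
  rw [SL2_trace] at hA hB hAB hAAB
  have hdiag : A 0 0 = A 1 1 := by
    refine sub_eq_zero.1 ((pow_eq_zero_iff two_ne_zero).1 ?_)
    linear_combination hA - 4 * hdet
  simp only [SL2_mul_apply, hA10, ← hdiag] at hAB hAAB hdet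
  have hslope : (A 0 0 * A 0 1 * B 1 0) ^ 2 = 0 := by
    apply mul_left_cancel₀ (two_ne_zero' K)
    linear_combination hAAB - 2 * hAB + hB - ((A 0 0 * A 0 0 - 1) * (B 0 0 + B 1 1) ^ 2 +
      4 * (B 0 0 + B 1 1) * (A 0 0 * A 0 1 * B 1 0) + 2 * (A 0 1 * B 1 0) ^ 2) * hdet
  simpa [left_ne_zero_of_mul_eq_one hdet, hA01] using hslope

theorem isSolvable_of_trace_sq_eq_four [CharZero K] [IsAlgClosed K] {Γ : Subgroup SL(2, K)}
    (hΓ : ∀ h ∈ Γ, h.1.trace ^ 2 = 4) : Group.IsSolvable Γ := by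
  classical
  by_cases hup : ∀ h ∈ Γ, h • (∞ : OnePoint K) = ∞
  · exact isSolvable_of_forall_smul_eq hup
  push Not at hup
  obtain ⟨g, hg, hg_infty⟩ := hup
  obtain ⟨x, hx⟩ := exists_smul_eq_self g
  obtain ⟨B, hB⟩ := exists_forall_smul_eq_self_iff x
  have htrace {h} (hh : h ∈ Γ) : (B⁻¹ * h * B).1.trace ^ 2 = 4 := by
    rw [trace_inv_mul_mul, hΓ h hh]
  have hg10 := (hB g).1 hx
  have hdet : (B⁻¹ * g * B) 0 0 * (B⁻¹ * g * B) 1 1 = 1 := by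
    simpa [hg10] using SL2_det (B⁻¹ * g * B)
  have hg01 : (B⁻¹ * g * B) 0 1 ≠ 0 := fun h01 => by
    have htr := htrace hg
    rw [SL2_trace] at htr
    have hscalar := smul_eq_self_of_eq_scalar hg10 h01 (sub_eq_zero.1
      ((pow_eq_zero_iff two_ne_zero).1 (by linear_combination htr - 4 * hdet))) (B⁻¹ • ∞)
    rw [mul_smul, smul_inv_smul, mul_smul, smul_left_cancel_iff] at hscalar
    exact hg_infty hscalar
  refine isSolvable_of_forall_smul_eq (x := x) fun h hh => (hB h).2 ?_
  refine apply_eq_zero_of_trace_sq hg10 hg01 (htrace hg) (htrace hh) ?_ ?_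
  · simpa [mul_assoc] using htrace (mul_mem hg hh)
  · simpa [mul_assoc] using htrace (mul_mem hg (mul_mem hg hh))

theorem eq_of_trace_eq {z : Kˣ} (hz : (z : K) ^ 2 ≠ 1) {k : SL(2, K)} (hk : IsGeneric k)
    {A B : SL(2, K)} (h1 : A.1.trace = B.1.trace)
    (h2 : (diagSL z * A).1.trace = (diagSL z * B).1.trace)
    (h3 : (A * k).1.trace = (B * k).1.trace)
    (h4 : (diagSL z * (A * k)).1.trace = (diagSL z * (B * k)).1.trace) : A = B := by
  simp only [SL2_trace, diagSL_mul_apply_zero, diagSL_mul_apply_one] at h1 h2 h3 h4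
  simp only [SL2_mul_apply] at h3 h4
  obtain ⟨_, k01, k10, _⟩ := hk
  have hzz : (z : K) * ((z⁻¹ : Kˣ) : K) = 1 := by simp
  have hz1 : (z : K) ^ 2 - 1 ≠ 0 := sub_ne_zero.2 hz
  have h00 : A 0 0 = B 0 0 := by
    apply mul_left_cancel₀ hz1
    linear_combination (z : K) * h2 - h1 + (B 1 1 - A 1 1) * hzz
  have h11 : A 1 1 = B 1 1 := by linear_combination h1 - h00
  have h01 : A 0 1 = B 0 1 := by
    apply mul_left_cancel₀ hz1
    apply mul_left_cancel₀ k10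
    linear_combination (z : K) * h4 - h3 - ((z : K) ^ 2 - 1) * k 0 0 * h00 -
      (A 1 0 * k 0 1 + A 1 1 * k 1 1 - B 1 0 * k 0 1 - B 1 1 * k 1 1) * hzz
  have h10 : A 1 0 = B 1 0 := by
    apply mul_left_cancel₀ k01
    linear_combination h3 - k 0 0 * h00 - k 1 0 * h01 - k 1 1 * h11
  exact SL2_ext h00 h01 h10 h11

theorem finite_of_finite_trace {Γ : Subgroup SL(2, K)} {z : Kˣ} (hz : (z : K) ^ 2 ≠ 1)
    (hg : diagSL z ∈ Γ) {k : SL(2, K)} (hk : k ∈ Γ) (hkg : IsGeneric k) {T : Set K} (hT : T.Finite)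
    (hΓ : ∀ h ∈ Γ, h.1.trace ∈ T) : Finite Γ := by
  have := hT.to_subtype
  let f : Γ → T × T × T × T := fun h =>
    (⟨_, hΓ h h.2⟩, ⟨_, hΓ _ (mul_mem hg h.2)⟩, ⟨_, hΓ _ (mul_mem h.2 hk)⟩,
      ⟨_, hΓ _ (mul_mem hg (mul_mem h.2 hk))⟩)
  refine Finite.of_injective f fun x y hxy => Subtype.ext ?_
  simp only [f, Prod.mk.injEq, Subtype.mk.injEq] at hxy
  obtain ⟨h1, h2, h3, h4⟩ := hxy
  exact eq_of_trace_eq hz hkg h1 h2 h3 h4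

theorem exists_inv_mul_mul_eq_diagSL_of_apply {g : SL(2, K)} {z : Kˣ} (hz : (z : K) ^ 2 ≠ 1)
    (h10 : g 1 0 = 0) (h00 : g 0 0 = z) : ∃ A : SL(2, K), A⁻¹ * g * A = diagSL z := by
  have hzz : (z : K) * ((z⁻¹ : Kˣ) : K) = 1 := by simp
  have h11 : g 1 1 = ((z⁻¹ : Kˣ) : K) := by
    apply mul_left_cancel₀ z.ne_zero
    linear_combination SL2_det g - hzz - g 1 1 * h00 + g 0 1 * h10
  have hne : ((z⁻¹ : Kˣ) : K) - z ≠ 0 := fun h => hz (by linear_combination (-(z : K)) * h + hzz)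
  obtain ⟨A, a00, a01, a10, a11⟩ : ∃ A : SL(2, K), A 0 0 = 1 ∧
      A 0 1 = g 0 1 / (((z⁻¹ : Kˣ) : K) - z) ∧ A 1 0 = 0 ∧ A 1 1 = 1 :=
    ⟨⟨!![1, g 0 1 / (((z⁻¹ : Kˣ) : K) - z); 0, 1], by simp⟩, rfl, rfl, rfl, rfl⟩
  refine ⟨A, ?_⟩
  rw [mul_assoc, inv_mul_eq_iff_eq_mul]
  apply SL2_ext <;>
    simp only [SL2_mul_apply, a00, a01, a10, a11, diagSL_apply, h10, h00, h11] <;>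
    field_simp <;> ring

theorem exists_trace_eq_and_inv_mul_mul_eq_diagSL [IsAlgClosed K] (g : SL(2, K)) :
    ∃ z : Kˣ, g.1.trace = z + (z : K)⁻¹ ∧
      ((z : K) ^ 2 ≠ 1 → ∃ A : SL(2, K), A⁻¹ * g * A = diagSL z) := by
  classical
  obtain ⟨x, hx⟩ := exists_smul_eq_self g
  obtain ⟨B, hB⟩ := exists_forall_smul_eq_self_iff x
  have h10 := (hB g).1 hx
  have hdet : (B⁻¹ * g * B) 0 0 * (B⁻¹ * g * B) 1 1 = 1 := by
    simpa [h10] using SL2_det (B⁻¹ * g * B)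
  refine ⟨Units.mkOfMulEqOne _ _ hdet, ?_, fun hz => ?_⟩
  · rw [← trace_inv_mul_mul g B, SL2_trace]
    exact congrArg _ (eq_inv_of_mul_eq_one_right hdet)
  · obtain ⟨A, hA⟩ := exists_inv_mul_mul_eq_diagSL_of_apply hz h10 rfl
    exact ⟨B * A, by simpa [mul_assoc] using hA⟩

end SL2

section SL2PingPong

open Matrix Matrix.SpecialLinearGroup
open scoped MatrixGroups Pointwise

variable {L : Type*} [Field L] {v : AbsoluteValue L ℝ} {ε S m : ℝ}

theorem mul_apply_add_le (hε0 : 0 < ε) (hε1 : ε ≤ 1) (hε : 3 * ε * S ≤ m)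
    {p q r s x y : L} (hp : m ≤ v p) (hq : v q ≤ S) (hr : v r ≤ S) (hs : v s ≤ S)
    (hxy : v y ≤ ε * v x) : ε * v (r * x + s * y) ≤ v (p * x + q * y) := by
  have hx := v.nonneg x
  have hS : 0 ≤ S := (v.nonneg q).trans hq
  have hyx : v y ≤ v x := hxy.trans (mul_le_of_le_one_left hx hε1)
  have upper : v (r * x + s * y) ≤ 2 * (S * v x) := by
    calc v (r * x + s * y) ≤ v r * v x + v s * v y := by simpa using v.add_le (r * x) (s * y)
      _ ≤ S * v x + S * v x := by gcongr
      _ = 2 * (S * v x) := by ring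
  have lower : m * v x - S * (ε * v x) ≤ v (p * x + q * y) := by
    calc m * v x - S * (ε * v x) ≤ v p * v x - v q * v y := by gcongr
      _ ≤ v (p * x + q * y) := by simpa using v.le_add (p * x) (q * y)
  have : ε * v (r * x + s * y) ≤ ε * (2 * (S * v x)) := by gcongr
  have : 3 * ε * S * v x ≤ m * v x := by gcongr
  linarith

variable (v ε) in
/-- The matrices whose first column spans a line close to the first coordinate axis. -/
def firstCone : Set SL(2, L) := {A | v (A 1 0) < ε * v (A 0 0)}

variable (v ε) in
/-- The matrices whose first column spans a line close to the second coordinate axis. -/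
def secondCone : Set SL(2, L) := {A | v (A 0 0) < ε * v (A 1 0)}

theorem disjoint_firstCone_secondCone (hε1 : ε ≤ 1) :
    Disjoint (firstCone v ε) (secondCone v ε) := by
  refine Set.disjoint_left.2 fun A hA hB => ?_
  simp only [firstCone, secondCone, Set.mem_ofPred_eq] at hA hB
  have h00 := mul_le_of_le_one_left (v.nonneg (A 0 0)) hε1
  have h10 := mul_le_of_le_one_left (v.nonneg (A 1 0)) hε1
  linarith

theorem diagSL_smul_compl_secondCone_subset (hε0 : 0 < ε) {z : Lˣ} (hz : 1 < ε * v z) :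
    diagSL z • (secondCone v ε)ᶜ ⊆ firstCone v ε := by
  rintro _ ⟨A, hA, rfl⟩
  have hA : ε * v (A 1 0) ≤ v (A 0 0) := not_lt.1 hA
  have hz0 : 0 < v z := v.pos z.ne_zero
  have hpos : 0 < v (A 0 0) := by
    refine v.pos fun h00 => ?_
    have h10 : A 1 0 = 0 := v.eq_zero.1 <| le_antisymm
      (nonpos_of_mul_nonpos_right (by simpa [h00] using hA) hε0) (v.nonneg _)
    simpa [h00, h10] using SL2_det A
  change v ((diagSL z * A) 1 0) < ε * v ((diagSL z * A) 0 0)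
  rw [diagSL_mul_apply_one, diagSL_mul_apply_zero, map_mul, map_mul, Units.val_inv_eq_inv_val,
    map_inv₀, inv_mul_lt_iff₀ hz0]
  refine lt_of_mul_lt_mul_left ?_ hε0.le
  calc ε * v (A 1 0) ≤ 1 * v (A 0 0) := by rwa [one_mul]
    _ < (ε * v z) ^ 2 * v (A 0 0) := by
      gcongr
      exact one_lt_pow₀ hz two_ne_zero
    _ = ε * (v z * (ε * (v z * v (A 0 0)))) := by ring

theorem smul_cones_subset_compl (hε0 : 0 < ε) (hε1 : ε ≤ 1) (hε : 3 * ε * S ≤ m) {k : SL(2, L)}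
    (hkm : ∀ i j, m ≤ v (k i j)) (hkS : ∀ i j, v (k i j) ≤ S) :
    k • (firstCone v ε ∪ secondCone v ε) ⊆ (firstCone v ε ∪ secondCone v ε)ᶜ := by
  rintro _ ⟨A, hA, rfl⟩
  have key (i j : Fin 2) : ε * v ((k * A) i 0) ≤ v ((k * A) j 0) := by
    rw [SL2_mul_apply, SL2_mul_apply]
    simp only [firstCone, secondCone, Set.mem_union, Set.mem_ofPred_eq] at hA
    rcases hA with hA | hA
    · exact mul_apply_add_le hε0 hε1 hε (hkm _ _) (hkS _ _) (hkS _ _) (hkS _ _) hA.le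
    · rw [add_comm (k i 0 * _), add_comm (k j 0 * _)]
      exact mul_apply_add_le hε0 hε1 hε (hkm _ _) (hkS _ _) (hkS _ _) (hkS _ _) hA.le
  rintro (h | h)
  · exact (key 0 1).not_gt h
  · exact (key 1 0).not_gt h

theorem ContainsNonabelianFree.of_smul_cones_subset_compl {Γ : Subgroup SL(2, L)} (hε0 : 0 < ε)
    (hε1 : ε ≤ 1) {z : Lˣ} (hz : 1 < ε * v z) (hg : diagSL z ∈ Γ) {k : SL(2, L)} (hk : k ∈ Γ)
    (hcones : k • (firstCone v ε ∪ secondCone v ε) ⊆ (firstCone v ε ∪ secondCone v ε)ᶜ) :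
    ContainsNonabelianFree Γ := by
  have hone : (1 : SL(2, L)) ∈ firstCone v ε := by simp [firstCone, hε0]
  have hdisj := disjoint_firstCone_secondCone (v := v) hε1
  have hfar : Disjoint (firstCone v ε ∪ secondCone v ε)
      (k • firstCone v ε ∪ k • secondCone v ε) := by
    rw [← Set.smul_set_union]
    exact (Set.subset_compl_iff_disjoint_left.1 hcones)
  simp only [Set.disjoint_union_left, Set.disjoint_union_right] at hfar
  obtain ⟨⟨hXX, hYX⟩, hXY, hYY⟩ := hfar
  have ha := diagSL_smul_compl_secondCone_subset hε0 hz
  refine .of_ping_pong (a := (⟨_, hg⟩ : Γ))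
    (b := (⟨_, Γ.mul_mem (Γ.mul_mem hk hg) (Γ.inv_mem hk)⟩ : Γ)) ⟨1, hone⟩
    (Set.Nonempty.smul_set ⟨1, hone⟩)
    (pairwise_four_iff.2 ⟨hdisj, hXX, hXY, hYX, hYY, Set.disjoint_smul_set.2 hdisj⟩) ha ?_
  change (k * diagSL z * k⁻¹) • (k • secondCone v ε)ᶜ ⊆ k • firstCone v ε
  rw [← Set.smul_set_compl, mul_smul, inv_smul_smul, mul_smul]
  exact Set.smul_set_mono ha

theorem ContainsNonabelianFree.of_one_lt_of_isGeneric {Γ : Subgroup SL(2, L)} {z : Lˣ}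
    (hz : 1 < v z) (hg : diagSL z ∈ Γ) {k : SL(2, L)} (hk : k ∈ Γ) (hkg : IsGeneric k) :
    ContainsNonabelianFree Γ := by
  obtain ⟨i, hi⟩ := Finite.exists_min fun i : Fin 2 × Fin 2 => v (k i.1 i.2)
  obtain ⟨j, hj⟩ := Finite.exists_max fun i : Fin 2 × Fin 2 => v (k i.1 i.2)
  have hpos (i : Fin 2 × Fin 2) : 0 < v (k i.1 i.2) := v.pos <| by
    obtain ⟨h00, h01, h10, h11⟩ := hkg
    obtain ⟨i, j⟩ := i
    fin_cases i <;> fin_cases j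
    exacts [h00, h01, h10, h11]
  set m := v (k i.1 i.2)
  set S := v (k j.1 j.2)
  have hm : 0 < m := hpos i
  have hS : 0 < S := hpos j
  set ε := min 1 (m / (3 * S))
  have hε0 : 0 < ε := by positivity
  have hε : 3 * ε * S ≤ m := by
    calc 3 * ε * S = ε * (3 * S) := by ring
      _ ≤ m := (le_div_iff₀ (by positivity)).1 (min_le_right ..)
  obtain ⟨n, hn⟩ := pow_unbounded_of_one_lt ε⁻¹ hz
  refine .of_smul_cones_subset_compl (z := z ^ n) hε0 (min_le_left ..) ?_
    (by simpa using Γ.pow_mem hg n) hk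
    (smul_cones_subset_compl hε0 (min_le_left ..) hε (fun i j => hi (i, j)) fun i j => hj (i, j))
  rwa [Units.val_pow_eq_pow_val, map_pow, ← inv_lt_iff_one_lt_mul₀' hε0]

end SL2PingPong
/-! ### Absolute values and specialization -/

section AbsoluteValues

open NumberField IntermediateField IsDedekindDomain

/-- The archimedean absolute value of a field attached to a homomorphism to `ℂ`. -/
noncomputable def complexAbs {L : Type*} [Field L] (φ : L →+* ℂ) : AbsoluteValue L ℝ :=
  (NormedField.toAbsoluteValue ℂ).comp φ.injective

theorem complexAbs_apply {L : Type*} [Field L] (φ : L →+* ℂ) (x : L) :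
    complexAbs φ x = ‖φ x‖ := rfl

theorem exists_absoluteValue_of_numberField {L : Type*} [Field L] [NumberField L] {x : L}
    (hx0 : x ≠ 0) (hx : ∀ n : ℕ, 0 < n → x ^ n ≠ 1) : ∃ v : AbsoluteValue L ℝ, 1 < v x := by
  by_cases hxint : IsIntegral ℤ x
  · by_contra! h
    obtain ⟨n, hn, hn1⟩ := Embeddings.pow_eq_one_of_norm_le_one L ℂ hx0 hxint fun φ => by
      simpa [complexAbs_apply] using h (complexAbs φ)
    exact hx n hn hn1
  · by_contra! h
    refine hxint ?_
    obtain ⟨y, rfl⟩ := HeightOneSpectrum.mem_integers_of_valuation_le_one (R := 𝓞 L) L x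
      fun w => by
        have h1 := h (NumberField.HeightOneSpectrum.adicAbv L w)
        rw [NumberField.HeightOneSpectrum.adicAbv_def] at h1
        rwa [← NNReal.coe_one, NNReal.coe_le_coe, WithZeroMulInt.toNNReal_le_one_iff
          (NumberField.HeightOneSpectrum.one_lt_absNorm_nnreal w)] at h1
    exact y.2

theorem exists_transcendental_one_lt_norm : ∃ t : ℂ, Transcendental ℚ t ∧ 1 < ‖t‖ := by
  obtain ⟨t, ht⟩ : ∃ t : ℂ, Transcendental ℚ t := by
    refine ⟨algebraMap ℝ ℂ (liouvilleNumber (2 : ℕ)), ?_⟩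
    have := transcendental_liouvilleNumber (m := 2) le_rfl
    rw [transcendental_algebraMap_iff (algebraMap ℝ ℂ).injective]
    exact fun h => this ((IsFractionRing.isAlgebraic_iff ℤ ℚ ℝ).2 h)
  obtain ⟨n, hn⟩ := exists_nat_gt (‖t‖ + 1)
  refine ⟨t + n, fun h => ht ?_, ?_⟩
  · simpa using h.sub (isAlgebraic_algebraMap (A := ℂ) (n : ℚ))
  · have : ‖(n : ℂ)‖ ≤ ‖t + n‖ + ‖t‖ := by simpa using norm_sub_le (t + n) t
    rw [Complex.norm_natCast] at this
    linarith

theorem exists_adjoin_hom {F K M : Type*} [Field F] [Field K] [Field M] [Algebra F K] [Algebra F M]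
    {z : K} {t : M} (hz : Transcendental F z) (ht : Transcendental F t) :
    ∃ φ : F⟮z⟯ →+* M, φ (AdjoinSimple.gen F z) = t := by
  let e := (RatFunc.algEquivOfTranscendental z hz).symm.trans
    (RatFunc.algEquivOfTranscendental t ht)
  refine ⟨(algebraMap F⟮t⟯ M).comp e.toAlgHom.toRingHom, ?_⟩
  have h1 : e (AdjoinSimple.gen F z) = AdjoinSimple.gen F t := by
    change RatFunc.algEquivOfTranscendental t ht
      ((RatFunc.algEquivOfTranscendental z hz).symm (AdjoinSimple.gen F z)) = _
    rw [RatFunc.algEquivOfTranscendental_symm_gen]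
    exact Subtype.ext (RatFunc.algEquivOfTranscendental_X t ht)
  change algebraMap F⟮t⟯ M (e (AdjoinSimple.gen F z)) = t
  rw [h1, AdjoinSimple.algebraMap_gen]

theorem exists_hom_of_transcendental {K : Type*} [Field K] [CharZero K] {z : K}
    (hz : Transcendental ℚ z) : ∃ φ : ℚ⟮z⟯ →+* ℂ, 1 < ‖φ (AdjoinSimple.gen ℚ z)‖ := by
  obtain ⟨t, ht, ht1⟩ := exists_transcendental_one_lt_norm
  obtain ⟨φ, hφ⟩ := exists_adjoin_hom hz ht
  exact ⟨φ, by rwa [hφ]⟩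

theorem exists_absoluteValue {K : Type*} [Field K] [CharZero K] {z : K} (hz0 : z ≠ 0)
    (hz : ∀ n : ℕ, 0 < n → z ^ n ≠ 1) (L : Type*) [Field L] [Algebra ℚ⟮z⟯ L]
    [FiniteDimensional ℚ⟮z⟯ L] :
    ∃ v : AbsoluteValue L ℝ, 1 < v (algebraMap ℚ⟮z⟯ L (AdjoinSimple.gen ℚ z)) := by
  have hinj := (algebraMap ℚ⟮z⟯ L).injective
  by_cases halg : IsAlgebraic ℚ z
  · have : CharZero L := charZero_of_injective_algebraMap hinj
    have h1 : FiniteDimensional ℚ ℚ⟮z⟯ := adjoin.finiteDimensional halg.isIntegral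
    have : IsScalarTower ℚ ℚ⟮z⟯ L := IsScalarTower.rat
    have h2 : FiniteDimensional ℚ L := FiniteDimensional.trans ℚ ℚ⟮z⟯ L
    have : NumberField L := ⟨⟩
    have hval : ((AdjoinSimple.gen ℚ z : ℚ⟮z⟯) : K) = z := AdjoinSimple.coe_gen ℚ z
    refine exists_absoluteValue_of_numberField ?_ fun n hn h => ?_
    · rw [Ne, map_eq_zero_iff _ hinj]
      exact fun h => hz0 (by rw [← hval, h]; rfl)
    · rw [← map_pow, map_eq_one_iff _ hinj] at h
      refine hz n hn ?_
      rw [← hval, ← IntermediateField.coe_pow, h]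
      rfl
  · obtain ⟨φ, hφ⟩ := exists_hom_of_transcendental (z := z) halg
    let _ : Algebra ℚ⟮z⟯ ℂ := φ.toAlgebra
    have ψ : L →ₐ[ℚ⟮z⟯] ℂ := IsAlgClosed.lift
    refine ⟨complexAbs ψ.toRingHom, ?_⟩
    rw [complexAbs_apply]
    change 1 < ‖ψ _‖
    rw [ψ.commutes]
    exact hφ

end AbsoluteValues

section Specialization

open IntermediateField

theorem exists_algHom_finite (E : Type*) (R : Type u) [Field E] [CommRing R] [Nontrivial R]
    [Algebra E R] [Algebra.FiniteType E R] : ∃ (L : Type u) (_ : Field L) (_ : Algebra E L),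
      FiniteDimensional E L ∧ Nonempty (R →ₐ[E] L) := by
  obtain ⟨m, hm⟩ := Ideal.exists_maximal R
  exact ⟨R ⧸ m, Ideal.Quotient.field m, inferInstance,
    @finite_of_finite_type_of_isJacobsonRing E (R ⧸ m) _ (Ideal.Quotient.field m) _ _ _,
    ⟨Ideal.Quotient.mkₐ E m⟩⟩

theorem exists_specialization {K : Type u} [Field K] [CharZero K] {z : K} (hz0 : z ≠ 0)
    (hz : ∀ n : ℕ, 0 < n → z ^ n ≠ 1) {s : Set K} (hs : s.Finite) :
    ∃ (R : Subring K) (L : Type u) (_ : Field L) (π : R →+* L) (v : AbsoluteValue L ℝ)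
      (hzR : z ∈ R), s ⊆ R ∧ 1 < v (π ⟨z, hzR⟩) := by
  let R := Algebra.adjoin ℚ⟮z⟯ s
  have : Algebra.FiniteType ℚ⟮z⟯ R :=
    (Subalgebra.fg_iff_finiteType R).1 (Subalgebra.fg_def.2 ⟨s, hs, rfl⟩)
  obtain ⟨L, _, _, _, ⟨π⟩⟩ := exists_algHom_finite ℚ⟮z⟯ R
  obtain ⟨v, hv⟩ := exists_absoluteValue hz0 hz L
  refine ⟨R.toSubring, L, inferInstance, π.toRingHom, v,
    R.algebraMap_mem (AdjoinSimple.gen ℚ z), Algebra.subset_adjoin, ?_⟩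
  rw [← π.commutes] at hv
  exact hv

end Specialization

section SL2Free

open Matrix Matrix.SpecialLinearGroup
open scoped MatrixGroups

theorem map_ne_zero_of_inv_mem {K L : Type*} [Field K] [Field L] {R : Subring K} (π : R →+* L)
    {x : R} (hx : x ≠ 0) (hinv : (x : K)⁻¹ ∈ R) : π x ≠ 0 := by
  refine ((IsUnit.of_mul_eq_one ⟨_, hinv⟩ (Subtype.ext ?_)).map π).ne_zero
  exact mul_inv_cancel₀ fun h => hx (Subtype.ext h)

theorem map_diagSL {R S : Type*} [CommRing R] [CommRing S] (f : R →+* S) (z : Rˣ) :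
    SpecialLinearGroup.map f (diagSL z) = diagSL (Units.map f z) :=
  SL2_ext rfl (map_zero f) (map_zero f) rfl

theorem exists_map_subtype_eq {K : Type*} [Field K] {R : Subring K} {A : SL(2, K)}
    (hA : ∀ i j, A i j ∈ R) : ∃ A' : SL(2, R), SpecialLinearGroup.map R.subtype A' = A := by
  refine ⟨⟨of fun i j => ⟨A i j, hA i j⟩, Subtype.ext ?_⟩, SL2_ext rfl rfl rfl rfl⟩
  rw [Matrix.det_fin_two]
  exact SL2_det A

theorem map_subtype_injective {K : Type*} [Field K] (R : Subring K) :
    Function.Injective (SpecialLinearGroup.map R.subtype : SL(2, R) →* SL(2, K)) := by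
  intro A B hAB
  have h (i j : Fin 2) : A i j = B i j := Subtype.ext (congrArg (fun C : SL(2, K) => C i j) hAB)
  exact SL2_ext (h ..) (h ..) (h ..) (h ..)

/-- Specialize the entries to a field with an absolute value for which `z` is expanding. -/
theorem ContainsNonabelianFree.of_isGeneric {K : Type*} [Field K] [CharZero K]
    {Γ : Subgroup SL(2, K)} {z : Kˣ} (hz : ∀ n : ℕ, 0 < n → (z : K) ^ n ≠ 1)
    (hg : diagSL z ∈ Γ) {k : SL(2, K)} (hk : k ∈ Γ) (hkg : IsGeneric k) :
    ContainsNonabelianFree Γ := by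
  have hfin : (insert (z : K)⁻¹ (Set.range (fun i : Fin 2 × Fin 2 => k i.1 i.2) ∪
      Set.range fun i : Fin 2 × Fin 2 => (k i.1 i.2)⁻¹)).Finite :=
    ((Set.finite_range _).union (Set.finite_range _)).insert _
  obtain ⟨R, L, _, π, v, hzR, hs, hv⟩ := exists_specialization z.ne_zero hz hfin
  have hkR (i j : Fin 2) : k i j ∈ R := hs (.inr (.inl ⟨(i, j), rfl⟩))
  have hinv (i j : Fin 2) : (k i j)⁻¹ ∈ R := hs (.inr (.inr ⟨(i, j), rfl⟩))
  obtain ⟨k, rfl⟩ := exists_map_subtype_eq hkR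
  let zR : Rˣ := ⟨⟨z, hzR⟩, ⟨(z : K)⁻¹, hs (.inl rfl)⟩, Subtype.ext (mul_inv_cancel₀ z.ne_zero),
    Subtype.ext (inv_mul_cancel₀ z.ne_zero)⟩
  have hgR : SpecialLinearGroup.map R.subtype (diagSL zR) = diagSL z := by
    rw [map_diagSL]
    exact congrArg diagSL (Units.ext rfl)
  let ΓR := Γ.comap (SpecialLinearGroup.map R.subtype)
  have hne {i j} (h : (SpecialLinearGroup.map R.subtype k) i j ≠ 0) : π (k i j) ≠ 0 :=
    map_ne_zero_of_inv_mem π (fun h0 => h (congrArg Subtype.val h0)) (hinv i j)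
  have hfree : ContainsNonabelianFree (ΓR.map (SpecialLinearGroup.map π)) :=
    .of_one_lt_of_isGeneric (v := v) (z := Units.map (π : R →* L) zR) hv
      (map_diagSL π zR ▸ Subgroup.mem_map_of_mem _ (hgR.symm ▸ hg : _ ∈ Γ))
      (Subgroup.mem_map_of_mem _ hk)
      ⟨hne hkg.1, hne hkg.2.1, hne hkg.2.2.1, hne hkg.2.2.2⟩
  exact (hfree.of_surjective _ (MonoidHom.subgroupMap_surjective _ ΓR)).of_injective
    ((SpecialLinearGroup.map R.subtype).subgroupComap Γ) fun A B h =>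
      Subtype.ext (map_subtype_injective R (congrArg Subtype.val h))

end SL2Free

/-! ### Traces of elements whose eigenvalues are roots of unity -/

section CyclotomicTrace

open Polynomial in
/-- `t` is of the form `η + η⁻¹` for a root of unity `η` in an algebraic closure. Since
`dickson 1 1 N` sends `η + η⁻¹` to `η ^ N + η⁻¹ ^ N`, this can be expressed without leaving `F`. -/
def IsCyclotomicTrace {F : Type*} [Field F] (t : F) : Prop :=
  ∃ N : ℕ, 0 < N ∧ (dickson 1 (1 : F) N).eval t = 2

variable {F F' : Type*} [Field F] [Field F']

theorem isCyclotomicTrace_of_pow_eq_one {x y : F} (hxy : x * y = 1) {N : ℕ} (hN : 0 < N)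
    (hx : x ^ N = 1) : IsCyclotomicTrace (x + y) := by
  have hy : y ^ N = 1 := by rw [← one_mul (y ^ N), ← hx, ← mul_pow, hxy, one_pow, hx]
  refine ⟨N, hN, ?_⟩
  rw [Polynomial.dickson_one_one_eval_add_inv x y hxy, hx, hy, one_add_one_eq_two]

theorem isCyclotomicTrace_map (f : F →+* F') {t : F} :
    IsCyclotomicTrace (f t) ↔ IsCyclotomicTrace t := by
  refine exists_congr fun N => and_congr_right fun _ => ?_
  rw [← f.injective.eq_iff, map_ofNat, ← Polynomial.eval_map_apply, Polynomial.map_dickson, map_one]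

theorem exists_mul_eq_one_and_add_eq [IsAlgClosed F] [NeZero (2 : F)] (t : F) :
    ∃ x y : F, x * y = 1 ∧ t = x + y := by
  have h2 : (2 : F) ≠ 0 := two_ne_zero
  obtain ⟨s, hs⟩ := IsAlgClosed.exists_pow_nat_eq (t ^ 2 - 4) (n := 2) two_pos
  refine ⟨(t + s) / 2, (t - s) / 2, ?_, by field_simp; ring⟩
  field_simp
  linear_combination -hs

theorem IsCyclotomicTrace.exists_pow_eq_one [IsAlgClosed F] [NeZero (2 : F)] {t : F}
    (h : IsCyclotomicTrace t) :
    ∃ x y : F, x * y = 1 ∧ t = x + y ∧ ∃ N : ℕ, 0 < N ∧ x ^ N = 1 ∧ y ^ N = 1 := by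
  obtain ⟨N, hN, h⟩ := h
  obtain ⟨x, y, hxy, rfl⟩ := exists_mul_eq_one_and_add_eq t
  rw [Polynomial.dickson_one_one_eval_add_inv x y hxy] at h
  have hxyN : x ^ N * y ^ N = 1 := by rw [← mul_pow, hxy, one_pow]
  have hx : x ^ N = 1 := by
    refine sub_eq_zero.1 ((pow_eq_zero_iff two_ne_zero).1 ?_)
    linear_combination x ^ N * h - hxyN
  rw [hx, one_mul] at hxyN
  exact ⟨x, y, hxy, rfl, N, hN, hx, hxyN⟩

theorem IsCyclotomicTrace.isIntegral [CharZero F] {t : F} (h : IsCyclotomicTrace t) :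
    IsIntegral ℤ t := by
  let f := algebraMap F (AlgebraicClosure F)
  have : CharZero (AlgebraicClosure F) := charZero_of_injective_algebraMap f.injective
  obtain ⟨x, y, _, ht, N, hN, hx, hy⟩ := ((isCyclotomicTrace_map f).2 h).exists_pow_eq_one
  refine (isIntegral_algHom_iff f.toIntAlgHom f.injective).1 ?_
  change IsIntegral ℤ (f t)
  rw [ht]
  exact .add (.of_pow hN (hx ▸ isIntegral_one)) (.of_pow hN (hy ▸ isIntegral_one))

theorem IsCyclotomicTrace.exists_ofReal_eq {t : ℂ} (h : IsCyclotomicTrace t) :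
    ∃ r : ℝ, t = r ∧ |r| ≤ 2 := by
  obtain ⟨x, y, hxy, rfl, N, hN, hx, -⟩ := h.exists_pow_eq_one
  have hnorm : ‖x‖ = 1 := Complex.norm_eq_one_of_pow_eq_one hx hN.ne'
  have hy : y = (starRingEnd ℂ) x := by
    apply mul_left_cancel₀ (left_ne_zero_of_mul_eq_one hxy)
    rw [hxy, Complex.mul_conj, Complex.normSq_eq_norm_sq, hnorm]
    simp
  refine ⟨2 * x.re, by rw [hy, Complex.add_conj], ?_⟩
  rw [abs_mul, abs_two]
  linarith [Complex.abs_re_le_norm x]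

theorem finite_setOf_isCyclotomicTrace (L : Type*) [Field L] [NumberField L] :
    {t : L | IsCyclotomicTrace t}.Finite := by
  refine (NumberField.Embeddings.finite_of_norm_le L ℂ 2).subset fun t ht =>
    ⟨ht.isIntegral, fun φ => ?_⟩
  obtain ⟨r, hr, hr2⟩ := ((isCyclotomicTrace_map φ).2 ht).exists_ofReal_eq
  rwa [hr, Complex.norm_real]

end CyclotomicTrace

section Logistic

theorem strictAnti_of_logistic {κ : ℝ} (hκ : κ ≤ 1) {u : ℕ → ℝ} (h0 : 0 < u 0) (h1 : u 0 < κ)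
    (hrec : ∀ j, u (j + 1) = u j * (κ - u j)) : StrictAnti u := by
  have hpos : ∀ j, 0 < u j ∧ u j < κ := by
    intro j
    induction j with
    | zero => exact ⟨h0, h1⟩
    | succ j ih =>
      have := mul_pos ih.1 (sub_pos.2 ih.2)
      rw [hrec]
      exact ⟨this, by nlinarith⟩
  refine strictAnti_nat_of_succ_lt fun j => ?_
  rw [hrec]
  nlinarith [(hpos j).1]

-- Otherwise the sequence would be strictly decreasing, while the number field generated by `κ`
-- and `w 0` contains only finitely many cyclotomic traces.
theorem eq_zero_or_eq_of_logistic {κ : ℝ} (hκ1 : κ ≤ 1)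
    (hκ : IsCyclotomicTrace (2 - κ : ℂ)) {w : ℕ → ℂ} (hw : ∀ j, IsCyclotomicTrace (2 - w j))
    (hrec : ∀ j, w (j + 1) = w j * (κ - w j)) : w 0 = 0 ∨ w 0 = κ := by
  by_contra! hne
  obtain ⟨u, hwu, hu⟩ : ∃ u : ℕ → ℝ, (∀ j, w j = u j) ∧ ∀ j, 0 ≤ u j := by
    choose r hr hr2 using fun j => (hw j).exists_ofReal_eq
    refine ⟨fun j => 2 - r j, fun j => ?_, fun j => by linarith [le_of_abs_le (hr2 j)]⟩
    push_cast
    linear_combination -hr j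
  have hurec : ∀ j, u (j + 1) = u j * (κ - u j) := fun j => by
    have := hrec j
    rw [hwu, hwu] at this
    exact_mod_cast this
  have hanti : StrictAnti u := by
    simp only [hwu, Ne, Complex.ofReal_eq_zero, Complex.ofReal_inj] at hne
    have hu0 : 0 < u 0 := (hu 0).lt_of_ne (Ne.symm hne.1)
    refine strictAnti_of_logistic hκ1 hu0 (lt_of_le_of_ne ?_ hne.2) hurec
    exact sub_nonneg.1 (nonneg_of_mul_nonneg_right (hurec 0 ▸ hu 1) hu0)
  let L := IntermediateField.adjoin ℚ ({(κ : ℂ), w 0} : Set ℂ)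
  have mem_κ : (κ : ℂ) ∈ L := IntermediateField.subset_adjoin ℚ _ (Set.mem_insert _ _)
  have mem_w : ∀ j, w j ∈ L := by
    intro j
    induction j with
    | zero => exact IntermediateField.subset_adjoin ℚ _ (Set.mem_insert_of_mem _ rfl)
    | succ j ih => rw [hrec]; exact mul_mem ih (sub_mem mem_κ ih)
  have isIntegral_of_trace {x : ℂ} (hx : IsCyclotomicTrace (2 - x)) : IsIntegral ℚ x := by
    simpa using ((isIntegral_algebraMap (x := 2)).sub hx.isIntegral).tower_top (A := ℚ)
  have : FiniteDimensional ℚ L := IntermediateField.finiteDimensional_adjoin <| by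
    rintro x (rfl | rfl)
    exacts [isIntegral_of_trace hκ, isIntegral_of_trace (hw 0)]
  have : NumberField L := ⟨⟩
  refine Set.infinite_range_of_injective (f := fun j => (2 - ⟨w j, mem_w j⟩ : L)) ?_
    ((finite_setOf_isCyclotomicTrace L).subset ?_)
  · intro i j hij
    have : w i = w j := congrArg Subtype.val (sub_right_injective hij)
    rw [hwu, hwu, Complex.ofReal_inj] at this
    exact hanti.injective this
  · rintro _ ⟨j, rfl⟩
    refine (isCyclotomicTrace_map L.val.toRingHom).1 ?_
    rw [map_sub, map_ofNat]
    exact hw j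

theorem two_sub_two_mul_cos_mem_Ioc {n : ℕ} (hn : 6 ≤ n) :
    2 - 2 * Real.cos (2 * Real.pi / n) ∈ Set.Ioc 0 1 := by
  have hn' : (6 : ℝ) ≤ n := by exact_mod_cast hn
  have hpi := Real.pi_pos
  have hθ0 : 0 < 2 * Real.pi / n := by positivity
  have hθ1 : 2 * Real.pi / n ≤ Real.pi / 3 := by
    rw [div_le_div_iff₀ (by linarith) (by norm_num)]
    nlinarith
  have hcos0 := Real.cos_lt_cos_of_nonneg_of_le_pi le_rfl (by linarith) hθ0
  have hcos1 := Real.cos_le_cos_of_nonneg_of_le_pi hθ0.le (by linarith) hθ1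
  rw [Real.cos_zero] at hcos0
  rw [Real.cos_pi_div_three] at hcos1
  constructor <;> linarith

variable {K : Type*} [Field K] [CharZero K]

theorem IsCyclotomicTrace.mem_algebraicClosure {t : K} (h : IsCyclotomicTrace t) :
    t ∈ algebraicClosure ℚ K :=
  mem_algebraicClosure_iff.2 (h.isIntegral.tower_top (A := ℚ)).isAlgebraic

theorem exists_ringHom_exp_eq_pow {n : ℕ} (hn : n ≠ 0) {q : algebraicClosure ℚ K}
    (hq : IsPrimitiveRoot q n) :
    ∃ (σ : algebraicClosure ℚ K →+* ℂ) (p : ℕ),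
      σ (q ^ p) = Complex.exp (2 * Real.pi * Complex.I / n) := by
  have : Algebra.IsAlgebraic ℚ (algebraicClosure ℚ K) := algebraicClosure.isAlgebraic ℚ K
  have : NeZero n := ⟨hn⟩
  let σ : algebraicClosure ℚ K →ₐ[ℚ] ℂ := IsAlgClosed.lift
  obtain ⟨p, -, hp⟩ := (hq.map_of_injective (f := σ) σ.injective).eq_pow_of_pow_eq_one
    (Complex.isPrimitiveRoot_exp n hn).pow_eq_one
  exact ⟨σ, p, by simpa using hp⟩

-- Embed the algebraic numbers of `K` into `ℂ`, with `p` such that `q ^ p` becomes `exp (2πi / n)`.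
theorem exists_pow_forall_logistic {n : ℕ} (hn : 6 ≤ n) {q : K} (hq : IsPrimitiveRoot q n) :
    ∃ p : ℕ, ∃ κ : K, κ = 2 - (q ^ p + (q ^ p)⁻¹) ∧ κ ≠ 0 ∧
      ∀ w : ℕ → K, (∀ j, IsCyclotomicTrace (2 - w j)) →
        (∀ j, w (j + 1) = w j * (κ - w j)) → w 0 = 0 ∨ w 0 = κ := by
  let A := algebraicClosure ℚ K
  have hn0 : n ≠ 0 := by omega
  have hqA : q ∈ A := mem_algebraicClosure_iff.2
    (IsIntegral.of_pow (n := n) (by omega) (hq.pow_eq_one ▸ isIntegral_one)).isAlgebraic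
  obtain ⟨q, rfl⟩ : ∃ q' : A, (q' : K) = q := ⟨⟨q, hqA⟩, rfl⟩
  have hq : IsPrimitiveRoot q n := .of_map_of_injective (f := A.val) hq A.val.injective
  obtain ⟨σ, p, hσ⟩ := exists_ringHom_exp_eq_pow hn0 hq
  let κ : A := 2 - (q ^ p + (q ^ p)⁻¹)
  have hκσ : σ κ = ((2 - 2 * Real.cos (2 * Real.pi / n) : ℝ) : ℂ) := by
    rw [map_sub, map_add, map_inv₀, map_ofNat, hσ, ← Complex.exp_neg]
    push_cast
    rw [Complex.cos]
    ring_nf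
  have hκ : IsCyclotomicTrace (2 - σ κ) := by
    rw [← map_ofNat σ 2, ← map_sub, isCyclotomicTrace_map, sub_sub_cancel]
    refine isCyclotomicTrace_of_pow_eq_one (mul_inv_cancel₀ ?_) (Nat.pos_of_ne_zero hn0) ?_
    · exact pow_ne_zero _ (hq.ne_zero hn0)
    · rw [pow_right_comm, hq.pow_eq_one, one_pow]
  obtain ⟨hκ0, hκ1⟩ := two_sub_two_mul_cos_mem_Ioc hn
  refine ⟨p, κ, rfl, fun h0 => hκ0.ne' ?_, fun w hw hrec => ?_⟩
  · rwa [← Complex.ofReal_eq_zero, ← hκσ, map_eq_zero, ← ZeroMemClass.coe_eq_zero]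
  · have hwA : ∀ j, w j ∈ A := fun j => by
      simpa using sub_mem (ofNat_mem A 2) (hw j).mem_algebraicClosure
    lift w to ℕ → A using hwA
    have := eq_zero_or_eq_of_logistic hκ1 (hκσ ▸ hκ) (w := fun j => σ (w j)) (fun j => ?_)
      fun j => ?_
    · rw [map_eq_zero, ← hκσ, σ.injective.eq_iff] at this
      exact this.imp (congrArg Subtype.val) (congrArg Subtype.val)
    · rw [← map_ofNat σ 2, ← map_sub, isCyclotomicTrace_map,
        ← isCyclotomicTrace_map A.val.toRingHom]
      exact hw j
    · rw [← hκσ, ← map_sub, ← map_mul]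
      exact congrArg σ (Subtype.ext (hrec j))

end Logistic

section DiagonalCommutator

open Matrix Matrix.SpecialLinearGroup
open scoped MatrixGroups

theorem commutator_diagSL_entries {R : Type*} [CommRing R] (z : Rˣ) (h : SL(2, R)) :
    let s := -(h 0 1 * h 1 0)
    let κ := 2 - ((z : R) ^ 2 + ((z⁻¹ : Rˣ) : R) ^ 2)
    let h' := diagSL z * h * (diagSL z)⁻¹ * h⁻¹
    h'.1.trace = 2 - κ * s ∧ -(h' 0 1 * h' 1 0) = κ * s * (1 - s) := by
  intro s κ h'
  have hz : (z : R) * ((z⁻¹ : Rˣ) : R) = 1 := z.mul_inv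
  have hd := SL2_det h
  obtain ⟨h00, h01, h10, h11⟩ := SL2_inv_apply h
  obtain ⟨e00, e01, e10, e11⟩ : h' 0 0 = z * (h 0 0 * (((z⁻¹ : Rˣ) : R) * h 1 1) -
        h 0 1 * (z * h 1 0)) ∧
      h' 0 1 = z * (h 0 1 * (z * h 0 0) - h 0 0 * (((z⁻¹ : Rˣ) : R) * h 0 1)) ∧
      h' 1 0 = ((z⁻¹ : Rˣ) : R) * (h 1 0 * (((z⁻¹ : Rˣ) : R) * h 1 1) - h 1 1 * (z * h 1 0)) ∧
      h' 1 1 = ((z⁻¹ : Rˣ) : R) * (h 1 1 * (z * h 0 0) -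
        h 1 0 * (((z⁻¹ : Rˣ) : R) * h 0 1)) := by
    refine ⟨?_, ?_, ?_, ?_⟩ <;>
    · simp only [h', ← map_inv, mul_assoc, diagSL_mul_apply_zero, diagSL_mul_apply_one,
        SL2_mul_apply h, inv_inv, h00, h01, h10, h11]
      ring
  rw [SL2_trace, e00, e01, e10, e11]
  simp only [s, κ]
  generalize ((z⁻¹ : Rˣ) : R) = y at *
  generalize (z : R) = x at *
  generalize h 0 0 = a, h 0 1 = b, h 1 0 = c, h 1 1 = d at *
  constructor
  · linear_combination 2 * a * d * hz + 2 * hd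
  · linear_combination a * b * c * d * (x ^ 2 + y ^ 2 - 2 * (x * y + 1)) * hz +
      (x ^ 2 + y ^ 2 - 2) * b * c * hd

-- The iterated commutators `h ↦ [g, h]` of a generic `h` with a suitable power `g` of `diagSL z`
-- have traces `2 - w j`, where `w` satisfies the logistic recursion.
theorem not_isGeneric_of_isCyclotomicTrace {K : Type*} [Field K] [CharZero K]
    {Γ : Subgroup SL(2, K)} {z : Kˣ} (hg : diagSL z ∈ Γ) {n : ℕ} (hn : 6 ≤ n)
    (hz : IsPrimitiveRoot ((z : K) ^ 2) n) (hΓ : ∀ h ∈ Γ, IsCyclotomicTrace h.1.trace)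
    {h : SL(2, K)} (hh : h ∈ Γ) : ¬ IsGeneric h := by
  intro hgen
  obtain ⟨p, κ, hκ, hκ0, hrigid⟩ := exists_pow_forall_logistic hn hz
  let y : Kˣ := z ^ p
  have hgy : diagSL y ∈ Γ := by rw [map_pow]; exact pow_mem hg p
  have hκy : κ = 2 - ((y : K) ^ 2 + ((y⁻¹ : Kˣ) : K) ^ 2) := by
    rw [hκ, Units.val_inv_eq_inv_val, inv_pow, Units.val_pow_eq_pow_val, pow_right_comm]
  let f : SL(2, K) → SL(2, K) := fun h => diagSL y * h * (diagSL y)⁻¹ * h⁻¹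
  let H : ℕ → SL(2, K) := fun j => f^[j] h
  have hHsucc : ∀ j, H (j + 1) = f (H j) := fun j => Function.iterate_succ_apply' f j h
  have hH : ∀ j, H j ∈ Γ := by
    intro j
    induction j with
    | zero => exact hh
    | succ j ih =>
      rw [hHsucc]
      exact mul_mem (mul_mem (mul_mem hgy ih) (inv_mem hgy)) (inv_mem ih)
  have hstart := hrigid (fun j => κ * -(H j 0 1 * H j 1 0)) (fun j => ?_) (fun j => ?_)
  · change κ * -(h 0 1 * h 1 0) = 0 ∨ κ * -(h 0 1 * h 1 0) = κ at hstart
    obtain ⟨h00, h01, h10, h11⟩ := hgen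
    rcases hstart with h0 | h1
    · simp [hκ0, h01, h10] at h0
    · have hs := mul_left_cancel₀ hκ0 (h1.trans (mul_one κ).symm)
      have : h 0 0 * h 1 1 = 0 := by linear_combination SL2_det h - hs
      simp [h00, h11] at this
  · rw [hκy, ← (commutator_diagSL_entries y (H j)).1]
    simpa only [hHsucc] using hΓ _ (hH (j + 1))
  · rw [hHsucc, (commutator_diagSL_entries y (H j)).2, ← hκy]
    ring

end DiagonalCommutator

/-! ### The Tits alternative for `SL₂` and `GL₂` -/

section TitsAlternativeGL2

open Matrix Matrix.SpecialLinearGroup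
open scoped MatrixGroups

theorem alternative_of_exists_conj_eq_diagSL {K : Type*} [Field K]
    {Γ : Subgroup SL(2, K)} {g : SL(2, K)} (hg : g ∈ Γ) {z : Kˣ} (hz : (z : K) ^ 2 ≠ 1)
    (hgz : ∃ A : SL(2, K), A⁻¹ * g * A = diagSL z)
    (hgen : ∀ Γ' : Subgroup SL(2, K), diagSL z ∈ Γ' →
      (∀ x ∈ Γ', ∃ y ∈ Γ, x.1.trace = y.1.trace) → ∀ k ∈ Γ', IsGeneric k →
        ContainsNonabelianFree Γ' ∨ IsVirtuallySolvable Γ') :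
    ContainsNonabelianFree Γ ∨ IsVirtuallySolvable Γ := by
  obtain ⟨A, hA⟩ := hgz
  let e := MulAut.conj A⁻¹
  have he : ∀ x, e x = A⁻¹ * x * A := fun x => by simp [e]
  let Γ' := Γ.map e.toMonoidHom
  have hz' : diagSL z ∈ Γ' := ⟨g, hg, (he g).trans hA⟩
  have halt : ContainsNonabelianFree Γ' ∨ IsVirtuallySolvable Γ' := by
    by_cases h : ∃ k ∈ Γ', IsGeneric k
    · obtain ⟨k, hk, hkg⟩ := h
      refine hgen Γ' hz' ?_ k hk hkg
      rintro _ ⟨y, hy, rfl⟩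
      refine ⟨y, hy, ?_⟩
      change (e y).1.trace = _
      rw [he, trace_inv_mul_mul]
    · push Not at h
      exact Or.inr (.of_isSolvable (isSolvable_of_not_isGeneric hz hz' h))
  let e' := (Γ.equivMapOfInjective e.toMonoidHom e.injective).symm
  exact halt.imp (.of_injective e'.toMonoidHom e'.injective)
    (.of_surjective e'.toMonoidHom e'.surjective)

theorem finite_setOf_add_inv_of_orderOf_sq_lt (K : Type*) [Field K] (m : ℕ) :
    {t : K | ∃ x : K, 0 < orderOf (x ^ 2) ∧ orderOf (x ^ 2) < m ∧ t = x + x⁻¹}.Finite := by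
  have hpos : 0 < 2 * m.factorial := by positivity
  refine ((Polynomial.nthRootsFinset (2 * m.factorial) (1 : K)).finite_toSet.image
    fun x => x + x⁻¹).subset ?_
  rintro _ ⟨x, h0, hm, rfl⟩
  refine ⟨x, (Polynomial.mem_nthRootsFinset hpos _).2 ?_, rfl⟩
  rw [pow_mul]
  exact orderOf_dvd_iff_pow_eq_one.1 (Nat.dvd_factorial h0 hm.le)

theorem strongTitsAlternative_SL2 (K : Type*) [Field K] [IsAlgClosed K] [CharZero K] :
    StrongTitsAlternative SL(2, K) := by
  intro Γ
  choose ev hev hdiag using exists_trace_eq_and_inv_mul_mul_eq_diagSL (K := K)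
  by_cases hinf : ∃ g ∈ Γ, ∀ n : ℕ, 0 < n → (ev g : K) ^ n ≠ 1
  · obtain ⟨g, hg, h⟩ := hinf
    exact alternative_of_exists_conj_eq_diagSL hg (h 2 two_pos) (hdiag g (h 2 two_pos))
      fun _ hg' _ k hk hkgen => Or.inl (.of_isGeneric h hg' hk hkgen)
  push Not at hinf
  by_cases hbig : ∃ g ∈ Γ, 6 ≤ orderOf ((ev g : K) ^ 2)
  · obtain ⟨g, hg, h⟩ := hbig
    have hz : (ev g : K) ^ 2 ≠ 1 := fun h0 => by simp [h0] at h
    refine alternative_of_exists_conj_eq_diagSL hg hz (hdiag g hz) fun Γ' hg' htr k hk hkgen =>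
      (not_isGeneric_of_isCyclotomicTrace hg' h (.orderOf _) (fun x hx => ?_) hk hkgen).elim
    obtain ⟨y, hy, hxy⟩ := htr x hx
    obtain ⟨n, hn, hyn⟩ := hinf y hy
    rw [hxy, hev]
    exact isCyclotomicTrace_of_pow_eq_one (mul_inv_cancel₀ (ev y).ne_zero) hn hyn
  push Not at hbig
  by_cases hone : ∀ g ∈ Γ, (ev g : K) ^ 2 = 1
  · refine Or.inr (.of_isSolvable (isSolvable_of_trace_sq_eq_four fun g hg => ?_))
    have h : (ev g : K)⁻¹ = ev g :=
      inv_eq_of_mul_eq_one_left (by rw [← sq, hone g hg])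
    rw [hev, h]
    linear_combination 4 * hone g hg
  push Not at hone
  obtain ⟨g, hg, hz⟩ := hone
  refine alternative_of_exists_conj_eq_diagSL hg hz (hdiag g hz) fun Γ' hg' htr k hk hkgen => ?_
  have := finite_of_finite_trace hz hg' hk hkgen (finite_setOf_add_inv_of_orderOf_sq_lt K 6)
    fun x hx => ?_
  · exact Or.inr .of_finite
  · obtain ⟨y, hy, hxy⟩ := htr x hx
    obtain ⟨n, hn, hyn⟩ := hinf y hy
    refine ⟨ev y, ?_, hbig y hy, hxy.trans (hev y)⟩
    rw [orderOf_pos_iff, isOfFinOrder_iff_pow_eq_one]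
    exact ⟨n, hn, by rw [pow_right_comm, hyn, one_pow]⟩

theorem toPGL_surjective (K : Type*) [Field K] [IsAlgClosed K] :
    Function.Surjective (SpecialLinearGroup.toPGL (n := Fin 2) (R := K)) := by
  have h : Function.Surjective (ProjectiveSpecialLinearGroup.toPGL (n := Fin 2) (R := K)) := by
    refine ProjectiveSpecialLinearGroup.toPGL_surj_of_roots fun r => ?_
    obtain ⟨s, hs⟩ := IsAlgClosed.exists_pow_nat_eq (r : K) (n := 2) two_pos
    have hs0 : s ≠ 0 := by
      rintro rfl
      exact r.ne_zero (by rw [← hs]; norm_num)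
    exact ⟨Units.mk0 s hs0, Units.ext (by simpa using hs)⟩
  exact h.comp (QuotientGroup.mk_surjective (s := Subgroup.center SL(2, K)))

theorem strongTitsAlternative_GL_of_isAlgClosed (K : Type*) [Field K] [IsAlgClosed K] [CharZero K] :
    StrongTitsAlternative (GL (Fin 2) K) := by
  refine .of_isSolvable_ker (ProjGenLinGroup.mk (n := Fin 2) (R := K)) ?_ ?_
  · rw [ProjGenLinGroup.ker_mk]
    exact Group.isSolvable_of_comm fun a b => Subtype.ext (Subgroup.mem_center_iff.1 b.2 a)
  refine .of_surjective_of_torsion_ker _ (toPGL_surjective K) (fun x hx => ?_)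
    (strongTitsAlternative_SL2 K)
  rw [SpecialLinearGroup.toPGL_ker, Matrix.SpecialLinearGroup.mem_center_iff] at hx
  obtain ⟨r, hr, hx⟩ := hx
  rw [Fintype.card_fin] at hr
  refine isOfFinOrder_iff_pow_eq_one.2 ⟨2, two_pos, Subtype.ext ?_⟩
  rw [Matrix.SpecialLinearGroup.coe_pow, ← hx, ← map_pow, hr, map_one]
  rfl

theorem strongTitsAlternative_GL (k : Type*) [Field k] [CharZero k] :
    StrongTitsAlternative (GL (Fin 2) k) := by
  have hinj := (algebraMap k (AlgebraicClosure k)).injective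
  have := charZero_of_injective_algebraMap hinj
  refine .of_injective (GeneralLinearGroup.map (algebraMap k (AlgebraicClosure k))) ?_
    (strongTitsAlternative_GL_of_isAlgClosed (AlgebraicClosure k))
  intro a b hab
  ext i j
  exact hinj (congrArg (fun u : GL (Fin 2) (AlgebraicClosure k) => u i j) hab)

end TitsAlternativeGL2

/-! ### Triangular automorphisms and the group `B` -/

/-- The automorphisms of the polynomial ring in variables `σ` over `R`. -/
abbrev PolynomialAut (σ R : Type*) [CommSemiring R] : Type _ :=
  MvPolynomial σ R ≃ₐ[R] MvPolynomial σ R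

section Supported

variable {σ R : Type*} [CommSemiring R]

theorem C_mem_supported (S : Set σ) (c : R) : (C c : MvPolynomial σ R) ∈ supported R S :=
  (supported R S).algebraMap_mem c

theorem PolynomialAut.map_C (f : PolynomialAut σ R) (c : R) : f (C c) = C c := f.commutes c

theorem map_mem_supported {f : PolynomialAut σ R} {S S' : Set σ}
    (hf : ∀ i ∈ S, f (X i) ∈ supported R S') {P : MvPolynomial σ R} (hP : P ∈ supported R S) :
    f P ∈ supported R S' := by
  have hle : supported R S ≤ (supported R S').comap (f : MvPolynomial σ R →ₐ[R] _) := by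
    rw [supported_eq_adjoin_X, Algebra.adjoin_le_iff]
    rintro _ ⟨i, hi, rfl⟩
    exact hf i hi
  exact hle hP

theorem map_eq_self_of_mem_supported {f : PolynomialAut σ R} {S : Set σ}
    (hf : ∀ i ∈ S, f (X i) = X i) {P : MvPolynomial σ R} (hP : P ∈ supported R S) : f P = P := by
  have heq : Set.EqOn (f : MvPolynomial σ R →ₐ[R] _) (AlgHom.id R _)
      (supported R S : Set (MvPolynomial σ R)) := by
    rw [supported_eq_adjoin_X, AlgHom.eqOn_adjoin_iff]
    rintro _ ⟨i, hi, rfl⟩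
    exact hf i hi
  exact heq hP

theorem exists_aeval_of_mem_supported_singleton {i : σ} {P : MvPolynomial σ R}
    (hP : P ∈ supported R {i}) : ∃ p : Polynomial R, P = Polynomial.aeval (X i) p := by
  rw [supported_eq_adjoin_X, Set.image_singleton, Algebra.adjoin_singleton_eq_range_aeval] at hP
  exact hP.imp fun p hp => hp.symm

end Supported

section Triangular

open scoped commutatorElement

variable {n : ℕ} {k : Type*} [Field k] {f g : PolynomialAut (Fin n) k} {i : Fin n} {a b : k}

/-- `f` maps `xᵢ` to `a xᵢ + P(xᵢ₊₁, …, xₙ)`. -/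
def IsTriangularAt (f : PolynomialAut (Fin n) k) (i : Fin n) (a : k) : Prop :=
  f (X i) - C a * X i ∈ supported k (Set.Ioi i)

theorem IsTriangularAt.map_X_mem_supported (h : IsTriangularAt f i a) :
    f (X i) ∈ supported k (Set.Ici i) := by
  rw [← sub_add_cancel (f (X i)) (C a * X i)]
  exact add_mem (supported_mono Set.Ioi_subset_Ici_self h)
    (mul_mem (C_mem_supported _ a) (X_mem_supported.2 Set.self_mem_Ici))

theorem map_mem_supported_Ioi (hf : ∀ j > i, ∃ a, IsTriangularAt f j a)
    {P : MvPolynomial (Fin n) k} (hP : P ∈ supported k (Set.Ioi i)) :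
    f P ∈ supported k (Set.Ioi i) := by
  refine map_mem_supported (fun j hj => ?_) hP
  obtain ⟨a, ha⟩ := hf j hj
  exact supported_mono (Set.Ici_subset_Ioi.2 hj) ha.map_X_mem_supported

theorem IsTriangularAt.one : IsTriangularAt (1 : PolynomialAut (Fin n) k) i 1 := by
  simp [IsTriangularAt]

theorem IsTriangularAt.mul (hf : ∀ j, ∃ a, IsTriangularAt f j a) (ha : IsTriangularAt f i a)
    (hb : IsTriangularAt g i b) : IsTriangularAt (f * g) i (a * b) := by
  have heq : (f * g) (X i) - C (a * b) * X i =
      f (g (X i) - C b * X i) + C b * (f (X i) - C a * X i) := by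
    rw [AlgEquiv.mul_apply, map_sub, C_mul, map_mul, f.map_C]
    ring
  rw [IsTriangularAt, heq]
  exact add_mem (map_mem_supported_Ioi (fun j _ => hf j) hb) (mul_mem (C_mem_supported _ b) ha)

theorem IsTriangularAt.inv (hf : ∀ j > i, ∃ b, IsTriangularAt f⁻¹ j b) (ha0 : a ≠ 0)
    (ha : IsTriangularAt f i a) : IsTriangularAt f⁻¹ i a⁻¹ := by
  have hC : (C a⁻¹ * C a : MvPolynomial (Fin n) k) = 1 := by
    rw [← C_mul, inv_mul_cancel₀ ha0, C_1]
  have heq : f⁻¹ (X i) - C a⁻¹ * X i = -(C a⁻¹ * f⁻¹ (f (X i) - C a * X i)) := by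
    rw [map_sub, map_mul, f⁻¹.map_C, ← AlgEquiv.mul_apply, inv_mul_cancel, AlgEquiv.one_apply]
    linear_combination -f⁻¹ (X i) * hC
  rw [IsTriangularAt, heq]
  exact neg_mem (mul_mem (C_mem_supported _ _) (map_mem_supported_Ioi hf ha))

theorem IsTriangularAt.unique (ha : IsTriangularAt f i a) (hb : IsTriangularAt f i b) : a = b := by
  by_contra hab
  refine Set.self_notMem_Ioi (X_mem_supported (R := k).1 (?_ : X i ∈ supported k (Set.Ioi i)))
  have hX : (X i : MvPolynomial (Fin n) k) =
      C (a - b)⁻¹ * ((f (X i) - C b * X i) - (f (X i) - C a * X i)) := by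
    have hC : (C (a - b)⁻¹ * (C a - C b) : MvPolynomial (Fin n) k) = 1 := by
      rw [← C_sub, ← C_mul, inv_mul_cancel₀ (sub_ne_zero.2 hab), C_1]
    linear_combination -X i * hC
  rw [hX]
  exact mul_mem (C_mem_supported _ _) (sub_mem hb ha)

theorem exists_isTriangularAt_inv (hf : ∀ j, ∃ a, a ≠ 0 ∧ IsTriangularAt f j a) (i : Fin n) :
    ∃ a, a ≠ 0 ∧ IsTriangularAt f⁻¹ i a := by
  induction i using WellFoundedGT.induction with
  | ind i ih =>
    obtain ⟨a, ha0, ha⟩ := hf i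
    exact ⟨a⁻¹, inv_ne_zero ha0, .inv (fun j hj => (ih j hj).imp fun _ => And.right) ha0 ha⟩

/-- The group of triangular automorphisms of a polynomial ring. -/
noncomputable def triangular (n : ℕ) (k : Type*) [Field k] :
    Subgroup (PolynomialAut (Fin n) k) where
  carrier := {f | ∀ i, ∃ a, a ≠ 0 ∧ IsTriangularAt f i a}
  mul_mem' hf hg i := by
    obtain ⟨a, ha0, ha⟩ := hf i
    obtain ⟨b, hb0, hb⟩ := hg i
    exact ⟨a * b, mul_ne_zero ha0 hb0, .mul (fun j => (hf j).imp fun _ => And.right) ha hb⟩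
  one_mem' _ := ⟨1, one_ne_zero, .one⟩
  inv_mem' := exists_isTriangularAt_inv

theorem exists_isTriangularAt (hf : f ∈ triangular n k) (i : Fin n) : ∃ a, IsTriangularAt f i a :=
  (hf i).imp fun _ => And.right

/-- The triangular automorphisms with leading coefficients `1` that fix the last `m` variables. -/
noncomputable def unitriangular (n : ℕ) (k : Type*) [Field k] (m : ℕ) :
    Subgroup (PolynomialAut (Fin n) k) where
  carrier := {f | ∀ i : Fin n, IsTriangularAt f i 1 ∧ (n ≤ i + m → f (X i) = X i)}
  mul_mem' {f g} hf hg i :=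
    ⟨mul_one (1 : k) ▸ .mul (fun j => ⟨1, (hf j).1⟩) (hf i).1 (hg i).1, fun hi => by
      rw [AlgEquiv.mul_apply, (hg i).2 hi, (hf i).2 hi]⟩
  one_mem' _ := ⟨.one, fun _ => rfl⟩
  inv_mem' {f} hf i := by
    have hinv := exists_isTriangularAt_inv fun j => ⟨1, one_ne_zero, (hf j).1⟩
    exact ⟨inv_one (G := k) ▸
        .inv (fun j _ => (hinv j).imp fun _ => And.right) one_ne_zero (hf i).1,
      fun hi => f.symm_apply_eq.2 ((hf i).2 hi).symm⟩

theorem map_eq_self_of_mem_unitriangular {m : ℕ} (hf : f ∈ unitriangular n k m)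
    (hi : n ≤ i + (m + 1)) {P : MvPolynomial (Fin n) k} (hP : P ∈ supported k (Set.Ioi i)) :
    f P = P := by
  refine map_eq_self_of_mem_supported (fun j hj => (hf j).2 ?_) hP
  have : (i : ℕ) < j := hj
  omega

theorem unitriangular_self : unitriangular n k n = ⊥ := by
  refine eq_bot_iff.2 fun f hf => AlgEquiv.coe_toAlgHom_injective (MvPolynomial.algHom_ext ?_)
  exact fun i => (hf i).2 (Nat.le_add_left n i)

theorem commutatorElement_mul_mul {G : Type*} [Group G] (u v : G) : ⁅u, v⁆ * (v * u) = u * v := by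
  rw [commutatorElement_def]
  group

theorem commutator_triangular_le : ⁅triangular n k, triangular n k⁆ ≤ unitriangular n k 0 := by
  rw [Subgroup.commutator_le]
  intro u hu v hv i
  refine ⟨?_, fun hi => absurd hi (by omega)⟩
  have hw : ⁅u, v⁆ ∈ triangular n k :=
    Subgroup.commutator_le_self _ (Subgroup.commutator_mem_commutator hu hv)
  obtain ⟨a, ha0, ha⟩ := hu i
  obtain ⟨b, hb0, hb⟩ := hv i
  obtain ⟨c, -, hc⟩ := hw i
  have hvu : IsTriangularAt (⁅u, v⁆ * (v * u)) i (c * (b * a)) :=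
    .mul (exists_isTriangularAt hw) hc (.mul (exists_isTriangularAt hv) hb ha)
  rw [commutatorElement_mul_mul] at hvu
  have hcba : c * (b * a) = a * b := hvu.unique (.mul (exists_isTriangularAt hu) ha hb)
  have hc1 : c = 1 := mul_right_cancel₀ (mul_ne_zero hb0 ha0) (by rw [hcba, one_mul, mul_comm])
  exact hc1 ▸ hc

theorem commutator_unitriangular_le (m : ℕ) :
    ⁅unitriangular n k m, unitriangular n k m⁆ ≤ unitriangular n k (m + 1) := by
  rw [Subgroup.commutator_le]
  intro u hu v hv i
  have hw : ⁅u, v⁆ ∈ unitriangular n k m :=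
    Subgroup.commutator_le_self _ (Subgroup.commutator_mem_commutator hu hv)
  refine ⟨(hw i).1, fun hi => ?_⟩
  have fixed {f g : PolynomialAut (Fin n) k} (hf : f ∈ unitriangular n k m)
      (hg : g ∈ unitriangular n k m) : f (g (X i)) - f (X i) = g (X i) - X i := by
    have hgi := (hg i).1
    rw [IsTriangularAt, C_1, one_mul] at hgi
    rw [← map_sub, map_eq_self_of_mem_unitriangular hf hi hgi]
  have hcomm : (u * v) (X i) = (v * u) (X i) := by
    rw [AlgEquiv.mul_apply, AlgEquiv.mul_apply]
    linear_combination fixed hu hv - fixed hv hu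
  have hfix := fixed hw (mul_mem hv hu)
  rw [← AlgEquiv.mul_apply ⁅u, v⁆ (v * u), commutatorElement_mul_mul, hcomm] at hfix
  exact sub_right_injective hfix

theorem iteratedCommutator_triangular_le (m : ℕ) :
    iteratedCommutator (triangular n k) (m + 1) ≤ unitriangular n k m := by
  induction m with
  | zero => exact commutator_triangular_le
  | succ m ih => exact (Subgroup.commutator_mono ih ih).trans (commutator_unitriangular_le m)

theorem isSolvable_triangular (n : ℕ) (k : Type*) [Field k] : Group.IsSolvable (triangular n k) :=
  isSolvable_iff_iteratedCommutator.2
    ⟨n + 1, eq_bot_iff.2 ((iteratedCommutator_triangular_le n).trans_eq unitriangular_self)⟩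

end Triangular

theorem isH_iff_mem_triangular {k : Type*} [Field k] {f : PolynomialAut (Fin 3) k} :
    IsH k f ↔ f ∈ triangular 3 k := by
  have h0 : Set.Ioi (0 : Fin 3) = {1, 2} := by ext i; fin_cases i <;> simp
  have h1 : Set.Ioi (1 : Fin 3) = {2} := by ext i; fin_cases i <;> simp
  have h2 : Set.Ioi (2 : Fin 3) = ∅ := by ext i; fin_cases i <;> simp
  constructor
  · rintro ⟨a, b, c, d, P₁, P₂, ha, hb, hc, hP₁, hP₂, e0, e1, e2⟩ i
    fin_cases i
    · exact ⟨a, ha, by simpa [IsTriangularAt, e0, h0] using hP₁⟩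
    · exact ⟨b, hb, by simpa [IsTriangularAt, e1, h1] using hP₂⟩
    · exact ⟨c, hc, by simpa [IsTriangularAt, e2] using C_mem_supported _ d⟩
  · intro hf
    obtain ⟨a, ha, hP₁⟩ := hf 0
    obtain ⟨b, hb, hP₂⟩ := hf 1
    obtain ⟨c, hc, hP₃⟩ := hf 2
    rw [IsTriangularAt, h2, supported_empty, Algebra.mem_bot] at hP₃
    obtain ⟨d, hd⟩ := hP₃
    exact ⟨a, b, c, d, _, _, ha, hb, hc, h0 ▸ hP₁, h1 ▸ hP₂, (add_sub_cancel _ _).symm,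
      (add_sub_cancel _ _).symm, sub_eq_iff_eq_add'.1 hd.symm⟩

section Degree

variable {σ R : Type*} [CommRing R]

theorem totalDegree_affine_le (b c d : R) (u v : MvPolynomial σ R) :
    (C b * u + C c * v + C d).totalDegree ≤ max u.totalDegree v.totalDegree := by
  have hC (s : R) (w : MvPolynomial σ R) : (C s * w).totalDegree ≤ w.totalDegree := by
    simpa only [totalDegree_C, zero_add] using totalDegree_mul (C s) w
  refine (totalDegree_add _ _).trans (max_le ((totalDegree_add _ _).trans
    (max_le_max (hC b u) (hC c v))) ?_)
  rw [totalDegree_C]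
  exact Nat.zero_le _

theorem totalDegree_aeval_le (v : MvPolynomial σ R) (p : Polynomial R) :
    (Polynomial.aeval v p).totalDegree ≤ p.natDegree * v.totalDegree := by
  rw [Polynomial.aeval_eq_sum_range]
  refine totalDegree_finsetSum_le fun i hi => ?_
  refine (totalDegree_smul_le _ _).trans ((totalDegree_pow _ _).trans ?_)
  exact Nat.mul_le_mul_right _ (Nat.lt_succ_iff.1 (Finset.mem_range.1 hi))

theorem totalDegree_map_X_pos [Nontrivial R] (f : PolynomialAut σ R) (i : σ) :
    0 < (f (X i)).totalDegree := by
  refine Nat.pos_of_ne_zero fun h => ?_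
  have hfi : f (X i) = f (C (coeff 0 (f (X i)))) := by
    rw [f.map_C, ← totalDegree_eq_zero_iff_eq_C.1 h]
  have hdeg := congrArg totalDegree (f.injective hfi)
  rw [totalDegree_X, totalDegree_C] at hdeg
  exact one_ne_zero hdeg

variable [IsDomain R]

theorem totalDegree_pow_of_isDomain {v : MvPolynomial σ R} (hv : v ≠ 0) (m : ℕ) :
    (v ^ m).totalDegree = m * v.totalDegree := by
  induction m with
  | zero => simp
  | succ m ih =>
    rw [pow_succ, totalDegree_mul_of_isDomain (pow_ne_zero _ hv) hv, ih, Nat.succ_mul]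

theorem totalDegree_aeval {v : MvPolynomial σ R} (hv : 0 < v.totalDegree) (p : Polynomial R) :
    (Polynomial.aeval v p).totalDegree = p.natDegree * v.totalDegree := by
  have hv0 : v ≠ 0 := by
    rintro rfl
    simp at hv
  rcases Nat.eq_zero_or_pos p.natDegree with hp | hp
  · have hle := totalDegree_aeval_le v p
    rw [hp, zero_mul] at hle ⊢
    exact Nat.le_zero.1 hle
  have hlead : (C p.leadingCoeff : MvPolynomial σ R) ≠ 0 := by
    rw [Ne, C_eq_zero, Polynomial.leadingCoeff_eq_zero]
    rintro rfl
    simp at hp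
  have hmonomial : (C p.leadingCoeff * v ^ p.natDegree).totalDegree =
      p.natDegree * v.totalDegree := by
    rw [totalDegree_mul_of_isDomain hlead (pow_ne_zero _ hv0), totalDegree_C, zero_add,
      totalDegree_pow_of_isDomain hv0]
  have heraseLead : (Polynomial.aeval v p.eraseLead).totalDegree <
      (C p.leadingCoeff * v ^ p.natDegree).totalDegree := by
    rw [hmonomial]
    refine (totalDegree_aeval_le _ _).trans_lt (Nat.mul_lt_mul_of_pos_right ?_ hv)
    have := p.eraseLead_natDegree_le
    omega
  rw [← hmonomial, ← totalDegree_add_eq_right_of_totalDegree_lt heraseLead]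
  conv_lhs => rw [← p.eraseLead_add_monomial_natDegree_leadingCoeff]
  rw [map_add, Polynomial.aeval_monomial, algebraMap_eq]

end Degree

section Affine

variable {σ k : Type*} [Field k]

theorem affine_mem_supported (b c d : k) (i j : σ) :
    C b * X i + C c * X j + C d ∈ supported k {i, j} :=
  add_mem (add_mem (mul_mem (C_mem_supported _ b) (X_mem_supported.2 (by simp)))
    (mul_mem (C_mem_supported _ c) (X_mem_supported.2 (by simp)))) (C_mem_supported _ d)

theorem map_mem_supported_pair {f : PolynomialAut σ k} {i j : σ} {b c d b' c' d' : k}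
    (hi : f (X i) = C b * X i + C c * X j + C d) (hj : f (X j) = C b' * X i + C c' * X j + C d')
    {P : MvPolynomial σ k} (hP : P ∈ supported k {i, j}) : f P ∈ supported k {i, j} := by
  refine map_mem_supported ?_ hP
  rintro _ (rfl | rfl)
  · exact hi ▸ affine_mem_supported b c d _ j
  · exact hj ▸ affine_mem_supported b' c' d' i _

theorem exists_affine_inverse {b c d b' c' d' : k} (hdet : b * c' - b' * c ≠ 0) :
    ∃ s t r s' t' r' : k, s * t' - s' * t ≠ 0 ∧ ∀ u v x y : MvPolynomial σ k,
      C b * u + C c * v + C d = x → C b' * u + C c' * v + C d' = y →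
        u = C s * x + C t * y + C r ∧ v = C s' * x + C t' * y + C r' := by
  obtain ⟨δ, hδ⟩ : ∃ δ, δ * (b * c' - b' * c) = 1 := ⟨_, inv_mul_cancel₀ hdet⟩
  have hCδ : (C δ * (C b * C c' - C b' * C c) : MvPolynomial σ k) = 1 := by
    simp only [← C_mul, ← C_sub, hδ, C_1]
  refine ⟨δ * c', -(δ * c), δ * (c * d' - c' * d), -(δ * b'), δ * b, δ * (b' * d - b * d'), ?_, ?_⟩
  · have hdet' : δ * c' * (δ * b) - -(δ * b') * -(δ * c) = δ := by linear_combination δ * hδ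
    rw [hdet']
    exact left_ne_zero_of_mul_eq_one hδ
  · rintro u v _ _ rfl rfl
    simp only [C_mul, C_neg, C_sub]
    exact ⟨by linear_combination -u * hCδ, by linear_combination -v * hCδ⟩

end Affine

section GroupB

variable {k : Type*} [Field k] {f g : PolynomialAut (Fin 3) k}

theorem IsB.mul (hf : IsB k f) (hg : IsB k g) : IsB k (f * g) := by
  obtain ⟨a, b, c, d, b', c', d', P, ha, hdet, hP, e0, e1, e2⟩ := hf
  obtain ⟨s, t, u, v, t', u', v', Q, hs, hdet', hQ, f0, f1, f2⟩ := hg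
  refine ⟨s * a, t * b + u * b', t * c + u * c', t * d + u * d' + v, t' * b + u' * b',
    t' * c + u' * c', t' * d + u' * d' + v', C s * P + f Q, mul_ne_zero hs ha, ?_,
    add_mem (mul_mem (C_mem_supported _ s) hP) (map_mem_supported_pair e1 e2 hQ), ?_, ?_, ?_⟩
  · convert mul_ne_zero hdet hdet' using 1
    ring
  all_goals
    simp only [AlgEquiv.mul_apply, f0, f1, f2, map_add, map_mul, f.map_C, e0, e1, e2]
    ring

theorem IsB.inv (hf : IsB k f) : IsB k f⁻¹ := by
  obtain ⟨a, b, c, d, b', c', d', P, ha, hdet, hP, e0, e1, e2⟩ := hf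
  have hinv (p : MvPolynomial (Fin 3) k) : f⁻¹ (f p) = p := f.symm_apply_apply p
  have g0 := hinv (X 0)
  have g1 := hinv (X 1)
  have g2 := hinv (X 2)
  simp only [e0, e1, e2, map_add, map_mul, f⁻¹.map_C] at g0 g1 g2
  have haa : (C a⁻¹ * C a : MvPolynomial (Fin 3) k) = 1 := by
    rw [← C_mul, inv_mul_cancel₀ ha, C_1]
  have k0 : f⁻¹ (X 0) = C a⁻¹ * X 0 + -C a⁻¹ * f⁻¹ P := by
    linear_combination C a⁻¹ * g0 - f⁻¹ (X 0) * haa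
  obtain ⟨s, t, r, s', t', r', hdet', hcramer⟩ := exists_affine_inverse hdet
  obtain ⟨k1, k2⟩ := hcramer _ _ _ _ g1 g2
  exact ⟨a⁻¹, s, t, r, s', t', r', _, inv_ne_zero ha, hdet',
    mul_mem (neg_mem (C_mem_supported _ _)) (map_mem_supported_pair k1 k2 hP), k0, k1, k2⟩

/-- The subgroup `B` of the automorphisms of `k[x₁, x₂, x₃]`. -/
noncomputable def groupB (k : Type*) [Field k] : Subgroup (PolynomialAut (Fin 3) k) where
  carrier := {f | IsB k f}
  mul_mem' := IsB.mul
  one_mem' := ⟨1, 1, 0, 0, 0, 1, 0, 0, one_ne_zero, by simp, zero_mem _, by simp, by simp, by simp⟩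
  inv_mem' := IsB.inv

/-- The linear part of the action on the last two variables, with the image of `xⱼ` as `j`-th
column so that composition becomes matrix multiplication on `B`. -/
noncomputable def linearPart (f : PolynomialAut (Fin 3) k) : Matrix (Fin 2) (Fin 2) k :=
  Matrix.of fun i j => coeff (Finsupp.single i.succ 1) (f (X j.succ))

theorem linearPart_eq {b c d b' c' d' : k} (e1 : f (X 1) = C b * X 1 + C c * X 2 + C d)
    (e2 : f (X 2) = C b' * X 1 + C c' * X 2 + C d') : linearPart f = !![b, b'; c, c'] := by
  have hsucc : (1 : Fin 2).succ = (2 : Fin 3) := rfl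
  have hsingle (i : Fin 3) : (0 : Fin 3 →₀ ℕ) ≠ Finsupp.single i 1 :=
    (Finsupp.single_ne_zero.2 one_ne_zero).symm
  ext i j
  fin_cases i <;> fin_cases j <;>
    simp [linearPart, hsucc, e1, e2, coeff_C_mul, coeff_X, coeff_C, hsingle,
      Finsupp.single_left_inj]

theorem linearPart_one : linearPart (1 : PolynomialAut (Fin 3) k) = 1 := by
  rw [Matrix.one_fin_two]
  exact linearPart_eq (d := 0) (d' := 0) (by simp) (by simp)

theorem linearPart_mul (hf : IsB k f) (hg : IsB k g) :
    linearPart (f * g) = linearPart f * linearPart g := by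
  obtain ⟨-, b, c, d, b', c', d', -, -, -, -, -, e1, e2⟩ := hf
  obtain ⟨-, t, u, v, t', u', v', -, -, -, -, -, f1, f2⟩ := hg
  rw [linearPart_eq e1 e2, linearPart_eq f1 f2, Matrix.mul_fin_two]
  refine linearPart_eq (d := t * d + u * d' + v) (d' := t' * d + u' * d' + v') ?_ ?_ <;>
  · simp only [AlgEquiv.mul_apply, f1, f2, map_add, map_mul, f.map_C, e1, e2]
    ring

/-- The action of `B` on the linear forms in the last two variables. -/
noncomputable def groupBToGL (k : Type*) [Field k] :
    groupB k →* Matrix.GeneralLinearGroup (Fin 2) k :=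
  MonoidHom.toHomUnits
    { toFun := fun f => linearPart f.1
      map_one' := linearPart_one
      map_mul' := fun f g => linearPart_mul f.2 g.2 }

theorem ker_groupBToGL_le : (groupBToGL k).ker ≤ (triangular 3 k).subgroupOf (groupB k) := by
  rintro ⟨f, a, b, c, d, b', c', d', P, ha, _, hP, e0, e1, e2⟩ hf
  have hlin : linearPart f = 1 := congrArg Units.val (MonoidHom.mem_ker.1 hf)
  rw [linearPart_eq e1 e2, Matrix.one_fin_two] at hlin
  obtain rfl : b = 1 := congrFun (congrFun hlin 0) 0
  obtain rfl : b' = 0 := congrFun (congrFun hlin 0) 1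
  obtain rfl : c = 0 := congrFun (congrFun hlin 1) 0
  obtain rfl : c' = 1 := congrFun (congrFun hlin 1) 1
  exact isH_iff_mem_triangular.1 ⟨a, 1, 1, d', P, C d, ha, one_ne_zero, one_ne_zero, hP,
    C_mem_supported _ _, e0, by simpa using e1, by simpa using e2⟩

theorem subgroupComap_subtype_injective {G : Type*} [Group G] (K H : Subgroup G) :
    Function.Injective (K.subtype.subgroupComap H) := fun _ _ hxy =>
  Subtype.ext (Subtype.ext (congrArg (fun z : H => z.1) hxy))

theorem isSolvable_subgroupOf {G : Type*} [Group G] {H : Subgroup G} (_ : Group.IsSolvable H)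
    (K : Subgroup G) : Group.IsSolvable (H.subgroupOf K) :=
  Group.isSolvable_of_isSolvable_injective (subgroupComap_subtype_injective K H)

theorem strongTitsAlternative_groupB (k : Type*) [Field k] [CharZero k] :
    StrongTitsAlternative (groupB k) :=
  .of_isSolvable_ker (groupBToGL k)
    (isSolvable_of_le ker_groupBToGL_le (isSolvable_subgroupOf (isSolvable_triangular 3 k) _))
    (strongTitsAlternative_GL k)

end GroupB

section Descent

variable {k : Type*} [Field k] {f g a t : PolynomialAut (Fin 3) k}

/-- The degree that `f` assigns to the coset `f B`. -/
noncomputable def degB (f : PolynomialAut (Fin 3) k) : ℕ :=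
  max (f (X 1)).totalDegree (f (X 2)).totalDegree

/-- The degree that `f` assigns to the coset `f H`. -/
noncomputable def degH (f : PolynomialAut (Fin 3) k) : ℕ := (f (X 2)).totalDegree

theorem degB_mul_le (f : PolynomialAut (Fin 3) k) (ha : a ∈ groupB k) :
    degB (f * a) ≤ degB f := by
  obtain ⟨-, b, c, d, b', c', d', -, -, -, -, -, e1, e2⟩ := ha
  simp only [degB, AlgEquiv.mul_apply, e1, e2, map_add, map_mul, f.map_C]
  exact max_le (totalDegree_affine_le _ _ _ _ _) (totalDegree_affine_le _ _ _ _ _)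

theorem degB_mul (f : PolynomialAut (Fin 3) k) (ha : a ∈ groupB k) : degB (f * a) = degB f :=
  (degB_mul_le f ha).antisymm <| by
    simpa only [mul_inv_cancel_right] using degB_mul_le (f * a) (inv_mem ha)

theorem degH_mul_le (f : PolynomialAut (Fin 3) k) (ht : t ∈ triangular 3 k) :
    degH (f * t) ≤ degH f := by
  obtain ⟨-, -, c, d, -, -, -, -, -, -, -, -, -, e2⟩ := isH_iff_mem_triangular.2 ht
  simpa only [degH, AlgEquiv.mul_apply, e2, map_add, map_mul, f.map_C, C_0, zero_mul, add_zero,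
    max_self] using totalDegree_affine_le c 0 d (f (X 2)) (f (X 2))

theorem degH_mul (f : PolynomialAut (Fin 3) k) (ht : t ∈ triangular 3 k) :
    degH (f * t) = degH f :=
  (degH_mul_le f ht).antisymm <| by
    simpa only [mul_inv_cancel_right] using degH_mul_le (f * t) (inv_mem ht)

theorem degB_le_degH (ha : a ∈ groupB k) : degB a ≤ degH a := by
  have hdeg := degB_mul 1 ha
  rw [one_mul] at hdeg
  rw [hdeg, degB, AlgEquiv.one_apply, AlgEquiv.one_apply, totalDegree_X, totalDegree_X, max_self]
  exact totalDegree_map_X_pos a 2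

/-- If the coefficient of `x₂` in `a(x₃)` were not zero, then `g(x₂)` would be a linear combination
of `g(a(x₃))`, `g(x₃)` and `1`, all of degree less than `degB g`. -/
theorem mem_triangular_of_degH_lt (ha : a ∈ groupB k) (hg : degH g < degB g)
    (hga : degH (g * a) < degB g) : a ∈ triangular 3 k := by
  obtain ⟨s, b, c, d, b', c', d', P, hs, hdet, hP, e0, e1, e2⟩ := ha
  have hb' : b' = 0 := by
    by_contra hb'
    have hC : (C b'⁻¹ * C b' : MvPolynomial (Fin 3) k) = 1 := by
      rw [← C_mul, inv_mul_cancel₀ hb', C_1]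
    have hX1 : g (X 1) =
        C b'⁻¹ * (g * a) (X 2) + C (-(b'⁻¹ * c')) * g (X 2) + C (-(b'⁻¹ * d')) := by
      simp only [AlgEquiv.mul_apply, e2, map_add, map_mul, g.map_C, C_neg]
      linear_combination -g (X 1) * hC
    have hdeg := totalDegree_affine_le b'⁻¹ (-(b'⁻¹ * c')) (-(b'⁻¹ * d')) ((g * a) (X 2)) (g (X 2))
    rw [← hX1] at hdeg
    unfold degB degH at *
    omega
  subst hb'
  obtain ⟨hb, hc'⟩ : b ≠ 0 ∧ c' ≠ 0 := by simpa using hdet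
  refine isH_iff_mem_triangular.1
    ⟨s, b, c', d', P, C c * X 2 + C d, hs, hb, hc', hP, ?_, e0, ?_, ?_⟩
  · exact add_mem (mul_mem (C_mem_supported _ _) (X_mem_supported.2 rfl)) (C_mem_supported _ _)
  · rw [e1, add_assoc]
  · rw [e2, C_0, zero_mul, zero_add]

/-- If `t(x₂) = b x₂ + p(x₃)`, then `p(g(x₃))` has degree at most that of `g(x₃)`, hence `p` is
affine. -/
theorem mem_groupB_of_degB_eq (ht : t ∈ triangular 3 k) (hg : degB g = degH g)
    (hgt : degB (g * t) = degH g) : t ∈ groupB k := by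
  obtain ⟨a, b, c, d, P₁, P₂, ha, hb, hc, hP₁, hP₂, e0, e1, e2⟩ := isH_iff_mem_triangular.2 ht
  obtain ⟨p, rfl⟩ := exists_aeval_of_mem_supported_singleton hP₂
  have hpos := totalDegree_map_X_pos g 2
  have haeval : Polynomial.aeval (g (X 2)) p =
      C 1 * (g * t) (X 1) + C (-b) * g (X 1) + C 0 := by
    have hp : g (Polynomial.aeval (X 2) p) = Polynomial.aeval (g (X 2)) p :=
      (Polynomial.aeval_algHom_apply g (X 2) p).symm
    simp only [AlgEquiv.mul_apply, e1, map_add, map_mul, g.map_C, C_neg, C_1, C_0, hp]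
    ring
  have hdeg := totalDegree_affine_le 1 (-b) 0 ((g * t) (X 1)) (g (X 1))
  rw [← haeval, totalDegree_aeval hpos] at hdeg
  have hp : p.natDegree ≤ 1 := by
    refine Nat.le_of_mul_le_mul_right ?_ hpos
    unfold degB degH at *
    omega
  obtain ⟨x, y, rfl⟩ := Polynomial.exists_eq_X_add_C_of_natDegree_le_one hp
  refine ⟨a, b, x, y, 0, c, d, P₁, ha, by simpa using ⟨hb, hc⟩, hP₁, e0, ?_, ?_⟩
  · simpa only [map_add, map_mul, Polynomial.aeval_C, Polynomial.aeval_X, algebraMap_eq,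
      add_assoc] using e1
  · rw [e2, C_0, zero_mul, zero_add]

theorem Bprime_eq_sup (k : Type*) [Field k] : Bprime k = groupB k ⊔ triangular 3 k := by
  have hset : {f | IsB k f ∨ IsH k f} = (groupB k ∪ triangular 3 k : Set (PolynomialAut _ k)) :=
    Set.ext fun f => or_congr Iff.rfl isH_iff_mem_triangular
  rw [Bprime, hset, Subgroup.closure_union, Subgroup.closure_eq, Subgroup.closure_eq]

theorem isDescent_Bprime (k : Type*) [Field k] :
    IsDescent ((groupB k).subgroupOf (Bprime k)) ((triangular 3 k).subgroupOf (Bprime k))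
      (fun g => degB g.1) (fun g => degH g.1) where
  D_mul g _ ha := degB_mul g.1 ha
  E_mul g _ ht := degH_mul g.1 ht
  E_le_D _ := le_max_right _ _
  D_le_E _ ha := degB_le_degH ha
  mem_T _ _ ha := mem_triangular_of_degH_lt ha
  mem_A _ _ ht := mem_groupB_of_degB_eq ht
  sup_eq_top := by
    have hB := (Bprime_eq_sup k).symm
    rw [← Subgroup.subgroupOf_sup (le_sup_left.trans_eq hB) (le_sup_right.trans_eq hB), hB,
      Subgroup.subgroupOf_self]

end Descent

/-- `B' = ⟨B ∪ H⟩`, for `k` of characteristic zero, satisfies the strong Tits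
alternative. -/
theorem Bprime_strongTitsAlternative (k : Type*) [Field k] [CharZero k] :
    StrongTitsAlternative ↥(Bprime k) :=
  have hB : StrongTitsAlternative ((groupB k).subgroupOf (Bprime k)) :=
    (strongTitsAlternative_groupB k).of_injective _ (subgroupComap_subtype_injective _ _)
  have hH : Group.IsSolvable ((triangular 3 k).subgroupOf (Bprime k)) :=
    isSolvable_subgroupOf (isSolvable_triangular 3 k) _
  (isDescent_Bprime k).strongTitsAlternative hB hH
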